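/- For every positive integer n there exists a positive integer M such that the set of odd primes r satisfying Ω(r^n − 1) ≤ M is infinite. -/

import Mathlib

/-!
Fix `n` and a large constant `w`. If `r ≡ 1 + n * w!` modulo `n * w! ^ 2`, then
`r ^ n - 1 = n ^ 2 * w! * c` with `c` prime to `w!` (`omega_bound`). A lower bound sieve over the
primes `r` of this residue class removes those for which `r ^ n - 1` has a prime factor in `(w, z]`,
where `z` is a fixed power of the size of `r`. For the surviving `r` all prime factors of `c` exceed
`z`, so there are boundedly many of them. The sieve is Brun–Hooley's (`le_ev_lamL`): the sifting
primes are cut into blocks `(w ^ 2 ^ i, w ^ 2 ^ (i + 1)]`, with inclusion–exclusion truncated in each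
block.

The sieve needs a level of distribution for primes in progressions, of the strength of Rényi's
theorem: moduli up to a small fixed power of the size of `r` (`error_bound`). The classes
`r ^ n ≡ 1` modulo `d` are detected by Dirichlet characters, and the sieve reduces to a sum over
primitive characters `χ` of conductor `d ≤ D`, with weight `d ^ (-1/2)`.

* Large conductors. Vaughan's identity and a large sieve obtained by duality from the crude bound
  `D ^ 2` for pairwise correlations of characters give a mean value over all characters that loses
  only a power of the logarithm (`QuasiOrth.mean_value`), which `d ^ (-1/2)` absorbs.
* Small conductors. The primes are weighted by `gw j (log p) / p` up to a factor `log p`, with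
  `gw j v = v ^ j * exp (-v / e ^ j)`; such a sum over all prime powers is, up to sign, the `j`-th
  derivative of `L'/L` at `1 + e ^ (-j)`. This derivative is bounded by real-variable means from upper
  bounds for the derivatives of `L` and a lower bound for `|L(1 + e ^ (-j), χ)|`
  (`norm_iteratedDeriv_Bs_le`, `small_conductor`); no zero-free region enters.
* Exceptional characters. The lower bound may fail at a given scale `j`, for an exceptional `χ`.
  Since `L(1, χ) ≠ 0`, there is a first later scale at which `χ` is no longer exceptional; there
  `L(1 + e ^ (-j), χ)` is still small enough that, by `repulsion`, no other character is exceptional.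
  So there are arbitrarily large scales without exceptional characters (`exists_good_scale`), and
  these suffice here.
-/

/-! ### Character sums and Abel summation -/

namespace SmallOmega

open Finset ArithmeticFunction

/-- Partial sums of a nonprincipal character modulo `N` are bounded by `N`. -/
lemma norm_sum_char_le {N : ℕ} [NeZero N] (χ : DirichletCharacter ℂ N) (hχ : χ ≠ 1) (a b : ℕ) :
    ‖∑ m ∈ Ioc a b, χ (m : ZMod N)‖ ≤ N := by
  have hN : 0 < N := Nat.pos_of_ne_zero (NeZero.ne N)
  -- complete periods contribute zero
  have hper : ∀ a : ℕ, ∑ m ∈ Ioc a (a + N), χ (m : ZMod N) = 0 := by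
    intro a
    rw [← MulChar.sum_eq_zero_of_ne_one hχ]
    refine Finset.sum_bij' (fun m _ => (m : ZMod N))
      (fun x _ => a + 1 + (x - (a + 1 : ℕ) : ZMod N).val) ?_ ?_ ?_ ?_ ?_
    · intros; simp
    · intro x _
      have := ZMod.val_lt (x - (a + 1 : ℕ) : ZMod N)
      simp only [mem_Ioc]; omega
    · intro m hm
      simp only [mem_Ioc] at hm
      obtain ⟨k, rfl⟩ : ∃ k, m = a + 1 + k := ⟨m - (a + 1), by omega⟩
      have : ((a + 1 + k : ℕ) : ZMod N) - ((a + 1 : ℕ) : ZMod N) = (k : ZMod N) := by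
        push_cast; ring
      rw [this, ZMod.val_natCast, Nat.mod_eq_of_lt (by omega)]
    · intro x _
      rw [Nat.cast_add, ZMod.natCast_val, ZMod.cast_id]
      simp
    · intros; rfl
  have key : ∀ k : ℕ, ∀ a b : ℕ, b - a = k → ‖∑ m ∈ Ioc a b, χ (m : ZMod N)‖ ≤ N := by
    intro k
    induction k using Nat.strong_induction_on with
    | _ k ih =>
      intro a b hk
      by_cases hlt : k < N
      · calc ‖∑ m ∈ Ioc a b, χ (m : ZMod N)‖ ≤ ∑ m ∈ Ioc a b, ‖χ (m : ZMod N)‖ := norm_sum_le _ _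
          _ ≤ ∑ m ∈ Ioc a b, (1 : ℝ) := sum_le_sum fun m _ => χ.norm_le_one _
          _ = (b - a : ℕ) := by simp
          _ ≤ N := by rw [hk]; exact_mod_cast hlt.le
      · have h1 : Ioc a b = Ioc a (a + N) ∪ Ioc (a + N) b := by
          rw [Finset.Ioc_union_Ioc_eq_Ioc (by omega) (by omega)]
        have h2 : Disjoint (Ioc a (a + N)) (Ioc (a + N) b) := by
          rw [Finset.disjoint_left]; intro x; simp only [mem_Ioc]; omega
        rw [h1, sum_union h2, hper, zero_add]
        exact ih (b - (a + N)) (by omega) _ _ rfl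
  exact key _ a b rfl

/-- Abel summation, in the form of a bound by total variation. -/
lemma norm_sum_mul_le_of_variation (c : ℕ → ℂ) (f : ℕ → ℝ) (K : ℝ) (a b : ℕ)
    (hK : ∀ N, ‖∑ m ∈ Ioc a N, c m‖ ≤ K) (hab : a ≤ b) :
    ‖∑ m ∈ Ioc a b, c m * f m‖ ≤ K * (|f b| + ∑ m ∈ Ico a b, |f (m + 1) - f m|) := by
  have key : ∀ b, a ≤ b → ∑ m ∈ Ioc a b, c m * f m
      = (∑ m ∈ Ioc a b, c m) * f b
        - ∑ m ∈ Ico a b, (∑ l ∈ Ioc a m, c l) * ((f (m + 1) - f m : ℝ) : ℂ) := by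
    intro b hb
    induction b, hb using Nat.le_induction with
    | base => simp
    | succ b hb ih =>
      have e : Ioc a (b + 1) = insert (b + 1) (Ioc a b) := by
        ext x; simp only [mem_Ioc, mem_insert]; omega
      rw [e, sum_insert (by simp), sum_insert (by simp), ih,
        Finset.sum_Ico_succ_top hb]
      push_cast
      ring
  rw [key b hab]
  calc _ ≤ ‖(∑ m ∈ Ioc a b, c m) * f b‖
        + ‖∑ m ∈ Ico a b, (∑ l ∈ Ioc a m, c l) * ((f (m + 1) - f m : ℝ) : ℂ)‖ := norm_sub_le _ _
    _ ≤ K * |f b| + ∑ m ∈ Ico a b, K * |f (m + 1) - f m| := by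
        refine add_le_add ?_ ((norm_sum_le _ _).trans (sum_le_sum fun m _ => ?_))
        · rw [norm_mul, Complex.norm_real, Real.norm_eq_abs]
          exact mul_le_mul_of_nonneg_right (hK _) (abs_nonneg _)
        · rw [norm_mul, Complex.norm_real, Real.norm_eq_abs]
          exact mul_le_mul_of_nonneg_right (hK _) (abs_nonneg _)
    _ = _ := by rw [mul_add, mul_sum]

/-- Abel summation against a nonnegative nonincreasing weight. -/
lemma norm_sum_mul_le_of_antitone (c : ℕ → ℂ) (f : ℕ → ℝ) (K : ℝ) (a b : ℕ)
    (hK : ∀ N, ‖∑ m ∈ Ioc a N, c m‖ ≤ K) (hf : ∀ m, a < m → f (m + 1) ≤ f m)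
    (hf0 : ∀ m, a < m → 0 ≤ f m) :
    ‖∑ m ∈ Ioc a b, c m * f m‖ ≤ K * f (a + 1) := by
  have hK0 : 0 ≤ K := (norm_nonneg _).trans (hK 0)
  rcases le_or_gt b a with h | h
  · rw [Ioc_eq_empty (by omega)]; simp
    exact mul_nonneg hK0 (hf0 _ (by omega))
  · -- replace the irrelevant value `f a` by `f (a+1)`
    set f' : ℕ → ℝ := fun m => if m ≤ a then f (a + 1) else f m with hfdiff
    have e : ∑ m ∈ Ioc a b, c m * f m = ∑ m ∈ Ioc a b, c m * f' m := by
      refine sum_congr rfl fun m hm => ?_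
      simp only [mem_Ioc] at hm
      simp [hfdiff, show ¬ m ≤ a by omega]
    rw [e]
    refine (norm_sum_mul_le_of_variation c f' K a b hK h.le).trans
      (mul_le_mul_of_nonneg_left ?_ hK0)
    have hanti : ∀ m ∈ Ico a b, |f' (m + 1) - f' m| = f' m - f' (m + 1) := by
      intro m hm
      simp only [mem_Ico] at hm
      rw [abs_sub_comm, abs_of_nonneg]
      rcases eq_or_lt_of_le hm.1 with rfl | h'
      · simp [hfdiff]
      · simp [hfdiff, show ¬ m ≤ a by omega, show ¬ m + 1 ≤ a by omega, hf m h']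
    rw [sum_congr rfl hanti]
    have tel : ∑ m ∈ Ico a b, (f' m - f' (m + 1)) = f' a - f' b := by
      have := Finset.sum_Ico_sub f' h.le
      rw [← neg_inj, ← sum_neg_distrib]; simp only [neg_sub]; exact this
    have h2 : f' b = f b := by simp [hfdiff, show ¬ b ≤ a by omega]
    rw [tel, h2, abs_of_nonneg (hf0 b h)]
    simp [hfdiff]

/-- Two characters which are primitive with different moduli, or distinct with the same modulus,
multiply (one being conjugated) to a nonprincipal character. -/
lemma exists_pair_char {d e : ℕ} (hd : d ≠ 0) (he : e ≠ 0)
    (χ : DirichletCharacter ℂ d) (ψ : DirichletCharacter ℂ e)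
    (hχ : χ.IsPrimitive) (hψ : ψ.IsPrimitive)
    (hne : (⟨d, χ⟩ : Σ d : ℕ, DirichletCharacter ℂ d) ≠ ⟨e, ψ⟩) :
    ∃ θ : DirichletCharacter ℂ (d * e), θ ≠ 1 ∧
      ∀ m : ℕ, θ (m : ZMod (d * e)) = χ (m : ZMod d) * (starRingEnd ℂ) (ψ (m : ZMod e)) := by
  have : NeZero (d * e) := ⟨mul_ne_zero hd he⟩
  have : NeZero d := ⟨hd⟩
  have : NeZero e := ⟨he⟩
  have hde : d ∣ d * e := Dvd.intro _ rfl
  have hed : e ∣ d * e := Dvd.intro_left _ rfl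
  refine ⟨DirichletCharacter.changeLevel hde χ * (DirichletCharacter.changeLevel hed ψ)⁻¹, ?_, ?_⟩
  · intro h
    have h1 : DirichletCharacter.changeLevel hde χ = DirichletCharacter.changeLevel hed ψ :=
      mul_inv_eq_one.mp h
    have h2 : d = e := by
      have e1 := DirichletCharacter.conductor_changeLevel χ hde
      have e2 := DirichletCharacter.conductor_changeLevel ψ hed
      rw [DirichletCharacter.isPrimitive_def] at hχ hψ
      rw [h1, e2, hχ, hψ] at e1
      exact e1.symm
    subst h2
    apply hne
    rw [DirichletCharacter.changeLevel_injective hde h1]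
  · intro m
    rw [MulChar.mul_apply]
    by_cases hu : IsUnit (m : ZMod (d * e))
    · have hco : IsCoprime (m : ℤ) ((d * e : ℕ) : ℤ) := by
        rw [ZMod.isUnit_iff_coprime] at hu
        exact_mod_cast Nat.isCoprime_iff_coprime.mpr hu
      have c1 := DirichletCharacter.changeLevel_eq_cast_of_dvd' χ hde hco
      have c2 := DirichletCharacter.changeLevel_eq_cast_of_dvd' ψ hed hco
      simp only [Int.cast_natCast] at c1 c2
      rw [c1, MulChar.inv_apply_eq_inv', c2]
      congr 1
      rw [← MulChar.inv_apply_eq_inv', ← MulChar.star_apply']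
      rfl
    · rw [MulChar.map_nonunit _ hu, zero_mul]
      rw [ZMod.isUnit_iff_coprime, Nat.coprime_mul_iff_right, not_and_or] at hu
      rcases hu with h | h
      · rw [MulChar.map_nonunit χ (by rwa [ZMod.isUnit_iff_coprime]), zero_mul]
      · rw [MulChar.map_nonunit ψ (by rwa [ZMod.isUnit_iff_coprime])]; simp

end SmallOmega

/-! ### The large sieve by duality, and bilinear forms -/

namespace SmallOmega

open Finset ArithmeticFunction

/-- Large sieve by duality: almost orthogonality of the `f i` (with weights `1/m`) bounds the mean
square of the linear forms `∑ x m * f i m`. -/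
lemma large_sieve_dual {ι : Type*} (s : Finset ι) (f : ι → ℕ → ℂ) (Q : Finset ℕ)
    (hQ : ∀ m ∈ Q, 0 < m) (κ : ℝ) (hκ : 0 ≤ κ)
    (hG : ∀ i ∈ s, ∑ k ∈ s, ‖∑ m ∈ Q, f i m * (starRingEnd ℂ) (f k m) * ((1 / m : ℝ) : ℂ)‖ ≤ κ)
    (x : ℕ → ℂ) :
    ∑ i ∈ s, ‖∑ m ∈ Q, x m * f i m‖ ^ 2 ≤ κ * ∑ m ∈ Q, (m : ℝ) * ‖x m‖ ^ 2 := by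
  set S : ι → ℂ := fun i => ∑ m ∈ Q, x m * f i m with hS
  set T : ℝ := ∑ i ∈ s, ‖S i‖ ^ 2 with hT
  set E : ℝ := ∑ m ∈ Q, (m : ℝ) * ‖x m‖ ^ 2 with hE
  set h : ℕ → ℂ := fun m => ∑ i ∈ s, (starRingEnd ℂ) (S i) * f i m with hh
  set G : ι → ι → ℂ := fun i k => ∑ m ∈ Q, f i m * (starRingEnd ℂ) (f k m) * ((1 / m : ℝ) : ℂ)
    with hGd
  have hT0 : 0 ≤ T := sum_nonneg fun _ _ => by positivity
  have hE0 : 0 ≤ E := sum_nonneg fun _ _ => by positivity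
  have hT1 : (T : ℂ) = ∑ m ∈ Q, x m * h m := by
    rw [hT]
    push_cast
    have : ∀ i ∈ s, ((‖S i‖ : ℂ)) ^ 2 = ∑ m ∈ Q, x m * ((starRingEnd ℂ) (S i) * f i m) := by
      intro i _
      rw [← Complex.conj_mul', hS, mul_sum]
      exact sum_congr rfl fun m _ => by ring
    rw [sum_congr rfl this, sum_comm]
    exact sum_congr rfl fun m _ => by rw [hh, mul_sum]
  have hGsymm : ∀ i k, ‖G i k‖ = ‖G k i‖ := by
    intro i k
    rw [← Complex.norm_conj (G k i)]
    congr 1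
    simp only [hGd, map_sum, map_mul, Complex.conj_conj, Complex.conj_ofReal]
    exact sum_congr rfl fun m _ => by ring
  have hH : ∑ m ∈ Q, (1 / m : ℝ) * ‖h m‖ ^ 2 ≤ κ * T := by
    have e : ((∑ m ∈ Q, (1 / m : ℝ) * ‖h m‖ ^ 2 : ℝ) : ℂ)
        = ∑ i ∈ s, ∑ k ∈ s, (starRingEnd ℂ) (S i) * S k * G i k := by
      push_cast
      have : ∀ m ∈ Q, (1 / m : ℂ) * (‖h m‖ : ℂ) ^ 2 = ∑ i ∈ s, ∑ k ∈ s,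
          (starRingEnd ℂ) (S i) * S k * (f i m * (starRingEnd ℂ) (f k m) * (1 / m : ℂ)) := by
        intro m _
        rw [← Complex.mul_conj', hh, map_sum, sum_mul_sum, mul_sum]
        refine sum_congr rfl fun i _ => ?_
        rw [mul_sum]
        refine sum_congr rfl fun k _ => ?_
        simp only [map_mul, Complex.conj_conj]
        ring
      rw [sum_congr rfl this, sum_comm]
      refine sum_congr rfl fun i _ => ?_
      rw [sum_comm]
      refine sum_congr rfl fun k _ => ?_
      rw [← mul_sum]
      simp only [hGd]
      push_cast
      rfl
    have h0 : 0 ≤ ∑ m ∈ Q, (1 / m : ℝ) * ‖h m‖ ^ 2 := sum_nonneg fun _ _ => by positivity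
    rw [← abs_of_nonneg h0, ← Real.norm_eq_abs, ← Complex.norm_real, e]
    calc _ ≤ ∑ i ∈ s, ∑ k ∈ s, ((‖S i‖ ^ 2 + ‖S k‖ ^ 2) / 2) * ‖G i k‖ := by
          refine (norm_sum_le _ _).trans (sum_le_sum fun i _ => ?_)
          refine (norm_sum_le _ _).trans (sum_le_sum fun k _ => ?_)
          rw [norm_mul, norm_mul, Complex.norm_conj]
          refine mul_le_mul_of_nonneg_right ?_ (norm_nonneg _)
          nlinarith [sq_nonneg (‖S i‖ - ‖S k‖)]
      _ = ∑ i ∈ s, ∑ k ∈ s, ‖S i‖ ^ 2 * ‖G i k‖ := by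
          have e1 : ∑ i ∈ s, ∑ k ∈ s, ‖S k‖ ^ 2 * ‖G i k‖ = ∑ i ∈ s, ∑ k ∈ s, ‖S i‖ ^ 2 * ‖G i k‖ := by
            rw [sum_comm]
            exact sum_congr rfl fun i _ => sum_congr rfl fun k _ => by rw [hGsymm]
          have e2 : ∑ i ∈ s, ∑ k ∈ s, ((‖S i‖ ^ 2 + ‖S k‖ ^ 2) / 2) * ‖G i k‖
              = (∑ i ∈ s, ∑ k ∈ s, ‖S i‖ ^ 2 * ‖G i k‖) / 2
                + (∑ i ∈ s, ∑ k ∈ s, ‖S k‖ ^ 2 * ‖G i k‖) / 2 := by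
            simp only [sum_div, ← sum_add_distrib]
            exact sum_congr rfl fun i _ => sum_congr rfl fun k _ => by ring
          rw [e2, e1]; ring
      _ ≤ ∑ i ∈ s, ‖S i‖ ^ 2 * κ := by
          refine sum_le_sum fun i hi => ?_
          rw [← mul_sum]
          exact mul_le_mul_of_nonneg_left (hG i hi) (by positivity)
      _ = κ * T := by rw [← sum_mul, mul_comm]
  have hCS : T ^ 2 ≤ E * (κ * T) := by
    have h1 : T ≤ ∑ m ∈ Q, ‖x m‖ * ‖h m‖ := by
      rw [← abs_of_nonneg hT0, ← Real.norm_eq_abs, ← Complex.norm_real, hT1]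
      exact (norm_sum_le _ _).trans (sum_le_sum fun m _ => by rw [norm_mul])
    have h2 : ∑ m ∈ Q, ‖x m‖ * ‖h m‖
        = ∑ m ∈ Q, (Real.sqrt m * ‖x m‖) * (Real.sqrt (1 / m) * ‖h m‖) := by
      refine sum_congr rfl fun m hm => ?_
      have : Real.sqrt m * Real.sqrt (1 / m) = 1 := by
        rw [← Real.sqrt_mul (by positivity), mul_one_div_cancel, Real.sqrt_one]
        exact_mod_cast (hQ m hm).ne'
      calc ‖x m‖ * ‖h m‖ = (Real.sqrt m * Real.sqrt (1 / m)) * (‖x m‖ * ‖h m‖) := by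
            rw [this, one_mul]
        _ = _ := by ring
    have h3 := Finset.sum_mul_sq_le_sq_mul_sq Q (fun m => Real.sqrt m * ‖x m‖)
      (fun m => Real.sqrt (1 / m) * ‖h m‖)
    have h4 : ∑ m ∈ Q, (Real.sqrt m * ‖x m‖) ^ 2 = E :=
      sum_congr rfl fun m _ => by rw [mul_pow, Real.sq_sqrt (by positivity)]
    have h5 : ∑ m ∈ Q, (Real.sqrt (1 / m) * ‖h m‖) ^ 2 = ∑ m ∈ Q, (1 / m : ℝ) * ‖h m‖ ^ 2 :=
      sum_congr rfl fun m _ => by rw [mul_pow, Real.sq_sqrt (by positivity)]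
    rw [h4, h5, ← h2] at h3
    calc T ^ 2 ≤ (∑ m ∈ Q, ‖x m‖ * ‖h m‖) ^ 2 := pow_le_pow_left₀ hT0 h1 2
      _ ≤ _ := h3
      _ ≤ _ := mul_le_mul_of_nonneg_left hH hE0
  rcases hT0.eq_or_lt with h0 | h0
  · rw [← h0]
    exact mul_nonneg hκ hE0
  · nlinarith

/-- Mean value of a bilinear form over the triangular region `a * b ≤ N`, by repeated bisection
into rectangles. The hypotheses `hx` and `hy` are large sieve inequalities for the two
coefficient sequences. -/
lemma bilinear_triangle {ι : Type*} (s : Finset ι) (f : ι → ℕ → ℂ) (κ : ℝ) (hκ : 0 ≤ κ)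
    (x y : ℕ → ℂ) (N : ℕ)
    (hx : ∀ A B, ∑ i ∈ s, ‖∑ m ∈ Ioc A B, x m * f i m‖ ^ 2
      ≤ κ * ∑ m ∈ Ioc A B, (m : ℝ) * ‖x m‖ ^ 2)
    (hy : ∀ A B, ∑ i ∈ s, ‖∑ m ∈ Ioc A B, y m * f i m‖ ^ 2
      ≤ κ * ∑ m ∈ Ioc A B, (m : ℝ) * ‖y m‖ ^ 2) (k : ℕ) : ∀ A : ℕ,
    ∑ i ∈ s, ‖∑ a ∈ Ioc A (A + 2 ^ k), ∑ b ∈ Ioc (N / (A + 2 ^ k)) (N / a),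
        (x a * f i a) * (y b * f i b)‖
      ≤ k * κ * (Real.sqrt (∑ m ∈ Ioc A (A + 2 ^ k), (m : ℝ) * ‖x m‖ ^ 2)
        * Real.sqrt (∑ m ∈ Ioc (N / (A + 2 ^ k)) (N / (A + 1)), (m : ℝ) * ‖y m‖ ^ 2)) := by
  induction k with
  | zero =>
    intro A
    simp
  | succ k ih =>
    intro A
    set M := A + 2 ^ k with hM
    set B := A + 2 ^ (k + 1) with hB
    have hBM : B = M + 2 ^ k := by rw [hB, hM, pow_succ]; ring
    have hpos : 0 < 2 ^ k := by positivity
    have hAM : A < M := by omega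
    have hMB : M < B := by omega
    have hdB : N / B ≤ N / M := Nat.div_le_div_left hMB.le (by omega)
    have hdB' : N / B ≤ N / (M + 1) := Nat.div_le_div_left (by omega) (by omega)
    have hdM1 : N / (M + 1) ≤ N / M := Nat.div_le_div_left (by omega) (by omega)
    have hdA : N / M ≤ N / (A + 1) := Nat.div_le_div_left (by omega) (by omega)
    have ihL := ih A
    have ihR := ih M
    rw [← hM] at ihL
    rw [← hBM] at ihR
    have split : ∀ i, ∑ a ∈ Ioc A B, ∑ b ∈ Ioc (N / B) (N / a), (x a * f i a) * (y b * f i b)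
        = (∑ a ∈ Ioc A M, ∑ b ∈ Ioc (N / M) (N / a), (x a * f i a) * (y b * f i b))
          + (∑ a ∈ Ioc M B, ∑ b ∈ Ioc (N / B) (N / a), (x a * f i a) * (y b * f i b))
          + (∑ a ∈ Ioc A M, x a * f i a) * (∑ b ∈ Ioc (N / B) (N / M), y b * f i b) := by
      intro i
      rw [← Finset.Ioc_union_Ioc_eq_Ioc hAM.le hMB.le, sum_union (by
        rw [Finset.disjoint_left]; intro u; simp only [mem_Ioc]; omega), sum_mul_sum]
      have : ∀ a ∈ Ioc A M, ∑ b ∈ Ioc (N / B) (N / a), (x a * f i a) * (y b * f i b)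
          = (∑ b ∈ Ioc (N / M) (N / a), (x a * f i a) * (y b * f i b))
            + ∑ b ∈ Ioc (N / B) (N / M), (x a * f i a) * (y b * f i b) := by
        intro a ha
        simp only [mem_Ioc] at ha
        have : N / M ≤ N / a := Nat.div_le_div_left ha.2 (by omega)
        rw [← Finset.Ioc_union_Ioc_eq_Ioc hdB this, sum_union (by
          rw [Finset.disjoint_left]; intro u; simp only [mem_Ioc]; omega), add_comm]
      rw [sum_congr rfl this, sum_add_distrib]
      ring
    set E1 := ∑ m ∈ Ioc A M, (m : ℝ) * ‖x m‖ ^ 2 with hE1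
    set E2 := ∑ m ∈ Ioc M B, (m : ℝ) * ‖x m‖ ^ 2 with hE2
    set E := ∑ m ∈ Ioc A B, (m : ℝ) * ‖x m‖ ^ 2 with hE
    set F1 := ∑ m ∈ Ioc (N / M) (N / (A + 1)), (m : ℝ) * ‖y m‖ ^ 2 with hF1
    set F2 := ∑ m ∈ Ioc (N / B) (N / (M + 1)), (m : ℝ) * ‖y m‖ ^ 2 with hF2
    set F := ∑ m ∈ Ioc (N / B) (N / (A + 1)), (m : ℝ) * ‖y m‖ ^ 2 with hF
    set F3 := ∑ m ∈ Ioc (N / B) (N / M), (m : ℝ) * ‖y m‖ ^ 2 with hF3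
    have nn : ∀ (z : ℕ → ℂ) (I : Finset ℕ), 0 ≤ ∑ m ∈ I, (m : ℝ) * ‖z m‖ ^ 2 :=
      fun z I => sum_nonneg fun _ _ => by positivity
    have hEs : E1 + E2 = E := by
      rw [hE, ← Finset.Ioc_union_Ioc_eq_Ioc hAM.le hMB.le, sum_union (by
        rw [Finset.disjoint_left]; intro u; simp only [mem_Ioc]; omega)]
    have hF31 : F3 + F1 = F := by
      rw [hF, ← Finset.Ioc_union_Ioc_eq_Ioc hdB hdA, sum_union (by
        rw [Finset.disjoint_left]; intro u; simp only [mem_Ioc]; omega)]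
    have hF23 : F2 ≤ F3 := sum_le_sum_of_subset_of_nonneg
      (Ioc_subset_Ioc_right hdM1) fun _ _ _ => by positivity
    have hE10 : 0 ≤ E1 := nn _ _
    have hE20 : 0 ≤ E2 := nn _ _
    have hF10 : 0 ≤ F1 := nn _ _
    have hF20 : 0 ≤ F2 := nn _ _
    have hrect : ∑ i ∈ s, ‖(∑ a ∈ Ioc A M, x a * f i a) * (∑ b ∈ Ioc (N / B) (N / M), y b * f i b)‖
        ≤ κ * (Real.sqrt E * Real.sqrt F) := by
      have cs := Finset.sum_mul_sq_le_sq_mul_sq s (fun i => ‖∑ a ∈ Ioc A M, x a * f i a‖)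
        (fun i => ‖∑ b ∈ Ioc (N / B) (N / M), y b * f i b‖)
      simp only [norm_mul]
      refine abs_le_of_sq_le_sq' ?_ (by positivity) |>.2
      refine cs.trans ?_
      rw [mul_pow, mul_pow, Real.sq_sqrt (nn _ _), Real.sq_sqrt (nn _ _)]
      calc _ ≤ (κ * E1) * (κ * F3) := mul_le_mul (hx A M) (hy _ _)
              (sum_nonneg fun _ _ => by positivity) (by positivity)
        _ ≤ (κ * E) * (κ * F) := by
            have : 0 ≤ F3 := nn _ _
            have : E1 ≤ E := by linarith
            have : F3 ≤ F := by linarith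
            gcongr
        _ = _ := by ring
    have hsq : Real.sqrt E1 * Real.sqrt F1 + Real.sqrt E2 * Real.sqrt F2
        ≤ Real.sqrt E * Real.sqrt F := by
      refine abs_le_of_sq_le_sq' ?_ (by positivity) |>.2
      rw [mul_pow, Real.sq_sqrt (nn _ _), Real.sq_sqrt (nn _ _)]
      have hF' : F1 + F2 ≤ F := by linarith
      have hE0 : 0 ≤ E := nn _ _
      have : (Real.sqrt E1 * Real.sqrt F1 + Real.sqrt E2 * Real.sqrt F2) ^ 2
          ≤ (E1 + E2) * (F1 + F2) := by
        have a1 := Real.sq_sqrt hE10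
        have a2 := Real.sq_sqrt hE20
        have a3 := Real.sq_sqrt hF10
        have a4 := Real.sq_sqrt hF20
        rw [← a1, ← a2, ← a3, ← a4]
        simp only [Real.sqrt_sq (Real.sqrt_nonneg _)]
        nlinarith [sq_nonneg (Real.sqrt E1 * Real.sqrt F2 - Real.sqrt E2 * Real.sqrt F1)]
      rw [hEs] at this
      exact this.trans (mul_le_mul_of_nonneg_left hF' hE0)
    calc _ ≤ ∑ i ∈ s, (‖∑ a ∈ Ioc A M, ∑ b ∈ Ioc (N / M) (N / a), (x a * f i a) * (y b * f i b)‖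
          + ‖∑ a ∈ Ioc M B, ∑ b ∈ Ioc (N / B) (N / a), (x a * f i a) * (y b * f i b)‖
          + ‖(∑ a ∈ Ioc A M, x a * f i a) * (∑ b ∈ Ioc (N / B) (N / M), y b * f i b)‖) := by
          refine sum_le_sum fun i _ => ?_
          rw [split i]
          exact norm_add₃_le
      _ ≤ k * κ * (Real.sqrt E1 * Real.sqrt F1) + k * κ * (Real.sqrt E2 * Real.sqrt F2)
          + κ * (Real.sqrt E * Real.sqrt F) := by
          rw [sum_add_distrib, sum_add_distrib]
          exact add_le_add (add_le_add ihL ihR) hrect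
      _ ≤ _ := by
          push_cast
          have : k * κ * (Real.sqrt E1 * Real.sqrt F1 + Real.sqrt E2 * Real.sqrt F2)
            ≤ k * κ * (Real.sqrt E * Real.sqrt F) := by gcongr
          linarith

end SmallOmega

/-! ### Vaughan's identity and Type I sums -/

namespace SmallOmega

open Finset ArithmeticFunction
open scoped Moebius zeta

/-- A family of at most `D ^ 2` bounded completely multiplicative functions with partial sums at
most `D` and pairwise correlations at most `D ^ 2`. Primitive nonprincipal Dirichlet characters of
conductor at most `D` form such a family. -/
structure QuasiOrth {ι : Type*} (s : Finset ι) (f : ι → ℕ → ℂ) (D : ℕ) : Prop where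
  norm_le : ∀ i ∈ s, ∀ m, ‖f i m‖ ≤ 1
  map_mul : ∀ i ∈ s, ∀ a b, f i (a * b) = f i a * f i b
  sum_le : ∀ i ∈ s, ∀ a b, ‖∑ m ∈ Ioc a b, f i m‖ ≤ D
  pair_le : ∀ i ∈ s, ∀ k ∈ s, i ≠ k →
    ∀ a b, ‖∑ m ∈ Ioc a b, f i m * (starRingEnd ℂ) (f k m)‖ ≤ (D : ℝ) ^ 2
  card_le : (s.card : ℝ) ≤ (D : ℝ) ^ 2

/-- Restriction of an arithmetic function to `n ≤ U`. -/
noncomputable def lo (U : ℕ) (F : ArithmeticFunction ℝ) : ArithmeticFunction ℝ :=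
  ⟨fun n => if n ≤ U then F n else 0, by simp⟩

/-- Restriction of an arithmetic function to `n > U`. -/
noncomputable def hi (U : ℕ) (F : ArithmeticFunction ℝ) : ArithmeticFunction ℝ :=
  ⟨fun n => if n ≤ U then 0 else F n, by simp⟩

lemma lo_apply (U : ℕ) (F : ArithmeticFunction ℝ) (n : ℕ) :
    lo U F n = if n ≤ U then F n else 0 := rfl

lemma hi_apply (U : ℕ) (F : ArithmeticFunction ℝ) (n : ℕ) :
    hi U F n = if n ≤ U then 0 else F n := rfl

lemma lo_add_hi (U : ℕ) (F : ArithmeticFunction ℝ) : lo U F + hi U F = F := by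
  ext n
  simp only [ArithmeticFunction.add_apply, lo_apply, hi_apply]
  split_ifs <;> simp

/-- Vaughan's identity. -/
lemma vaughan (U : ℕ) :
    (Λ : ArithmeticFunction ℝ) = lo U Λ + lo U (μ : ArithmeticFunction ℝ) * log
      - (lo U (μ : ArithmeticFunction ℝ) * lo U Λ) * (ζ : ArithmeticFunction ℝ)
      + hi U Λ * (hi U (μ : ArithmeticFunction ℝ) * (ζ : ArithmeticFunction ℝ)) := by
  have h1 : (Λ : ArithmeticFunction ℝ) * (ζ : ArithmeticFunction ℝ) = log := vonMangoldt_mul_zeta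
  have h2 : (μ : ArithmeticFunction ℝ) * (ζ : ArithmeticFunction ℝ) = 1 := coe_moebius_mul_coe_zeta
  have h3 := lo_add_hi U Λ
  have h4 := lo_add_hi U (μ : ArithmeticFunction ℝ)
  rw [← h1]
  have h5 : lo U (μ : ArithmeticFunction ℝ) * (ζ : ArithmeticFunction ℝ)
      = 1 - hi U (μ : ArithmeticFunction ℝ) * (ζ : ArithmeticFunction ℝ) := by
    rw [← h2, ← h4, add_mul, h4]; ring
  have h6 : lo U (μ : ArithmeticFunction ℝ) * (Λ * (ζ : ArithmeticFunction ℝ))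
      = Λ * (1 - hi U (μ : ArithmeticFunction ℝ) * (ζ : ArithmeticFunction ℝ)) := by
    rw [← h5]; ring
  have h7 : (lo U (μ : ArithmeticFunction ℝ) * lo U Λ) * (ζ : ArithmeticFunction ℝ)
      = lo U Λ * (1 - hi U (μ : ArithmeticFunction ℝ) * (ζ : ArithmeticFunction ℝ)) := by
    rw [← h5]; ring
  rw [h6, h7]
  have h8 : hi U Λ = Λ - lo U Λ := by rw [eq_sub_iff_add_eq, add_comm]; exact h3
  rw [h8]
  ring

/-- The arithmetic function `n ↦ f n * F n / n`. -/
noncomputable def tw (f : ℕ → ℂ) (F : ArithmeticFunction ℝ) : ArithmeticFunction ℂ :=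
  ⟨fun n => f n * ((F n / n : ℝ) : ℂ), by simp⟩

lemma tw_apply (f : ℕ → ℂ) (F : ArithmeticFunction ℝ) (n : ℕ) :
    tw f F n = f n * ((F n / n : ℝ) : ℂ) := rfl

lemma tw_mul (f : ℕ → ℂ) (hf : ∀ a b, f (a * b) = f a * f b) (F G : ArithmeticFunction ℝ) :
    tw f (F * G) = tw f F * tw f G := by
  ext n
  rw [tw_apply, mul_apply, mul_apply, sum_div]
  push_cast
  rw [mul_sum]
  refine sum_congr rfl fun p hp => ?_
  obtain ⟨hp, hn⟩ := Nat.mem_divisorsAntidiagonal.mp hp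
  rw [tw_apply, tw_apply, ← hp, hf]
  push_cast
  rw [mul_div_mul_comm]
  ring

lemma sum_inv_le (N : ℕ) : ∑ m ∈ Ioc 0 N, (1 / m : ℝ) ≤ 1 + Real.log N := by
  have h := harmonic_le_one_add_log N
  have : ((harmonic N : ℚ) : ℝ) = ∑ m ∈ Ioc 0 N, (1 / m : ℝ) := by
    rw [harmonic_eq_sum_Icc]
    push_cast
    have : Ioc 0 N = Icc 1 N := by ext; simp; omega
    rw [this]
    simp
  linarith

lemma sum_Ioc_sub (F : ℕ → ℂ) {a b : ℕ} (h : a ≤ b) :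
    ∑ m ∈ Ioc a b, F m = ∑ m ∈ Ioc 0 b, F m - ∑ m ∈ Ioc 0 a, F m := by
  rw [← Finset.Ioc_union_Ioc_eq_Ioc (Nat.zero_le a) h, sum_union (by
    rw [Finset.disjoint_left]; intro u; simp only [mem_Ioc]; omega)]
  ring

/-- Type I sums: one variable is short and the other is smooth. -/
lemma typeI {f : ℕ → ℂ} (hf1 : ∀ m, ‖f m‖ ≤ 1) (hf : ∀ a b, f (a * b) = f a * f b)
    (F G : ArithmeticFunction ℝ) (V Y N : ℕ) (hYN : Y ≤ N) (K : ℝ) (hK : 0 ≤ K)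
    (hF : ∀ d, d ≠ 0 → |F d| ≤ d) (hF0 : ∀ d, V < d → F d = 0)
    (hG : ∀ d, 0 < d → d ≤ V → ∀ b, ‖∑ k ∈ Ioc (Y / d) b, tw f G k‖ ≤ K) :
    ‖∑ m ∈ Ioc Y N, tw f (F * G) m‖ ≤ V * K := by
  rw [sum_Ioc_sub _ hYN, tw_mul f hf, sum_Ioc_mul_eq_sum_sum, sum_Ioc_mul_eq_sum_sum]
  have e : ∑ n ∈ Ioc 0 Y, tw f F n * ∑ m ∈ Ioc 0 (Y / n), tw f G m
      = ∑ n ∈ Ioc 0 N, tw f F n * ∑ m ∈ Ioc 0 (Y / n), tw f G m := by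
    refine sum_subset (Ioc_subset_Ioc_right hYN) fun n hn hn' => ?_
    simp only [mem_Ioc] at hn hn'
    rw [Nat.div_eq_of_lt (by omega)]
    simp
  rw [e, ← sum_sub_distrib]
  calc _ ≤ ∑ n ∈ Ioc 0 N, if n ≤ V then K else 0 := by
        refine (norm_sum_le _ _).trans (sum_le_sum fun n hn => ?_)
        simp only [mem_Ioc] at hn
        rw [← mul_sub, ← sum_Ioc_sub _ (Nat.div_le_div_right hYN), norm_mul]
        split_ifs with hV
        · have h1 : ‖tw f F n‖ ≤ 1 := by
            rw [tw_apply, norm_mul, Complex.norm_real, Real.norm_eq_abs, abs_div, Nat.abs_cast]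
            have : |F n| / n ≤ 1 := by
              rw [div_le_one (by exact_mod_cast hn.1)]
              exact hF n (by omega)
            calc _ ≤ 1 * 1 := mul_le_mul (hf1 n) this (by positivity) zero_le_one
              _ = 1 := one_mul 1
          calc _ ≤ 1 * K := mul_le_mul h1 (hG n hn.1 hV _) (norm_nonneg _) zero_le_one
            _ = K := one_mul K
        · rw [tw_apply, hF0 n (by omega)]
          simp
    _ ≤ V * K := by
        rw [← sum_filter, sum_const, nsmul_eq_mul]
        refine mul_le_mul_of_nonneg_right ?_ hK
        have : ((Ioc 0 N).filter (· ≤ V)).card ≤ (Ioc 0 V).card :=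
          card_le_card fun x => by simp; omega
        simpa using this

lemma abs_moebius_le (n : ℕ) : |((μ : ArithmeticFunction ℝ) n)| ≤ 1 := by
  rw [intCoe_apply, ← Int.cast_abs]
  exact_mod_cast abs_moebius_le_one

lemma abs_lo_mul_lo_le (U d : ℕ) (hd : d ≠ 0) :
    |(lo U (μ : ArithmeticFunction ℝ) * lo U Λ) d| ≤ d := by
  rw [mul_apply]
  calc _ ≤ ∑ p ∈ d.divisorsAntidiagonal, Λ p.2 := by
        refine (abs_sum_le_sum_abs _ _).trans (sum_le_sum fun p _ => ?_)
        rw [abs_mul, lo_apply, lo_apply]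
        have h0 : 0 ≤ Λ p.2 := vonMangoldt_nonneg
        split_ifs
        · rw [abs_of_nonneg h0]
          exact mul_le_of_le_one_left h0 (abs_moebius_le _)
        all_goals simp [h0]
    _ = ∑ i ∈ d.divisors, Λ i := by
        rw [Nat.sum_divisorsAntidiagonal' (f := fun _ b => Λ b)]
    _ = Real.log d := vonMangoldt_sum
    _ ≤ d := Real.log_le_self (by positivity)

lemma lo_mul_lo_eq_zero (U d : ℕ) (hd : U * U < d) (F G : ArithmeticFunction ℝ) :
    (lo U F * lo U G) d = 0 := by
  rw [mul_apply]
  refine sum_eq_zero fun p hp => ?_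
  obtain ⟨hp, -⟩ := Nat.mem_divisorsAntidiagonal.mp hp
  rw [lo_apply, lo_apply]
  split_ifs with h1 h2
  · exact absurd (Nat.mul_le_mul h1 h2) (by omega)
  all_goals simp

lemma abs_hi_mul_zeta_le (U b : ℕ) :
    |(hi U (μ : ArithmeticFunction ℝ) * (ζ : ArithmeticFunction ℝ)) b| ≤ b.divisors.card := by
  rw [coe_mul_zeta_apply]
  calc _ ≤ ∑ i ∈ b.divisors, (1 : ℝ) := by
        refine (abs_sum_le_sum_abs _ _).trans (sum_le_sum fun p _ => ?_)
        rw [hi_apply]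
        split_ifs
        · simp
        · exact abs_moebius_le _
    _ = _ := by simp

lemma hi_mul_zeta_eq_zero (U b : ℕ) (hb : b ≤ U) :
    (hi U (μ : ArithmeticFunction ℝ) * (ζ : ArithmeticFunction ℝ)) b = 0 := by
  rw [coe_mul_zeta_apply]
  refine sum_eq_zero fun i hi => ?_
  rw [hi_apply, if_pos ((Nat.divisor_le hi).trans hb)]

open scoped Pointwise in
lemma card_divisors_mul_le (a b : ℕ) :
    (a * b).divisors.card ≤ a.divisors.card * b.divisors.card := by
  rw [Nat.divisors_mul]
  exact card_mul_le

/-- `∑ (u * v)(b) / b ≤ (∑ u(d)/d) (∑ v(e)/e)` for nonnegative arithmetic functions. -/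
lemma sum_conv_div_le (u v : ArithmeticFunction ℝ) (hu : ∀ n, 0 ≤ u n) (hv : ∀ n, 0 ≤ v n)
    (N : ℕ) : ∑ b ∈ Ioc 0 N, (u * v) b / b
      ≤ (∑ b ∈ Ioc 0 N, u b / b) * (∑ b ∈ Ioc 0 N, v b / b) := by
  set u' : ArithmeticFunction ℝ := ⟨fun n => u n / n, by simp⟩ with hu'
  set v' : ArithmeticFunction ℝ := ⟨fun n => v n / n, by simp⟩ with hv'
  have e : ∀ b, (u * v) b / b = (u' * v') b := by
    intro b
    rw [mul_apply, mul_apply, sum_div]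
    refine sum_congr rfl fun p hp => ?_
    obtain ⟨hp, -⟩ := Nat.mem_divisorsAntidiagonal.mp hp
    simp only [hu', hv', coe_mk, ← hp]
    push_cast
    rw [mul_div_mul_comm]
  rw [sum_congr rfl fun b _ => e b, sum_Ioc_mul_eq_sum_sum, sum_mul]
  refine sum_le_sum fun b _ => ?_
  have h0 : 0 ≤ u b / b := div_nonneg (hu b) (by positivity)
  refine mul_le_mul_of_nonneg_left ?_ h0
  exact sum_le_sum_of_subset_of_nonneg (Ioc_subset_Ioc_right (Nat.div_le_self _ _))
    fun i _ _ => div_nonneg (hv i) (by positivity)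

lemma sum_divisors_sq_div_le (N : ℕ) :
    ∑ b ∈ Ioc 0 N, ((b.divisors.card : ℝ) ^ 2) / b ≤ (1 + Real.log N) ^ 4 := by
  set t : ArithmeticFunction ℝ := (ζ : ArithmeticFunction ℝ) * (ζ : ArithmeticFunction ℝ) with ht
  have hz : ∀ n, 0 ≤ (ζ : ArithmeticFunction ℝ) n := fun n => by
    rw [natCoe_apply]; positivity
  have htc : ∀ b, t b = b.divisors.card := by
    intro b
    rw [ht, coe_mul_zeta_apply]
    rw [card_eq_sum_ones]
    push_cast
    refine sum_congr rfl fun i hi => ?_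
    rw [natCoe_apply, zeta_apply_ne (Nat.pos_of_mem_divisors hi).ne']
    simp
  have ht0 : ∀ n, 0 ≤ t n := fun n => by rw [htc]; positivity
  have hz1 : ∑ b ∈ Ioc 0 N, (ζ : ArithmeticFunction ℝ) b / b ≤ 1 + Real.log N := by
    refine le_trans (sum_le_sum fun b hb => ?_) (sum_inv_le N)
    simp only [mem_Ioc] at hb
    rw [natCoe_apply, zeta_apply_ne (by omega)]
    simp
  have hz0 : 0 ≤ ∑ b ∈ Ioc 0 N, (ζ : ArithmeticFunction ℝ) b / b :=
    sum_nonneg fun i _ => div_nonneg (hz i) (by positivity)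
  have ht1 : ∑ b ∈ Ioc 0 N, t b / b ≤ (1 + Real.log N) ^ 2 := by
    refine (sum_conv_div_le _ _ hz hz N).trans ?_
    rw [sq]
    exact mul_le_mul hz1 hz1 hz0 (hz0.trans hz1)
  have ht2 : 0 ≤ ∑ b ∈ Ioc 0 N, t b / b :=
    sum_nonneg fun i _ => div_nonneg (ht0 i) (by positivity)
  calc _ ≤ ∑ b ∈ Ioc 0 N, (t * t) b / b := by
        refine sum_le_sum fun b _ => ?_
        refine div_le_div_of_nonneg_right ?_ (by positivity)
        rw [mul_apply]
        calc ((b.divisors.card : ℝ) ^ 2) = ∑ p ∈ b.divisorsAntidiagonal, (b.divisors.card : ℝ) := by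
              rw [sum_const, nsmul_eq_mul, sq]
              congr 2
              rw [← Nat.map_div_right_divisors, card_map]
          _ ≤ _ := by
              refine sum_le_sum fun p hp => ?_
              obtain ⟨hp, -⟩ := Nat.mem_divisorsAntidiagonal.mp hp
              rw [htc, htc, ← hp]
              exact_mod_cast card_divisors_mul_le _ _
    _ ≤ _ := sum_conv_div_le _ _ ht0 ht0 N
    _ ≤ (1 + Real.log N) ^ 2 * (1 + Real.log N) ^ 2 :=
        mul_le_mul ht1 ht1 ht2 (ht2.trans ht1)
    _ = _ := by ring

end SmallOmega

/-! ### Type II sums and the mean value over quasi-orthogonal families -/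

namespace SmallOmega

open Finset ArithmeticFunction
open scoped Moebius zeta

lemma log_le_two_sqrt {x : ℝ} (hx : 0 ≤ x) : Real.log x ≤ 2 * Real.sqrt x := by
  rcases hx.eq_or_lt with rfl | h
  · simp
  · have h1 : Real.log x = 2 * Real.log (Real.sqrt x) := by
      rw [Real.log_sqrt hx]; ring
    rw [h1]
    have := Real.log_le_self (Real.sqrt_nonneg x)
    linarith

/-- The large sieve for a quasi-orthogonal family and a sequence supported on `(D ^ 4, N]`. -/
lemma QuasiOrth.large_sieve {ι : Type*} {s : Finset ι} {f : ι → ℕ → ℂ} {D : ℕ}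
    (h : QuasiOrth s f D) (hD : 2 ≤ D) (N : ℕ) (hN : 1 ≤ N) (x : ℕ → ℂ)
    (hx : ∀ m, m ∉ Ioc (D ^ 4) N → x m = 0) (A B : ℕ) :
    ∑ i ∈ s, ‖∑ m ∈ Ioc A B, x m * f i m‖ ^ 2
      ≤ (2 * (1 + Real.log N)) * ∑ m ∈ Ioc A B, (m : ℝ) * ‖x m‖ ^ 2 := by
  classical
  have hD0 : (0 : ℝ) < D := by positivity
  have hlog : 0 ≤ Real.log N := Real.log_nonneg (by exact_mod_cast hN)
  set x' : ℕ → ℂ := fun m => if m ∈ Ioc A B then x m else 0 with hx'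
  have e1 : ∀ i, ∑ m ∈ Ioc A B, x m * f i m = ∑ m ∈ Ioc (D ^ 4) N, x' m * f i m := by
    intro i
    have h1 : ∑ m ∈ Ioc A B, x m * f i m = ∑ m ∈ Ioc A B ∩ Ioc (D ^ 4) N, x m * f i m := by
      refine (sum_subset inter_subset_left fun m hm hm' => ?_).symm
      rw [hx m (fun hc => hm' (mem_inter.mpr ⟨hm, hc⟩)), zero_mul]
    rw [h1, inter_comm, ← filter_mem_eq_inter, sum_filter]
    refine sum_congr rfl fun m _ => ?_
    simp only [hx']
    split_ifs <;> simp
  have e2 : ∑ m ∈ Ioc (D ^ 4) N, (m : ℝ) * ‖x' m‖ ^ 2 ≤ ∑ m ∈ Ioc A B, (m : ℝ) * ‖x m‖ ^ 2 := by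
    calc _ = ∑ m ∈ Ioc (D ^ 4) N ∩ Ioc A B, (m : ℝ) * ‖x m‖ ^ 2 := by
          rw [← filter_mem_eq_inter, sum_filter]
          refine sum_congr rfl fun m _ => ?_
          simp only [hx']
          split_ifs <;> simp
      _ ≤ _ := sum_le_sum_of_subset_of_nonneg inter_subset_right fun _ _ _ => by positivity
  rw [sum_congr rfl fun i _ => by rw [e1 i]]
  refine (large_sieve_dual s f (Ioc (D ^ 4) N) (fun m hm => ?_) (2 * (1 + Real.log N))
    (by positivity) (fun i hi => ?_) x').trans (mul_le_mul_of_nonneg_left e2 (by positivity))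
  · simp only [mem_Ioc] at hm; omega
  · rw [← add_sum_erase s _ hi]
    have hdiag : ‖∑ m ∈ Ioc (D ^ 4) N, f i m * (starRingEnd ℂ) (f i m) * ((1 / m : ℝ) : ℂ)‖
        ≤ 1 + Real.log N := by
      calc _ ≤ ∑ m ∈ Ioc (D ^ 4) N, (1 / m : ℝ) := by
            refine (norm_sum_le _ _).trans (sum_le_sum fun m _ => ?_)
            rw [norm_mul, norm_mul, Complex.norm_conj, Complex.norm_real, Real.norm_eq_abs,
              abs_of_nonneg (by positivity)]
            have := h.norm_le i hi m
            have h1 : ‖f i m‖ * ‖f i m‖ ≤ 1 := by nlinarith [norm_nonneg (f i m)]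
            exact mul_le_of_le_one_left (by positivity) h1
        _ ≤ ∑ m ∈ Ioc 0 N, (1 / m : ℝ) := sum_le_sum_of_subset_of_nonneg
            (Ioc_subset_Ioc_left (Nat.zero_le _)) fun _ _ _ => by positivity
        _ ≤ _ := sum_inv_le N
    have hoff : ∑ k ∈ s.erase i,
        ‖∑ m ∈ Ioc (D ^ 4) N, f i m * (starRingEnd ℂ) (f k m) * ((1 / m : ℝ) : ℂ)‖ ≤ 1 := by
      calc _ ≤ ∑ k ∈ s.erase i, (1 / (D : ℝ) ^ 2) := by
            refine sum_le_sum fun k hk => ?_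
            obtain ⟨hki, hks⟩ := mem_erase.mp hk
            refine (norm_sum_mul_le_of_antitone (fun m => f i m * (starRingEnd ℂ) (f k m))
              (fun m => (1 / m : ℝ)) ((D : ℝ) ^ 2) (D ^ 4) N
              (fun M => h.pair_le i hi k hks (Ne.symm hki) _ _) (fun m hm => ?_)
              (fun m _ => by positivity)).trans ?_
            · have : (0 : ℝ) < m := by exact_mod_cast (Nat.zero_le _).trans_lt hm
              push_cast
              exact one_div_le_one_div_of_le this (by linarith)
            · push_cast
              rw [mul_one_div, div_le_div_iff₀ (by positivity) (by positivity)]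
              nlinarith
        _ = (s.erase i).card * (1 / (D : ℝ) ^ 2) := by rw [sum_const, nsmul_eq_mul]
        _ ≤ (D : ℝ) ^ 2 * (1 / (D : ℝ) ^ 2) := by
            refine mul_le_mul_of_nonneg_right (le_trans ?_ h.card_le) (by positivity)
            exact_mod_cast card_le_card (erase_subset _ _)
        _ = 1 := by field_simp
    linarith

/-- Type II sums in mean over a quasi-orthogonal family. -/
lemma QuasiOrth.typeII {ι : Type*} {s : Finset ι} {f : ι → ℕ → ℂ} {D : ℕ}
    (h : QuasiOrth s f D) (hD : 2 ≤ D) (N M : ℕ) (hN : 1 ≤ N) (hMN : M ≤ N) :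
    ∑ i ∈ s, ‖∑ m ∈ Ioc 0 M, tw (f i) (hi (D ^ 4) Λ *
        (hi (D ^ 4) (μ : ArithmeticFunction ℝ) * (ζ : ArithmeticFunction ℝ))) m‖
      ≤ 4 * (1 + Real.log N) ^ 6 := by
  classical
  set ℓ : ℝ := 1 + Real.log N with hℓ
  have hlog : 0 ≤ Real.log N := Real.log_nonneg (by exact_mod_cast hN)
  have hℓ1 : 1 ≤ ℓ := by linarith
  set G : ArithmeticFunction ℝ :=
    hi (D ^ 4) (μ : ArithmeticFunction ℝ) * (ζ : ArithmeticFunction ℝ) with hG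
  set x : ℕ → ℂ := fun a => if a ∈ Ioc (D ^ 4) N then ((Λ a / a : ℝ) : ℂ) else 0 with hx
  set y : ℕ → ℂ := fun a => if a ∈ Ioc (D ^ 4) N then ((G a / a : ℝ) : ℂ) else 0 with hy
  set k := Nat.log 2 N + 1 with hk
  have hk2 : N < 2 ^ k := Nat.lt_pow_succ_log_self (by norm_num) N
  have hkℓ : (k : ℝ) ≤ 2 * ℓ := by
    have h1 : (2 : ℝ) ^ (Nat.log 2 N) ≤ N := by exact_mod_cast Nat.pow_log_le_self 2 (by omega)
    have h2 := Real.log_le_log (by positivity) h1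
    rw [Real.log_pow] at h2
    have := Real.log_two_gt_d9
    have h3 : (0 : ℝ) ≤ Nat.log 2 N := by positivity
    rw [hk]; push_cast
    nlinarith
  have hE : ∀ B : ℕ, ∑ m ∈ Ioc 0 B, (m : ℝ) * ‖x m‖ ^ 2 ≤ ℓ ^ 4 := by
    intro B
    calc _ ≤ ∑ m ∈ Ioc 0 N, ℓ ^ 2 * (1 / m : ℝ) := by
          rw [← sum_filter_add_sum_filter_not (Ioc 0 B) (fun m => m ∈ Ioc 0 N)]
          have z : ∑ m ∈ (Ioc 0 B).filter (fun m => ¬ m ∈ Ioc 0 N), (m : ℝ) * ‖x m‖ ^ 2 = 0 := by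
            refine sum_eq_zero fun m hm => ?_
            simp only [mem_filter, mem_Ioc] at hm
            have : x m = 0 := by
              simp only [hx]
              rw [if_neg]
              simp only [mem_Ioc]; omega
            rw [this]; simp
          rw [z, add_zero]
          refine (sum_le_sum fun m hm => ?_).trans (sum_le_sum_of_subset_of_nonneg
            (fun m hm => (mem_filter.mp hm).2) fun _ _ _ => by positivity)
          simp only [mem_filter, mem_Ioc] at hm
          have hm0 : (0 : ℝ) < m := by exact_mod_cast hm.2.1
          simp only [hx]
          split_ifs
          · rw [Complex.norm_real, Real.norm_eq_abs, sq_abs, div_pow]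
            have h1 : Λ m ≤ ℓ := by
              refine vonMangoldt_le_log.trans ?_
              have := Real.log_le_log hm0 (show (m : ℝ) ≤ N by exact_mod_cast hm.2.2)
              linarith
            have h2 : (Λ m) ^ 2 ≤ ℓ ^ 2 := pow_le_pow_left₀ vonMangoldt_nonneg h1 2
            calc (m : ℝ) * ((Λ m) ^ 2 / (m : ℝ) ^ 2) = (Λ m) ^ 2 * (1 / m : ℝ) := by field_simp
              _ ≤ _ := by gcongr
          · rw [norm_zero]; simp; positivity
      _ ≤ ℓ ^ 2 * ℓ := by
          rw [← mul_sum]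
          exact mul_le_mul_of_nonneg_left (sum_inv_le N) (by positivity)
      _ ≤ ℓ ^ 4 := by
          rw [← pow_succ]
          exact pow_le_pow_right₀ hℓ1 (by norm_num)
  have hF : ∀ A B : ℕ, ∑ m ∈ Ioc A B, (m : ℝ) * ‖y m‖ ^ 2 ≤ ℓ ^ 4 := by
    intro A B
    refine le_trans ?_ (sum_divisors_sq_div_le N)
    rw [← sum_filter_add_sum_filter_not (Ioc A B) (fun m => m ∈ Ioc 0 N)]
    have z : ∑ m ∈ (Ioc A B).filter (fun m => ¬ m ∈ Ioc 0 N), (m : ℝ) * ‖y m‖ ^ 2 = 0 := by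
      refine sum_eq_zero fun m hm => ?_
      simp only [mem_filter, mem_Ioc] at hm
      have : y m = 0 := by
        simp only [hy]
        rw [if_neg]
        simp only [mem_Ioc]; omega
      rw [this]; simp
    rw [z, add_zero]
    refine (sum_le_sum fun m hm => ?_).trans (sum_le_sum_of_subset_of_nonneg
      (fun m hm => (mem_filter.mp hm).2) fun _ _ _ => by positivity)
    simp only [mem_filter, mem_Ioc] at hm
    have hm0 : (0 : ℝ) < m := by exact_mod_cast hm.2.1
    simp only [hy]
    split_ifs
    · rw [Complex.norm_real, Real.norm_eq_abs, abs_div, Nat.abs_cast, div_pow]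
      have h2 : |G m| ^ 2 ≤ (m.divisors.card : ℝ) ^ 2 :=
        pow_le_pow_left₀ (abs_nonneg _) (abs_hi_mul_zeta_le _ _) 2
      calc (m : ℝ) * (|G m| ^ 2 / (m : ℝ) ^ 2) = |G m| ^ 2 / m := by field_simp
        _ ≤ _ := by gcongr
    · rw [norm_zero]; simp; positivity
  have hM : M / (0 + 2 ^ k) = 0 := by
    rw [zero_add]
    exact Nat.div_eq_of_lt (by omega)
  have tri := bilinear_triangle s f (2 * ℓ) (by positivity) x y M
    (h.large_sieve hD N hN x fun m hm => by simp only [hx]; rw [if_neg hm])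
    (h.large_sieve hD N hN y fun m hm => by simp only [hy]; rw [if_neg hm]) k 0
  rw [hM] at tri
  have e : ∀ i ∈ s, ∑ m ∈ Ioc 0 M, tw (f i) (hi (D ^ 4) Λ * G) m
      = ∑ a ∈ Ioc 0 (0 + 2 ^ k), ∑ b ∈ Ioc 0 (M / a), (x a * f i a) * (y b * f i b) := by
    intro i hi'
    rw [tw_mul (f i) (h.map_mul i hi'), sum_Ioc_mul_eq_sum_sum]
    have e0 : ∑ a ∈ Ioc 0 (0 + 2 ^ k), ∑ b ∈ Ioc 0 (M / a), (x a * f i a) * (y b * f i b)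
        = ∑ a ∈ Ioc 0 M, ∑ b ∈ Ioc 0 (M / a), (x a * f i a) * (y b * f i b) := by
      refine (sum_subset (Ioc_subset_Ioc_right (by omega)) fun a ha ha' => ?_).symm
      simp only [mem_Ioc] at ha ha'
      rw [Nat.div_eq_of_lt (by omega)]
      simp
    rw [e0]
    refine sum_congr rfl fun a ha => ?_
    simp only [mem_Ioc] at ha
    rw [mul_sum]
    refine sum_congr rfl fun b hb => ?_
    simp only [mem_Ioc] at hb
    have hbN : b ≤ N := hb.2.trans ((Nat.div_le_self _ _).trans hMN)
    have hxa : tw (f i) (hi (D ^ 4) Λ) a = x a * f i a := by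
      simp only [tw_apply, hi_apply, hx, mem_Ioc]
      by_cases hc : a ≤ D ^ 4
      · rw [if_pos hc, if_neg (by omega)]; simp
      · rw [if_neg hc, if_pos (by omega)]; ring
    have hyb : tw (f i) G b = y b * f i b := by
      simp only [tw_apply, hy, mem_Ioc]
      by_cases hc : b ≤ D ^ 4
      · rw [if_neg (by omega), hG, hi_mul_zeta_eq_zero _ _ hc]; simp
      · rw [if_pos (by omega)]; ring
    rw [hxa, hyb]
  rw [sum_congr rfl fun i hi' => by rw [e i hi']]
  refine tri.trans ?_
  have s1 : ∀ {t : ℝ}, t ≤ ℓ ^ 4 → Real.sqrt t ≤ ℓ ^ 2 := by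
    intro t ht
    rw [Real.sqrt_le_left (by positivity)]
    calc t ≤ ℓ ^ 4 := ht
      _ = (ℓ ^ 2) ^ 2 := by ring
  calc _ ≤ (2 * ℓ) * (2 * ℓ) * (ℓ ^ 2 * ℓ ^ 2) := by
        refine mul_le_mul (mul_le_mul_of_nonneg_right hkℓ (by positivity))
          (mul_le_mul (s1 (hE _)) (s1 (hF _ _)) (Real.sqrt_nonneg _) (by positivity))
          (by positivity) (by positivity)
    _ = _ := by ring

/-- Mean value estimate for `∑ Λ(m) f(m) / m` over a quasi-orthogonal family: for `m > D ^ 24` the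
total is only a power of `log N`, although the family may have `D ^ 2` members. -/
theorem QuasiOrth.mean_value {ι : Type*} {s : Finset ι} {f : ι → ℕ → ℂ} {D : ℕ}
    (h : QuasiOrth s f D) (hD : 2 ≤ D) (N : ℕ) :
    ∑ i ∈ s, ‖∑ m ∈ Ioc (D ^ 24) N, tw (f i) Λ m‖ ≤ 11 * (1 + Real.log N) ^ 6 := by
  have hD0 : (0 : ℝ) < D := by positivity
  have hD2 : (2 : ℝ) ≤ D := by exact_mod_cast hD
  rcases lt_or_ge N (D ^ 24) with hN | hN
  · rw [Ioc_eq_empty (by omega)]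
    simp only [sum_empty, norm_zero, sum_const_zero]
    rcases Nat.eq_zero_or_pos N with rfl | h0
    · simp
    · have : 0 ≤ Real.log N := Real.log_nonneg (by exact_mod_cast h0)
      positivity
  set U := D ^ 4 with hU
  set Y := D ^ 24 with hY
  have hN1 : 1 ≤ N := le_trans (Nat.one_le_pow _ _ (by omega)) hN
  have hUY : U ≤ Y := Nat.pow_le_pow_right (by omega) (by norm_num)
  have hlog : 0 ≤ Real.log N := Real.log_nonneg (by exact_mod_cast hN1)
  have hYd : ∀ d k, 0 < d → d ≤ D ^ k → k ≤ 24 → D ^ (24 - k) ≤ Y / d := by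
    intro d k hd hdk hk
    rw [Nat.le_div_iff_mul_le hd]
    calc D ^ (24 - k) * d ≤ D ^ (24 - k) * D ^ k := Nat.mul_le_mul_left _ hdk
      _ = Y := by rw [← pow_add]; congr 1; omega
  have t1 : ∀ i ∈ s, ‖∑ m ∈ Ioc Y N, tw (f i) (lo U (μ : ArithmeticFunction ℝ) * log) m‖
      ≤ 1 / (D : ℝ) ^ 2 := by
    intro i hi'
    refine (typeI (h.norm_le i hi') (h.map_mul i hi') _ _ U Y N hN (2 / (D : ℝ) ^ 9)
      (by positivity) (fun d hd => ?_) (fun d hd => ?_) (fun d hd hdU b => ?_)).trans ?_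
    · rw [lo_apply]
      split_ifs
      · refine (abs_moebius_le d).trans ?_
        exact_mod_cast Nat.one_le_iff_ne_zero.mpr hd
      · simp
    · rw [lo_apply, if_neg (by omega)]
    · have hY20 := hYd d 4 hd hdU (by norm_num)
      have h3 : 3 ≤ Y / d := by
        have : 2 ^ 20 ≤ D ^ 20 := Nat.pow_le_pow_left hD 20
        norm_num at hY20 this ⊢
        omega
      have h3' : ∀ m : ℕ, Y / d < m → Real.exp 1 ≤ m := fun m hm => by
        have : (3 : ℝ) ≤ m := by exact_mod_cast h3.trans hm.le
        linarith [Real.exp_one_lt_d9]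
      refine (norm_sum_mul_le_of_antitone (f i) (fun k => log k / k) D (Y / d) b
        (fun M => h.sum_le i hi' _ _) (fun m hm => ?_) (fun m hm => ?_)).trans ?_
      · simp only [log_apply]
        exact Real.log_div_self_antitoneOn (h3' m hm) (h3' (m + 1) (by omega))
          (by push_cast; linarith)
      · simp only [log_apply]
        exact div_nonneg (Real.log_natCast_nonneg _) (by positivity)
      · simp only [log_apply]
        set a : ℝ := ((Y / d + 1 : ℕ) : ℝ) with ha
        have ha20 : (D : ℝ) ^ 20 ≤ a := by
          rw [ha]; exact_mod_cast hY20.trans (Nat.le_succ _)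
        have ha0 : 0 < a := lt_of_lt_of_le (by positivity) ha20
        have hs : (D : ℝ) ^ 10 ≤ Real.sqrt a := by
          apply Real.le_sqrt_of_sq_le
          calc ((D : ℝ) ^ 10) ^ 2 = (D : ℝ) ^ 20 := by ring
            _ ≤ a := ha20
        have : Real.log a / a ≤ 2 / (D : ℝ) ^ 10 := by
          calc Real.log a / a ≤ 2 * Real.sqrt a / a := by
                gcongr; exact log_le_two_sqrt ha0.le
            _ = 2 / Real.sqrt a := by
                rw [div_eq_div_iff ha0.ne' (Real.sqrt_pos.mpr ha0).ne', mul_assoc,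
                  Real.mul_self_sqrt ha0.le]
            _ ≤ _ := by gcongr
        calc (D : ℝ) * (Real.log a / a) ≤ D * (2 / (D : ℝ) ^ 10) := by gcongr
          _ = _ := by field_simp
    · rw [hU]; push_cast
      rw [mul_div_assoc', div_le_div_iff₀ (by positivity) (by positivity)]
      have : (8 : ℝ) ≤ D ^ 3 := by
        calc (8 : ℝ) = 2 ^ 3 := by norm_num
          _ ≤ _ := pow_le_pow_left₀ (by norm_num) hD2 3
      have h6 : (0 : ℝ) < D ^ 6 := by positivity
      nlinarith
  have t2 : ∀ i ∈ s, ‖∑ m ∈ Ioc Y N, tw (f i)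
      ((lo U (μ : ArithmeticFunction ℝ) * lo U Λ) * (ζ : ArithmeticFunction ℝ)) m‖
      ≤ 1 / (D : ℝ) ^ 2 := by
    intro i hi'
    refine (typeI (h.norm_le i hi') (h.map_mul i hi') _ _ (U * U) Y N hN (1 / (D : ℝ) ^ 15)
      (by positivity) (fun d hd => abs_lo_mul_lo_le U d hd)
      (fun d hd => lo_mul_lo_eq_zero U d hd _ _) (fun d hd hdU b => ?_)).trans ?_
    · have hY16 := hYd d 8 hd (by rw [hU, ← pow_add] at hdU; exact hdU) (by norm_num)
      have e : ∀ k ∈ Ioc (Y / d) b, tw (f i) (ζ : ArithmeticFunction ℝ) k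
          = f i k * ((1 / k : ℝ) : ℂ) := by
        intro k hk
        simp only [mem_Ioc] at hk
        rw [tw_apply, natCoe_apply, zeta_apply_ne (by omega), Nat.cast_one]
      rw [sum_congr rfl e]
      refine (norm_sum_mul_le_of_antitone (f i) (fun k => (1 / k : ℝ)) D (Y / d) b
        (fun M => h.sum_le i hi' _ _) (fun m hm => ?_) (fun m hm => by positivity)).trans ?_
      · have : (0 : ℝ) < m := by exact_mod_cast (Nat.zero_le _).trans_lt hm
        push_cast
        exact one_div_le_one_div_of_le this (by linarith)
      · have ha : (D : ℝ) ^ 16 ≤ ((Y / d + 1 : ℕ) : ℝ) := by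
          exact_mod_cast hY16.trans (Nat.le_succ _)
        calc (D : ℝ) * (1 / ((Y / d + 1 : ℕ) : ℝ)) ≤ D * (1 / (D : ℝ) ^ 16) := by gcongr
          _ = _ := by field_simp
    · rw [hU]; push_cast
      rw [mul_one_div, div_le_div_iff₀ (by positivity) (by positivity)]
      have : (1 : ℝ) ≤ D ^ 5 := one_le_pow₀ (by linarith)
      have h6 : (0 : ℝ) < D ^ 10 := by positivity
      nlinarith
  have dec : ∀ i ∈ s, ‖∑ m ∈ Ioc Y N, tw (f i) Λ m‖ ≤ 1 / (D : ℝ) ^ 2 + 1 / (D : ℝ) ^ 2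
      + (‖∑ m ∈ Ioc 0 N, tw (f i) (hi U Λ *
        (hi U (μ : ArithmeticFunction ℝ) * (ζ : ArithmeticFunction ℝ))) m‖
      + ‖∑ m ∈ Ioc 0 Y, tw (f i) (hi U Λ *
        (hi U (μ : ArithmeticFunction ℝ) * (ζ : ArithmeticFunction ℝ))) m‖) := by
    intro i hi'
    have e : ∑ m ∈ Ioc Y N, tw (f i) Λ m
        = ∑ m ∈ Ioc Y N, tw (f i) (lo U (μ : ArithmeticFunction ℝ) * log) m
          - ∑ m ∈ Ioc Y N, tw (f i)
            ((lo U (μ : ArithmeticFunction ℝ) * lo U Λ) * (ζ : ArithmeticFunction ℝ)) m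
          + ∑ m ∈ Ioc Y N, tw (f i) (hi U Λ *
            (hi U (μ : ArithmeticFunction ℝ) * (ζ : ArithmeticFunction ℝ))) m := by
      rw [← sum_sub_distrib, ← sum_add_distrib]
      refine sum_congr rfl fun m hm => ?_
      simp only [mem_Ioc] at hm
      have v := congrArg (fun F : ArithmeticFunction ℝ => F m) (vaughan U)
      have hsub : ∀ F G : ArithmeticFunction ℝ, (F - G) m = F m - G m := fun F G => by
        rw [sub_eq_add_neg, ArithmeticFunction.add_apply, sub_eq_add_neg]; rfl
      simp only [ArithmeticFunction.add_apply, hsub] at v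
      rw [lo_apply, if_neg (by omega), zero_add] at v
      simp only [tw_apply]
      rw [v]
      push_cast
      ring
    rw [e, sum_Ioc_sub (fun m => tw (f i) (hi U Λ *
      (hi U (μ : ArithmeticFunction ℝ) * (ζ : ArithmeticFunction ℝ))) m) hN]
    refine (norm_add_le _ _).trans (add_le_add ((norm_sub_le _ _).trans
      (add_le_add (t1 i hi') (t2 i hi'))) (norm_sub_le _ _))
  refine (sum_le_sum dec).trans ?_
  rw [sum_add_distrib, sum_const, sum_add_distrib, nsmul_eq_mul]
  have a1 := h.typeII hD N N hN1 le_rfl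
  have a2 := h.typeII hD N Y hN1 hN
  have a3 : (s.card : ℝ) * (1 / (D : ℝ) ^ 2 + 1 / (D : ℝ) ^ 2) ≤ 2 := by
    calc _ ≤ (D : ℝ) ^ 2 * (1 / (D : ℝ) ^ 2 + 1 / (D : ℝ) ^ 2) :=
          mul_le_mul_of_nonneg_right h.card_le (by positivity)
      _ = 2 := by field_simp; norm_num
  have a4 : 1 ≤ (1 + Real.log N) ^ 6 := one_le_pow₀ (by linarith)
  linarith

end SmallOmega

/-! ### Smooth weights, passage to primes, primitive characters -/

namespace SmallOmega

open Finset ArithmeticFunction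

/-- Partial summation: a linear bound for the partial sums of `c` gives a logarithmic bound for the
partial sums of `c q / q`. -/
lemma sum_div_le_of_sum_le (c : ℕ → ℝ) (K : ℝ) (hK : 0 ≤ K) (a : ℕ)
    (h : ∀ m : ℕ, ∑ q ∈ Ioc a m, c q ≤ K * m) (N : ℕ) (hN : 1 ≤ N) :
    ∑ q ∈ Ioc a N, c q / q ≤ K * (2 + Real.log N) := by
  have key : ∀ N : ℕ, ∑ q ∈ Ioc a N, c q / q
      ≤ (∑ q ∈ Ioc a N, c q) / N + K * ∑ m ∈ Ioc 0 N, (1 / m : ℝ) := by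
    intro N
    induction N with
    | zero => simp
    | succ N ih =>
      rcases lt_or_ge N a with hlt | hle
      · rw [Ioc_eq_empty (by omega : ¬ a < N + 1)]
        simp only [sum_empty, zero_div, zero_add]
        exact mul_nonneg hK (sum_nonneg fun _ _ => by positivity)
      · have e : Ioc a (N + 1) = insert (N + 1) (Ioc a N) := by
          ext x; simp only [mem_Ioc, mem_insert]; omega
        have e0 : Ioc 0 (N + 1) = insert (N + 1) (Ioc 0 N) := by
          ext x; simp only [mem_Ioc, mem_insert]; omega
        rw [e, e0, sum_insert (by simp), sum_insert (by simp), sum_insert (by simp)]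
        set C := ∑ q ∈ Ioc a N, c q with hC
        have hCN : C / N ≤ C / (N + 1 : ℕ) + K * (1 / ((N + 1 : ℕ) : ℝ)) := by
          rcases Nat.eq_zero_or_pos N with rfl | hpos
          · have : C = 0 := by rw [hC]; simp
            rw [this]; simp; exact hK
          · have hN0 : (0 : ℝ) < N := by exact_mod_cast hpos
            have hN1 : (0 : ℝ) < ((N + 1 : ℕ) : ℝ) := by positivity
            have := h N
            rw [mul_one_div, ← add_div, div_le_div_iff₀ hN0 hN1]
            push_cast
            nlinarith
        rw [add_div, mul_add]
        linarith
  refine (key N).trans ?_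
  have h1 : (∑ q ∈ Ioc a N, c q) / N ≤ K := by
    rw [div_le_iff₀ (by exact_mod_cast hN)]
    exact h N
  have h2 := mul_le_mul_of_nonneg_left (sum_inv_le N) hK
  linarith

lemma sum_vonMangoldt_div_le (N : ℕ) (hN : 1 ≤ N) :
    ∑ q ∈ Ioc 0 N, Λ q / q ≤ 6 * (2 + Real.log N) := by
  refine sum_div_le_of_sum_le _ 6 (by norm_num) 0 (fun m => ?_) N hN
  have h := Chebyshev.psi_le_const_mul_self (x := m) (by positivity)
  rw [Chebyshev.psi, Nat.floor_natCast] at h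
  refine h.trans (mul_le_mul_of_nonneg_right ?_ (by positivity))
  have : Real.log 4 = 2 * Real.log 2 := by
    rw [show (4 : ℝ) = 2 ^ 2 by norm_num, Real.log_pow]; norm_num
  linarith [Real.log_two_lt_d9]

/-- The von Mangoldt function restricted to proper prime powers. -/
noncomputable def properPow : ArithmeticFunction ℝ :=
  ⟨fun q => if q.Prime then 0 else Λ q, by simp⟩

lemma properPow_apply (q : ℕ) : properPow q = if q.Prime then 0 else Λ q := rfl

lemma properPow_nonneg (q : ℕ) : 0 ≤ properPow q := by
  rw [properPow_apply]; split_ifs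
  · exact le_rfl
  · exact vonMangoldt_nonneg

lemma sum_properPow_div_le (D : ℕ) (hD : 1 ≤ D) (N : ℕ) (hN : 1 ≤ N) :
    ∑ q ∈ Ioc (D ^ 24) N, properPow q / q ≤ 8 / (D : ℝ) ^ 6 * (2 + Real.log N) := by
  have hD0 : (0 : ℝ) < D := by exact_mod_cast hD
  refine sum_div_le_of_sum_le _ _ (by positivity) _ (fun m => ?_) N hN
  rcases le_or_gt m (D ^ 24) with hm | hm
  · rw [Ioc_eq_empty (by omega)]; simp; positivity
  have hm1 : (1 : ℝ) ≤ m := by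
    have : 1 ≤ D ^ 24 := Nat.one_le_pow _ _ hD
    exact_mod_cast this.trans hm.le
  have hm0 : (0 : ℝ) < m := by linarith
  have h1 : ∑ q ∈ Ioc (D ^ 24) m, properPow q ≤ 2 * Real.sqrt m * Real.log m := by
    refine le_trans ?_ (Chebyshev.psi_sub_theta_le hm1)
    rw [Chebyshev.psi_sub_theta_eq_sum_not_prime, Nat.floor_natCast]
    calc _ ≤ ∑ q ∈ Ioc 0 m, properPow q := sum_le_sum_of_subset_of_nonneg
          (Ioc_subset_Ioc_left (Nat.zero_le _)) fun q _ _ => properPow_nonneg q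
      _ = ∑ q ∈ Ioc 0 m with ¬ q.Prime, Λ q := by
          rw [sum_filter]
          refine sum_congr rfl fun q _ => ?_
          rw [properPow_apply]
          split_ifs <;> simp_all
      _ = _ := rfl
  set t := Real.sqrt (Real.sqrt m) with ht
  have ht0 : 0 < t := Real.sqrt_pos.mpr (Real.sqrt_pos.mpr hm0)
  have ht2 : t ^ 2 = Real.sqrt m := Real.sq_sqrt (Real.sqrt_nonneg _)
  have ht4 : t ^ 4 = (m : ℝ) := by
    calc t ^ 4 = (t ^ 2) ^ 2 := by ring
      _ = (m : ℝ) := by rw [ht2, Real.sq_sqrt hm0.le]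
  have hlog : Real.log m ≤ 4 * t := by
    rw [← ht4, Real.log_pow]
    push_cast
    have := Real.log_le_self ht0.le
    linarith
  have hDt : (D : ℝ) ^ 6 ≤ t := by
    apply Real.le_sqrt_of_sq_le
    apply Real.le_sqrt_of_sq_le
    calc (((D : ℝ) ^ 6) ^ 2) ^ 2 = (D : ℝ) ^ 24 := by ring
      _ ≤ (m : ℝ) := by exact_mod_cast hm.le
  calc _ ≤ 2 * Real.sqrt m * Real.log m := h1
    _ ≤ 2 * t ^ 2 * (4 * t) := by
        rw [ht2]; gcongr
    _ = 8 / t * (m : ℝ) := by rw [← ht4]; field_simp; norm_num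
    _ ≤ _ := by gcongr

lemma pow_mul_exp_le (i : ℕ) {c v : ℝ} (hc : 0 < c) (hv : 0 ≤ v) :
    v ^ i * Real.exp (-(c * v)) ≤ (i / (c * Real.exp 1)) ^ i := by
  rcases Nat.eq_zero_or_pos i with rfl | hi
  · simp; positivity
  have hi0 : (0 : ℝ) < i := by exact_mod_cast hi
  have h1 : v * Real.exp (-(c * v / i)) ≤ i / (c * Real.exp 1) := by
    have h := Real.add_one_le_exp (c * v / i - 1)
    rw [sub_add_cancel, Real.exp_sub] at h
    have hE := Real.exp_pos (c * v / i)
    rw [Real.exp_neg, le_div_iff₀ (by positivity)]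
    have h2 : c * v ≤ i * (Real.exp (c * v / i) / Real.exp 1) := by
      calc c * v = i * (c * v / i) := by field_simp
        _ ≤ _ := by gcongr
    calc v * (Real.exp (c * v / i))⁻¹ * (c * Real.exp 1)
        = (c * v) * ((Real.exp (c * v / i))⁻¹ * Real.exp 1) := by ring
      _ ≤ (i * (Real.exp (c * v / i) / Real.exp 1)) * ((Real.exp (c * v / i))⁻¹ * Real.exp 1) := by
          gcongr
      _ = i := by field_simp
  calc v ^ i * Real.exp (-(c * v)) = (v * Real.exp (-(c * v / i))) ^ i := by
        rw [mul_pow, ← Real.exp_nat_mul]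
        congr 2
        field_simp
    _ ≤ _ := by
        refine pow_le_pow_left₀ (by positivity) h1 i

/-- Lipschitz bound for `v ↦ v ^ i * exp (-c v)` on an interval to the right of `1`. -/
lemma abs_pow_mul_exp_sub_le (i : ℕ) {c a b K : ℝ} (hc : 0 ≤ c) (ha : 1 ≤ a) (hab : a ≤ b)
    (hK : ∀ v ∈ Set.Icc a b, v ^ i * Real.exp (-(c * v)) ≤ K) :
    |b ^ i * Real.exp (-(c * b)) - a ^ i * Real.exp (-(c * a))| ≤ (i + c) * K * (b - a) := by
  have hd : ∀ v ∈ Set.Icc a b, HasDerivWithinAt (fun v : ℝ => v ^ i * Real.exp (-(c * v)))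
      ((i * v ^ (i - 1)) * Real.exp (-(c * v)) + v ^ i * (Real.exp (-(c * v)) * (-(c * 1))))
      (Set.Icc a b) v := by
    intro v _
    refine HasDerivAt.hasDerivWithinAt ?_
    exact (hasDerivAt_pow i v).mul ((((hasDerivAt_id v).const_mul c).neg).exp)
  have hb : ∀ v ∈ Set.Icc a b,
      ‖(i * v ^ (i - 1)) * Real.exp (-(c * v)) + v ^ i * (Real.exp (-(c * v)) * (-(c * 1)))‖
        ≤ (i + c) * K := by
    intro v hv
    have hv1 : 1 ≤ v := ha.trans hv.1
    have hE := Real.exp_pos (-(c * v))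
    have h1 : v ^ (i - 1) ≤ v ^ i := pow_le_pow_right₀ hv1 (Nat.sub_le _ _)
    have h2 : 0 ≤ v ^ (i - 1) := by positivity
    refine (norm_add_le _ _).trans ?_
    rw [Real.norm_eq_abs, Real.norm_eq_abs, abs_of_nonneg (by positivity)]
    have e : |v ^ i * (Real.exp (-(c * v)) * (-(c * 1)))| = c * (v ^ i * Real.exp (-(c * v))) := by
      rw [show v ^ i * (Real.exp (-(c * v)) * (-(c * 1))) = -(c * (v ^ i * Real.exp (-(c * v))))
        by ring, abs_neg, abs_of_nonneg (by positivity)]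
    rw [e]
    have h3 := hK v hv
    calc _ ≤ i * (v ^ i * Real.exp (-(c * v))) + c * (v ^ i * Real.exp (-(c * v))) := by
          have h4 : i * v ^ (i - 1) * Real.exp (-(c * v)) ≤ i * (v ^ i * Real.exp (-(c * v))) := by
            rw [mul_assoc]
            gcongr
          simpa using h4
      _ ≤ i * K + c * K := by gcongr
      _ = _ := by ring
  have := (convex_Icc a b).norm_image_sub_le_of_norm_hasDerivWithin_le hd hb
    (Set.left_mem_Icc.mpr hab) (Set.right_mem_Icc.mpr hab)
  rw [Real.norm_eq_abs, Real.norm_eq_abs, abs_of_nonneg (by linarith : 0 ≤ b - a)] at this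
  exact this

/-- The smooth cutoff `v ^ j * exp (-v / e ^ j)` (as a function of `v = log m`) at scale `j`. It is
concentrated around `v = j * e ^ j`. -/
noncomputable def gw (j : ℕ) (v : ℝ) : ℝ := v ^ j * Real.exp (-(Real.exp (-j) * v))

/-- The maximum of `gw j` on `[0, ∞)`. -/
noncomputable def gmax (j : ℕ) : ℝ := (j / (Real.exp (-j) * Real.exp 1)) ^ j

/-- The weight of a prime `m` at scale `j`. -/
noncomputable def wt (j m : ℕ) : ℝ := Real.log m / m * gw j (Real.log m)

lemma gw_nonneg (j : ℕ) {v : ℝ} (hv : 0 ≤ v) : 0 ≤ gw j v := by rw [gw]; positivity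

lemma wt_nonneg (j m : ℕ) : 0 ≤ wt j m :=
  mul_nonneg (div_nonneg (Real.log_natCast_nonneg _) (by positivity))
    (gw_nonneg j (Real.log_natCast_nonneg _))

lemma gw_le (j : ℕ) {v : ℝ} (hv : 0 ≤ v) : gw j v ≤ gmax j :=
  pow_mul_exp_le j (Real.exp_pos _) hv

lemma gmax_pos (j : ℕ) : 0 < gmax j := by
  rw [gmax]
  rcases Nat.eq_zero_or_pos j with rfl | hj
  · simp
  · have : (0 : ℝ) < j := by exact_mod_cast hj
    positivity

lemma log_succ_sub_le {m : ℕ} (hm : 0 < m) :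
    Real.log (m + 1 : ℕ) - Real.log m ≤ 1 / m := by
  have hm0 : (0 : ℝ) < m := by exact_mod_cast hm
  rw [← Real.log_div (by positivity) hm0.ne']
  have : (((m + 1 : ℕ) : ℝ) / m) = 1 + 1 / m := by push_cast; field_simp
  rw [this]
  have := Real.log_le_sub_one_of_pos (show (0 : ℝ) < 1 + 1 / m by positivity)
  linarith

lemma gw_variation (j : ℕ) {m : ℕ} (hm : 3 ≤ m) :
    |gw j (Real.log (m + 1 : ℕ)) - gw j (Real.log m)| ≤ (j + 1) * gmax j * (1 / m) := by
  have hm3 : (3 : ℝ) ≤ m := by exact_mod_cast hm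
  have h1 : 1 ≤ Real.log m := by
    rw [Real.le_log_iff_exp_le (by linarith)]
    linarith [Real.exp_one_lt_d9]
  have h2 : Real.log m ≤ Real.log (m + 1 : ℕ) :=
    Real.log_le_log (by linarith) (by push_cast; linarith)
  refine (abs_pow_mul_exp_sub_le j (Real.exp_pos _).le h1 h2
    (fun v hv => gw_le j (by linarith [hv.1]))).trans ?_
  have h3 := log_succ_sub_le (m := m) (by omega)
  have h4 : Real.exp (-(j : ℝ)) ≤ 1 := by
    rw [Real.exp_le_one_iff]; simp
  have := (gmax_pos j).le
  gcongr

/-- Abel summation in mean over a finite family. -/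
lemma sum_norm_sum_mul_le {ι : Type*} (s : Finset ι) (c : ι → ℕ → ℂ) (f : ℕ → ℝ) (K : ℝ) (a b : ℕ)
    (hK : ∀ N ≤ b, ∑ i ∈ s, ‖∑ m ∈ Ioc a N, c i m‖ ≤ K) (hab : a ≤ b) :
    ∑ i ∈ s, ‖∑ m ∈ Ioc a b, c i m * f m‖ ≤ K * (|f b| + ∑ m ∈ Ico a b, |f (m + 1) - f m|) := by
  have key : ∀ i, ∀ b, a ≤ b → ∑ m ∈ Ioc a b, c i m * f m
      = (∑ m ∈ Ioc a b, c i m) * f b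
        - ∑ m ∈ Ico a b, (∑ l ∈ Ioc a m, c i l) * ((f (m + 1) - f m : ℝ) : ℂ) := by
    intro i b hb
    induction b, hb using Nat.le_induction with
    | base => simp
    | succ b hb ih =>
      have e : Ioc a (b + 1) = insert (b + 1) (Ioc a b) := by
        ext x; simp only [mem_Ioc, mem_insert]; omega
      rw [e, sum_insert (by simp), sum_insert (by simp), ih,
        Finset.sum_Ico_succ_top hb]
      push_cast
      ring
  calc _ ≤ ∑ i ∈ s, (‖∑ m ∈ Ioc a b, c i m‖ * |f b|
        + ∑ m ∈ Ico a b, ‖∑ l ∈ Ioc a m, c i l‖ * |f (m + 1) - f m|) := by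
        refine sum_le_sum fun i _ => ?_
        rw [key i b hab]
        refine (norm_sub_le _ _).trans (add_le_add ?_ ((norm_sum_le _ _).trans
          (sum_le_sum fun m _ => ?_)))
        · rw [norm_mul, Complex.norm_real, Real.norm_eq_abs]
        · rw [norm_mul, Complex.norm_real, Real.norm_eq_abs]
    _ = (∑ i ∈ s, ‖∑ m ∈ Ioc a b, c i m‖) * |f b|
        + ∑ m ∈ Ico a b, (∑ i ∈ s, ‖∑ l ∈ Ioc a m, c i l‖) * |f (m + 1) - f m| := by
        rw [sum_add_distrib, sum_comm, sum_mul]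
        congr 1
        exact sum_congr rfl fun m _ => by rw [sum_mul]
    _ ≤ K * |f b| + ∑ m ∈ Ico a b, K * |f (m + 1) - f m| := by
        refine add_le_add (mul_le_mul_of_nonneg_right (hK b le_rfl) (abs_nonneg _))
          (sum_le_sum fun m hm => ?_)
        simp only [mem_Ico] at hm
        exact mul_le_mul_of_nonneg_right (hK m hm.2.le) (abs_nonneg _)
    _ = _ := by rw [mul_add, mul_sum]

/-- Mean value over a quasi-orthogonal family of the weighted sums over primes. -/
theorem QuasiOrth.mean_value_primes {ι : Type*} {s : Finset ι} {f : ι → ℕ → ℂ} {D : ℕ}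
    (h : QuasiOrth s f D) (hD : 2 ≤ D) (j N : ℕ) :
    ∑ i ∈ s, ‖∑ p ∈ Ioc (D ^ 24) N with p.Prime, f i p * (wt j p : ℂ)‖
      ≤ 24 * (j + 1) * gmax j * (1 + Real.log N) ^ 7 := by
  have hg := (gmax_pos j).le
  have hD0 : (0 : ℝ) < D := by positivity
  have hD2 : (2 : ℝ) ≤ D := by exact_mod_cast hD
  have h2Y : 3 ≤ D ^ 24 := by
    calc 3 ≤ 2 ^ 24 := by norm_num
      _ ≤ _ := Nat.pow_le_pow_left hD 24
  rcases lt_or_ge N (D ^ 24) with hN | hN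
  · rw [Ioc_eq_empty (by omega)]
    simp only [filter_empty, sum_empty, norm_zero, sum_const_zero]
    rcases Nat.eq_zero_or_pos N with rfl | h0
    · simp; positivity
    · have : 0 ≤ Real.log N := Real.log_nonneg (by exact_mod_cast h0)
      positivity
  have hlogN : 0 ≤ Real.log N := Real.log_natCast_nonneg _
  set ℓ := 1 + Real.log N with hℓ
  have hℓ1 : 1 ≤ ℓ := by linarith
  set c : ι → ℕ → ℂ := fun i m => f i m * ((if m.Prime then Real.log m / m else 0 : ℝ) : ℂ) with hc
  have hP : ∀ M ≤ N, ∑ i ∈ s, ‖∑ m ∈ Ioc (D ^ 24) M, c i m‖ ≤ 12 * ℓ ^ 6 := by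
    intro M hMN
    rcases lt_or_ge M 1 with hM | hM
    · rw [Ioc_eq_empty (by omega)]; simp; positivity
    have hlogM0 : 0 ≤ Real.log M := Real.log_natCast_nonneg _
    have hlogM : Real.log M ≤ Real.log N :=
      Real.log_le_log (by exact_mod_cast hM) (by exact_mod_cast hMN)
    have hpp := sum_properPow_div_le D (by omega) M hM
    have hb : ∀ i ∈ s, ‖∑ m ∈ Ioc (D ^ 24) M, c i m‖ ≤ ‖∑ m ∈ Ioc (D ^ 24) M, tw (f i) Λ m‖
        + 8 / (D : ℝ) ^ 6 * (2 + Real.log M) := by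
      intro i hi'
      have e : ∑ m ∈ Ioc (D ^ 24) M, c i m = ∑ m ∈ Ioc (D ^ 24) M, tw (f i) Λ m
          - ∑ m ∈ Ioc (D ^ 24) M, tw (f i) properPow m := by
        rw [← sum_sub_distrib]
        refine sum_congr rfl fun m _ => ?_
        simp only [hc, tw_apply, properPow_apply]
        split_ifs with hp
        · rw [vonMangoldt_apply_prime hp]; simp
        · simp
      rw [e]
      refine (norm_sub_le _ _).trans (add_le_add le_rfl (le_trans ?_ hpp))
      refine (norm_sum_le _ _).trans (sum_le_sum fun m _ => ?_)
      rw [tw_apply, norm_mul, Complex.norm_real, Real.norm_eq_abs,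
        abs_of_nonneg (div_nonneg (properPow_nonneg m) (by positivity))]
      exact mul_le_of_le_one_left (div_nonneg (properPow_nonneg m) (by positivity))
        (h.norm_le i hi' m)
    refine (sum_le_sum hb).trans ?_
    rw [sum_add_distrib, sum_const, nsmul_eq_mul]
    have h1 := h.mean_value hD M
    have h2 : (1 + Real.log M) ^ 6 ≤ ℓ ^ 6 := pow_le_pow_left₀ (by linarith) (by linarith) 6
    have h3 : (s.card : ℝ) * (8 / (D : ℝ) ^ 6 * (2 + Real.log M)) ≤ ℓ ^ 6 := by
      calc _ ≤ (D : ℝ) ^ 2 * (8 / (D : ℝ) ^ 6 * (2 * ℓ)) := by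
            have := h.card_le
            gcongr
            linarith
        _ = 16 / (D : ℝ) ^ 4 * ℓ := by field_simp; norm_num
        _ ≤ 1 * ℓ := by
            gcongr
            rw [div_le_one (by positivity)]
            calc (16 : ℝ) = 2 ^ 4 := by norm_num
              _ ≤ _ := pow_le_pow_left₀ (by norm_num) hD2 4
        _ ≤ ℓ ^ 6 := by rw [one_mul]; exact le_self_pow₀ hℓ1 (by norm_num)
    linarith
  have e : ∀ i, ∑ p ∈ Ioc (D ^ 24) N with p.Prime, f i p * (wt j p : ℂ)
      = ∑ m ∈ Ioc (D ^ 24) N, c i m * ((gw j (Real.log m) : ℝ) : ℂ) := by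
    intro i
    rw [sum_filter]
    refine sum_congr rfl fun m _ => ?_
    simp only [hc, wt]
    split_ifs
    · push_cast; ring
    · simp
  rw [sum_congr rfl fun i _ => by rw [e i]]
  refine (sum_norm_sum_mul_le s c (fun m => gw j (Real.log m)) _ _ _ hP hN).trans ?_
  have h1 : |gw j (Real.log N)| ≤ gmax j := by
    rw [abs_of_nonneg (gw_nonneg j hlogN)]; exact gw_le j hlogN
  have h2 : ∑ m ∈ Ico (D ^ 24) N, |gw j (Real.log (m + 1 : ℕ)) - gw j (Real.log m)|
      ≤ (j + 1) * gmax j * ℓ := by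
    calc _ ≤ ∑ m ∈ Ico (D ^ 24) N, (j + 1) * gmax j * (1 / m : ℝ) := by
          refine sum_le_sum fun m hm => gw_variation j ?_
          simp only [mem_Ico] at hm; omega
      _ ≤ ∑ m ∈ Ioc 0 N, (j + 1) * gmax j * (1 / m : ℝ) := by
          refine sum_le_sum_of_subset_of_nonneg (fun m hm => ?_) fun _ _ _ => by positivity
          simp only [mem_Ico, mem_Ioc] at hm ⊢; omega
      _ ≤ _ := by
          rw [← mul_sum]
          exact mul_le_mul_of_nonneg_left (sum_inv_le N) (by positivity)
  calc _ ≤ 12 * ℓ ^ 6 * (gmax j + (j + 1) * gmax j * ℓ) := by gcongr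
    _ ≤ 12 * ℓ ^ 6 * ((j + 1) * gmax j * ℓ + (j + 1) * gmax j * ℓ) := by
        gcongr
        calc gmax j = 1 * gmax j * 1 := by ring
          _ ≤ (j + 1) * gmax j * ℓ := by
              gcongr
              have : (0 : ℝ) ≤ j := by positivity
              linarith
    _ = _ := by ring

/-- Primitive Dirichlet characters of conductor in `[2, D]`. -/
noncomputable def primChars (D : ℕ) : Finset (Σ d : ℕ, DirichletCharacter ℂ d) := by
  classical
  exact (Icc 2 D).sigma fun d => univ.filter fun χ => χ.IsPrimitive

lemma mem_primChars {D : ℕ} {i : Σ d : ℕ, DirichletCharacter ℂ d} :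
    i ∈ primChars D ↔ 2 ≤ i.1 ∧ i.1 ≤ D ∧ i.2.IsPrimitive := by
  simp [primChars, and_assoc]

/-- A Dirichlet character, of any modulus, as a function on `ℕ`. -/
noncomputable def cv (i : Σ d : ℕ, DirichletCharacter ℂ d) (m : ℕ) : ℂ := i.2 (m : ZMod i.1)

lemma ne_one_of_mem_primChars {D : ℕ} {i : Σ d : ℕ, DirichletCharacter ℂ d} (hi : i ∈ primChars D) :
    i.2 ≠ 1 := by
  obtain ⟨h2, -, hp⟩ := mem_primChars.mp hi
  intro h
  have : NeZero i.1 := ⟨by omega⟩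
  rw [DirichletCharacter.isPrimitive_def, h, DirichletCharacter.conductor_one] at hp
  omega

lemma card_primChars_le (D : ℕ) : ((primChars D).card : ℝ) ≤ (D : ℝ) ^ 2 := by
  classical
  have : (primChars D).card ≤ D ^ 2 := by
    rw [primChars, card_sigma]
    calc _ ≤ ∑ d ∈ Icc 2 D, D := by
          refine sum_le_sum fun d hd => ?_
          simp only [mem_Icc] at hd
          have : NeZero d := ⟨by omega⟩
          have hc := DirichletCharacter.card_eq_totient_of_hasEnoughRootsOfUnity ℂ d
          rw [Nat.card_eq_fintype_card] at hc
          refine (card_filter_le _ _).trans ?_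
          rw [card_univ, hc]
          exact (Nat.totient_le d).trans hd.2
      _ ≤ D ^ 2 := by
          rw [sum_const, smul_eq_mul, Nat.card_Icc, sq]
          exact Nat.mul_le_mul_right _ (by omega)
  exact_mod_cast this

lemma quasiOrth_primChars (D : ℕ) : QuasiOrth (primChars D) cv D where
  norm_le i _ m := i.2.norm_le_one _
  map_mul i _ a b := by simp [cv]
  sum_le i hi a b := by
    obtain ⟨h2, hD, hp⟩ := mem_primChars.mp hi
    have : NeZero i.1 := ⟨by omega⟩
    refine (norm_sum_char_le i.2 (ne_one_of_mem_primChars hi) a b).trans ?_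
    exact_mod_cast hD
  pair_le i hi k hk hik a b := by
    obtain ⟨h2, hD, hp⟩ := mem_primChars.mp hi
    obtain ⟨h2', hD', hp'⟩ := mem_primChars.mp hk
    obtain ⟨θ, hθ, hθv⟩ := exists_pair_char (by omega) (by omega) i.2 k.2 hp hp' hik
    have : NeZero (i.1 * k.1) := ⟨by positivity⟩
    have := norm_sum_char_le θ hθ a b
    rw [sum_congr rfl fun m _ => hθv m] at this
    refine this.trans ?_
    rw [sq]
    exact_mod_cast Nat.mul_le_mul hD hD'
  card_le := card_primChars_le D

end SmallOmega

/-! ### Derivatives of `L(s, χ)` and of `L'/L` near `s = 1` -/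

namespace SmallOmega

open Finset ArithmeticFunction

lemma logMul_iterate_apply (f : ℕ → ℂ) (i n : ℕ) :
    LSeries.logMul^[i] f n = (Complex.log n) ^ i * f n := by
  induction i generalizing f with
  | zero => simp
  | succ i ih => rw [Function.iterate_succ_apply, ih, LSeries.logMul, pow_succ]; ring

lemma norm_LSeries_le_of_partial {f : ℕ → ℂ} {s : ℂ} (hs : LSeriesSummable f s) {C : ℝ}
    (h : ∀ N : ℕ, ‖∑ m ∈ Ioc 0 N, LSeries.term f s m‖ ≤ C) : ‖LSeries f s‖ ≤ C := by
  have h1 := (hs.LSeriesHasSum).tendsto_sum_nat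
  refine le_of_tendsto h1.norm (Filter.Eventually.of_forall fun N => ?_)
  rcases Nat.eq_zero_or_pos N with rfl | hN
  · have := h 0
    simpa using this
  · have e : range N = insert 0 (Ioc 0 (N - 1)) := by
      ext x; simp only [mem_range, mem_insert, mem_Ioc]; omega
    rw [e, sum_insert (by simp), LSeries.term_zero, zero_add]
    exact h _

lemma natCast_cpow_ofReal {m : ℕ} (hm : m ≠ 0) (σ : ℝ) :
    (m : ℂ) ^ (σ : ℂ) = ((Real.exp (σ * Real.log m) : ℝ) : ℂ) := by
  rw [Complex.cpow_def_of_ne_zero (by exact_mod_cast hm), ← Complex.natCast_log]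
  push_cast
  ring_nf

lemma term_logMul (f : ℕ → ℂ) (i : ℕ) (σ : ℝ) {m : ℕ} (hm : m ≠ 0) :
    LSeries.term (LSeries.logMul^[i] f) σ m
      = f m * ((Real.log m ^ i * Real.exp (-(σ * Real.log m)) : ℝ) : ℂ) := by
  rw [LSeries.term_of_ne_zero hm, logMul_iterate_apply, natCast_cpow_ofReal hm, Real.exp_neg,
    ← Complex.natCast_log]
  push_cast
  ring

lemma pow_le_factorial_mul_exp (i : ℕ) {v : ℝ} (hv : 0 ≤ v) :
    v ^ i ≤ 2 ^ i * i.factorial * Real.exp (v / 2) := by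
  have h := Real.pow_div_factorial_le_exp (v / 2) (by positivity) i
  rw [div_le_iff₀ (by positivity), div_pow, div_le_iff₀ (by positivity)] at h
  linarith

lemma pow_mul_exp_le_factorial (i : ℕ) {σ v : ℝ} (hσ : 1 ≤ σ) (hv : 0 ≤ v) :
    v ^ i * Real.exp (-(σ * v)) ≤ 2 ^ i * i.factorial * Real.exp (-(v / 2)) := by
  calc v ^ i * Real.exp (-(σ * v)) ≤ (2 ^ i * i.factorial * Real.exp (v / 2)) * Real.exp (-v) := by
        have := pow_le_factorial_mul_exp i hv
        gcongr
        nlinarith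
    _ = 2 ^ i * i.factorial * Real.exp (-(v / 2)) := by
        rw [mul_assoc, ← Real.exp_add]; congr 2; ring

lemma exp_neg_half_log {m : ℕ} (hm : 0 < m) :
    Real.exp (-(Real.log m / 2)) = 1 / Real.sqrt m := by
  have : (0 : ℝ) < m := by exact_mod_cast hm
  rw [Real.exp_neg, ← Real.log_sqrt this.le, Real.exp_log (Real.sqrt_pos.mpr this), one_div]

/-- Telescoping bound for `∑ m ^ (-3/2)`. -/
lemma sum_inv_sqrt_le {Q N : ℕ} (hQ : 0 < Q) (hN : Q ≤ N) :
    ∑ m ∈ Ico Q N, 1 / Real.sqrt m * (1 / m) ≤ 4 * (1 / Real.sqrt Q - 1 / Real.sqrt N) := by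
  induction N, hN using Nat.le_induction with
  | base => simp
  | succ N hN ih =>
    rw [sum_Ico_succ_top hN]
    have hN0 : (1 : ℝ) ≤ N := by exact_mod_cast (by omega : 1 ≤ N)
    suffices h : 1 / Real.sqrt N * (1 / N)
        ≤ 4 * (1 / Real.sqrt N - 1 / Real.sqrt ((N + 1 : ℕ) : ℝ)) by linarith
    set a := Real.sqrt N with ha
    set b := Real.sqrt ((N + 1 : ℕ) : ℝ) with hb
    have ha2 : a ^ 2 = N := Real.sq_sqrt (by linarith)
    have hb2 : b ^ 2 = N + 1 := by rw [hb, Real.sq_sqrt (by positivity)]; push_cast; ring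
    have ha0 : 0 < a := Real.sqrt_pos.mpr (by linarith)
    have hb0 : 0 < b := Real.sqrt_pos.mpr (by positivity)
    have hab : a ≤ b := by
      apply Real.sqrt_le_sqrt; push_cast; linarith
    have hd : (b - a) * (b + a) = 1 := by nlinarith
    rw [← ha2, div_sub_div _ _ ha0.ne' hb0.ne', one_div_mul_one_div, ← mul_div_assoc,
      div_le_div_iff₀ (by positivity) (by positivity)]
    have e : b - a = 1 / (b + a) := by field_simp; linarith
    rw [one_mul, one_mul, mul_one, e]
    rw [← mul_assoc, mul_one_div]
    have h2 : b * (b + a) ≤ 4 * a ^ 2 := by nlinarith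
    rw [show 4 / (b + a) * a = 4 * a / (b + a) by ring]
    rw [div_mul_eq_mul_div, le_div_iff₀ (by positivity)]
    nlinarith

/-- The constant governing the size of derivatives of `L(s, χ)` near `1`, for `χ` of modulus `q`. -/
noncomputable def Rq (q : ℕ) : ℝ := 2 * Real.log q + 4

lemma four_le_Rq (q : ℕ) : 4 ≤ Rq q := by
  have := Real.log_natCast_nonneg q
  rw [Rq]; linarith

/-- Partial sums of the series of the `i`-th derivative of `L(σ, χ)`: trivial bound for small `m`,
cancellation in character sums for large `m`. -/
lemma norm_partial_le {q : ℕ} [NeZero q] (hq : 2 ≤ q) (χ : DirichletCharacter ℂ q) (hχ : χ ≠ 1)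
    (i : ℕ) {σ : ℝ} (h1 : 1 ≤ σ) (h2 : σ ≤ 2) (N : ℕ) :
    ‖∑ m ∈ Ioc 0 N, χ m * ((Real.log m ^ i * Real.exp (-(σ * Real.log m)) : ℝ) : ℂ)‖
      ≤ 3 * i.factorial * Rq q ^ (i + 1) := by
  set F : ℕ → ℝ := fun m => Real.log m ^ i * Real.exp (-(σ * Real.log m)) with hF
  have hF0 : ∀ m, 0 ≤ F m := fun m =>
    mul_nonneg (pow_nonneg (Real.log_natCast_nonneg _) _) (Real.exp_pos _).le
  have hlq : 0 ≤ Real.log q := Real.log_natCast_nonneg q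
  set Q := q ^ 2 with hQ
  have hQ4 : 4 ≤ Q := by rw [hQ]; nlinarith
  have hlQ : Real.log Q = 2 * Real.log q := by rw [hQ]; push_cast; rw [Real.log_pow]; norm_num
  have hfac : (1 : ℝ) ≤ i.factorial := by exact_mod_cast Nat.factorial_pos i
  -- the range `m ≤ q ^ 2` is estimated trivially
  have head : ∀ M ≤ Q, ‖∑ m ∈ Ioc 0 M, χ m * (F m : ℂ)‖
      ≤ (1 + 2 * Real.log q) * (2 * Real.log q) ^ i := by
    intro M hM
    calc _ ≤ ∑ m ∈ Ioc 0 M, (2 * Real.log q) ^ i * (1 / m) := by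
          refine (norm_sum_le _ _).trans (sum_le_sum fun m hm => ?_)
          simp only [mem_Ioc] at hm
          have hm0 : (1 : ℝ) ≤ m := by exact_mod_cast hm.1
          rw [norm_mul, Complex.norm_real, Real.norm_of_nonneg (hF0 m)]
          have hl : Real.log m ≤ 2 * Real.log q := by
            rw [← hlQ]
            exact Real.log_le_log (by linarith) (by exact_mod_cast hm.2.trans hM)
          have hl0 : 0 ≤ Real.log m := Real.log_nonneg hm0
          have he : Real.exp (-(σ * Real.log m)) ≤ 1 / m := by
            calc _ ≤ Real.exp (-Real.log m) := by
                  apply Real.exp_le_exp.mpr; nlinarith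
              _ = 1 / m := by rw [Real.exp_neg, Real.exp_log (by linarith), one_div]
          calc _ ≤ 1 * F m := by
                exact mul_le_mul_of_nonneg_right (χ.norm_le_one _) (hF0 m)
            _ ≤ _ := by
                rw [one_mul, hF]
                dsimp only
                gcongr
      _ = (2 * Real.log q) ^ i * ∑ m ∈ Ioc 0 M, (1 / m : ℝ) := by rw [mul_sum]
      _ ≤ (2 * Real.log q) ^ i * (1 + 2 * Real.log q) := by
          gcongr
          refine (sum_inv_le M).trans ?_
          rw [← hlQ]
          rcases Nat.eq_zero_or_pos M with rfl | h
          · simp; exact Real.log_natCast_nonneg _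
          · gcongr
      _ = _ := by ring
  -- beyond `q ^ 2` partial summation is used
  have tail : ∀ M, Q ≤ M → ‖∑ m ∈ Ioc Q M, χ m * (F m : ℂ)‖ ≤ 9 * 4 ^ i * i.factorial := by
    intro M hM
    refine (norm_sum_mul_le_of_variation (fun m => χ m) F q Q M
      (fun N => norm_sum_char_le χ hχ Q N) hM).trans ?_
    have hq0 : (0 : ℝ) < q := by positivity
    have hsQ : Real.sqrt Q = q := by rw [hQ]; push_cast; exact Real.sqrt_sq hq0.le
    have hb : |F M| ≤ 2 ^ i * i.factorial * (1 / q) := by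
      rw [abs_of_nonneg (hF0 M)]
      refine (pow_mul_exp_le_factorial i h1 (Real.log_natCast_nonneg _)).trans ?_
      rw [exp_neg_half_log (by omega)]
      gcongr
      rw [← hsQ]
      apply Real.sqrt_le_sqrt
      exact_mod_cast hM
    have hs : ∑ m ∈ Ico Q M, |F (m + 1) - F m|
        ≤ (i + 2) * (2 ^ i * i.factorial) * (4 * (1 / q)) := by
      calc _ ≤ ∑ m ∈ Ico Q M, (i + 2) * (2 ^ i * i.factorial) * (1 / Real.sqrt m * (1 / m)) := by
            refine sum_le_sum fun m hm => ?_
            simp only [mem_Ico] at hm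
            have hm3 : (3 : ℝ) ≤ m := by exact_mod_cast (by omega : 3 ≤ m)
            have g1 : 1 ≤ Real.log m := by
              rw [Real.le_log_iff_exp_le (by linarith)]
              linarith [Real.exp_one_lt_d9]
            have g2 : Real.log m ≤ Real.log (m + 1 : ℕ) :=
              Real.log_le_log (by linarith) (by push_cast; linarith)
            have := abs_pow_mul_exp_sub_le i (by linarith : 0 ≤ σ) g1 g2
              (K := 2 ^ i * i.factorial * Real.exp (-(Real.log m / 2))) (fun v hv => by
                refine (pow_mul_exp_le_factorial i h1 (by linarith [hv.1])).trans ?_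
                have := hv.1
                gcongr)
            refine this.trans ?_
            have g3 := log_succ_sub_le (m := m) (by omega)
            rw [exp_neg_half_log (by omega)]
            have g4 : 0 ≤ Real.log (m + 1 : ℕ) - Real.log m := by linarith
            calc _ ≤ (i + 2) * (2 ^ i * i.factorial * (1 / Real.sqrt m)) * (1 / m) := by gcongr
              _ = _ := by ring
        _ = (i + 2) * (2 ^ i * i.factorial) * ∑ m ∈ Ico Q M, (1 / Real.sqrt m * (1 / m)) := by
            rw [mul_sum]
        _ ≤ _ := by
            gcongr
            refine (sum_inv_sqrt_le (by omega) hM).trans ?_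
            rw [hsQ]
            have : 0 ≤ 1 / Real.sqrt M := by positivity
            linarith
    have h9 : (4 * i + 9 : ℝ) ≤ 9 * 2 ^ i := by
      have : (i + 1 : ℝ) ≤ 2 ^ i := by
        exact_mod_cast Nat.lt_two_pow_self (n := i)
      linarith [(by positivity : (0:ℝ) ≤ i)]
    calc _ ≤ (q : ℝ) * (2 ^ i * i.factorial * (1 / q)
          + (i + 2) * (2 ^ i * i.factorial) * (4 * (1 / q))) := by gcongr
      _ = (4 * i + 9) * (2 ^ i * i.factorial) := by field_simp; ring
      _ ≤ 9 * 2 ^ i * (2 ^ i * i.factorial) := by gcongr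
      _ = 9 * 4 ^ i * i.factorial := by
          rw [show (4 : ℝ) ^ i = 2 ^ i * 2 ^ i by rw [← mul_pow]; norm_num]; ring
  have tot : ‖∑ m ∈ Ioc 0 N, χ m * (F m : ℂ)‖
      ≤ (1 + 2 * Real.log q) * (2 * Real.log q) ^ i + 9 * 4 ^ i * i.factorial := by
    rcases le_total N Q with h | h
    · exact (head N h).trans (by have : (0:ℝ) ≤ 9 * 4 ^ i * i.factorial := by positivity
                                 linarith)
    · have e : Ioc 0 N = (Ioc 0 Q).disjUnion (Ioc Q N) (Ioc_disjoint_Ioc_of_le le_rfl) := by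
        ext x; simp only [mem_disjUnion, mem_Ioc]; omega
      rw [e, sum_disjUnion]
      exact (norm_add_le _ _).trans (add_le_add (head Q le_rfl) (tail N h))
  refine tot.trans ?_
  have a1 : (2 * Real.log q) ^ i ≤ Rq q ^ i := by
    apply pow_le_pow_left₀ (by positivity); rw [Rq]; linarith
  have a2 : (4 : ℝ) ^ i ≤ Rq q ^ i := pow_le_pow_left₀ (by norm_num) (four_le_Rq q) i
  have hR := four_le_Rq q
  calc _ ≤ (1 + 2 * Real.log q) * (Rq q ^ i * i.factorial) + 9 * Rq q ^ i * i.factorial := by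
        gcongr
        exact a1.trans (le_mul_of_one_le_right (by positivity) hfac)
    _ = (Rq q ^ i * i.factorial) * (2 * Real.log q + 10) := by ring
    _ ≤ (Rq q ^ i * i.factorial) * (3 * Rq q) := by
        gcongr; rw [Rq]; linarith
    _ = _ := by ring

/-- `L(s, χ)` as a Dirichlet series. -/
noncomputable abbrev Ls {q : ℕ} (χ : DirichletCharacter ℂ q) : ℂ → ℂ :=
  LSeries (fun m : ℕ => χ (m : ZMod q))

/-- The Dirichlet series of `χ Λ`, which is `-L'/L`. -/
noncomputable abbrev Bs {q : ℕ} (χ : DirichletCharacter ℂ q) : ℂ → ℂ :=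
  LSeries ((fun m : ℕ => χ (m : ZMod q)) * fun m : ℕ => ((Λ m : ℝ) : ℂ))

lemma abscissa_char_lt {q : ℕ} (χ : DirichletCharacter ℂ q) {s : ℂ} (hs : 1 < s.re) :
    LSeries.abscissaOfAbsConv (fun m : ℕ => χ (m : ZMod q)) < s.re := by
  refine lt_of_le_of_lt (LSeries.abscissaOfAbsConv_le_of_forall_lt_LSeriesSummable' (x := 1)
    fun y hy => χ.LSeriesSummable_of_one_lt_re (by simpa using by exact_mod_cast hy)) ?_
  exact_mod_cast hs

lemma abscissa_Bs_lt {q : ℕ} (χ : DirichletCharacter ℂ q) {s : ℂ} (hs : 1 < s.re) :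
    LSeries.abscissaOfAbsConv ((fun m : ℕ => χ (m : ZMod q)) * fun m : ℕ => ((Λ m : ℝ) : ℂ))
      < s.re := by
  refine lt_of_le_of_lt (LSeries.abscissaOfAbsConv_le_of_forall_lt_LSeriesSummable' (x := 1)
    fun y hy => DirichletCharacter.LSeriesSummable_twist_vonMangoldt χ (by simpa using by exact_mod_cast hy)) ?_
  exact_mod_cast hs

lemma norm_iteratedDeriv_Ls_le {q : ℕ} [NeZero q] (hq : 2 ≤ q) (χ : DirichletCharacter ℂ q)
    (hχ : χ ≠ 1) (i : ℕ) {σ : ℝ} (h1 : 1 < σ) (h2 : σ ≤ 2) :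
    ‖iteratedDeriv i (Ls χ) σ‖ ≤ 3 * i.factorial * Rq q ^ (i + 1) := by
  have hs := abscissa_char_lt χ (s := σ) (by simpa using h1)
  rw [LSeries_iteratedDeriv i hs, norm_mul, norm_pow, norm_neg, norm_one, one_pow, one_mul]
  refine norm_LSeries_le_of_partial (LSeriesSummable_of_abscissaOfAbsConv_lt_re
    (by rwa [LSeries.absicssaOfAbsConv_logPowMul])) fun N => ?_
  rw [sum_congr rfl fun m hm => term_logMul _ i σ (by simp only [mem_Ioc] at hm; omega)]
  exact norm_partial_le hq χ hχ i h1.le h2 N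

/-- Leibniz' rule applied to `L' = (L'/L) L`. -/
lemma leibniz {q : ℕ} (χ : DirichletCharacter ℂ q) (i : ℕ) {s : ℂ} (hs : 1 < s.re) :
    iteratedDeriv (i + 1) (Ls χ) s = -∑ k ∈ range (i + 1),
      i.choose k * iteratedDeriv k (Bs χ) s * iteratedDeriv (i - k) (Ls χ) s := by
  have hopen : IsOpen {s : ℂ | 1 < s.re} := isOpen_lt continuous_const Complex.continuous_re
  have ha : AnalyticAt ℂ (Ls χ) s := LSeries_analyticOnNhd _ s (abscissa_char_lt χ hs)
  have hb : AnalyticAt ℂ (Bs χ) s := LSeries_analyticOnNhd _ s (abscissa_Bs_lt χ hs)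
  have he : deriv (Ls χ) =ᶠ[nhds s] -(Bs χ * Ls χ) := by
    filter_upwards [hopen.mem_nhds hs] with w hw
    rw [Pi.neg_apply, Pi.mul_apply, Bs, DirichletCharacter.LSeries_twist_vonMangoldt_eq χ hw,
      div_mul_cancel₀ _ (DirichletCharacter.LSeries_ne_zero_of_one_lt_re χ hw), neg_neg]
  rw [iteratedDeriv_succ', he.iteratedDeriv_eq, iteratedDeriv_neg,
    iteratedDeriv_mul hb.contDiffAt ha.contDiffAt]

/-- A lower bound for `|L(σ, χ)|` controls all derivatives of `L'/L` at `σ`. -/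
lemma norm_iteratedDeriv_Bs_le {q : ℕ} [NeZero q] (hq : 2 ≤ q) (χ : DirichletCharacter ℂ q)
    (hχ : χ ≠ 1) {σ : ℝ} (h1 : 1 < σ) (h2 : σ ≤ 2) {b : ℝ} (hb0 : 0 < b) (hb1 : b ≤ 1)
    (hL : b ≤ ‖Ls χ σ‖) (i : ℕ) :
    ‖iteratedDeriv i (Bs χ) σ‖ ≤ i.factorial * (7 * Rq q ^ 2 / b) ^ (i + 1) := by
  set R := Rq q with hR
  have hR4 : 4 ≤ R := four_le_Rq q
  set c : ℝ := 7 * R / b with hc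
  have hcb : c * b = 7 * R := by rw [hc]; field_simp
  have hc4 : 4 ≤ c := by rw [hc, le_div_iff₀ hb0]; nlinarith
  have hcR : 7 * R ^ 2 / b = c * R := by rw [hc]; ring
  rw [hcR]
  induction i using Nat.strong_induction_on with
  | _ i ih =>
  have hle := leibniz χ i (s := σ) (by simpa using h1)
  rw [sum_range_succ] at hle
  simp only [Nat.choose_self, Nat.cast_one, one_mul, Nat.sub_self, iteratedDeriv_zero] at hle
  have e : iteratedDeriv i (Bs χ) σ * Ls χ σ = -iteratedDeriv (i + 1) (Ls χ) σ
      - ∑ k ∈ range i, i.choose k * iteratedDeriv k (Bs χ) σ * iteratedDeriv (i - k) (Ls χ) σ := by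
    rw [hle]; ring
  have hsum : ‖∑ k ∈ range i,
        i.choose k * iteratedDeriv k (Bs χ) σ * iteratedDeriv (i - k) (Ls χ) σ‖
      ≤ i.factorial * (4 * R ^ (i + 2) * c ^ i) := by
    calc _ ≤ ∑ k ∈ range i, i.factorial * (3 * R ^ (i + 2)) * c ^ (k + 1) := by
          refine (norm_sum_le _ _).trans (sum_le_sum fun k hk => ?_)
          simp only [mem_range] at hk
          rw [norm_mul, norm_mul, Complex.norm_natCast]
          have u1 := ih k hk
          have u2 := norm_iteratedDeriv_Ls_le hq χ hχ (i - k) h1 h2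
          rw [← hR] at u2
          have u3 : (i.choose k : ℝ) * k.factorial * (i - k).factorial = i.factorial := by
            exact_mod_cast Nat.choose_mul_factorial_mul_factorial hk.le
          calc _ ≤ i.choose k * (k.factorial * (c * R) ^ (k + 1))
                * (3 * (i - k).factorial * R ^ (i - k + 1)) := by gcongr
            _ = (i.choose k * k.factorial * (i - k).factorial)
                * (3 * (R ^ (k + 1) * R ^ (i - k + 1))) * c ^ (k + 1) := by
                rw [mul_pow]; ring
            _ = _ := by
                rw [u3, ← pow_add, show k + 1 + (i - k + 1) = i + 2 by omega]
      _ = i.factorial * (R ^ (i + 2) * (3 * ∑ k ∈ range i, c ^ (k + 1))) := by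
          rw [← mul_sum]; ring
      _ ≤ _ := by
          have : 3 * ∑ k ∈ range i, c ^ (k + 1) ≤ 4 * c ^ i := by
            have : ∀ n : ℕ, 3 * ∑ k ∈ range n, c ^ (k + 1) ≤ 4 * c ^ n := by
              intro n
              induction n with
              | zero => simp
              | succ n ihn =>
                rw [sum_range_succ, mul_add]
                have : 0 ≤ c ^ n := by positivity
                rw [pow_succ]
                nlinarith
            exact this i
          calc _ ≤ (i.factorial : ℝ) * (R ^ (i + 2) * (4 * c ^ i)) := by gcongr
            _ = _ := by ring
  have hfirst := norm_iteratedDeriv_Ls_le hq χ hχ (i + 1) h1 h2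
  rw [← hR] at hfirst
  have hci : (i + 1 : ℝ) ≤ c ^ i := by
    calc (i + 1 : ℝ) ≤ 2 ^ i := by exact_mod_cast Nat.lt_two_pow_self (n := i)
      _ ≤ c ^ i := pow_le_pow_left₀ (by norm_num) (by linarith) i
  have hmain : ‖iteratedDeriv i (Bs χ) σ‖ * b ≤ i.factorial * (c * R) ^ (i + 1) * b := by
    calc _ ≤ ‖iteratedDeriv i (Bs χ) σ‖ * ‖Ls χ σ‖ := by gcongr
      _ = ‖-iteratedDeriv (i + 1) (Ls χ) σ - ∑ k ∈ range i,
            i.choose k * iteratedDeriv k (Bs χ) σ * iteratedDeriv (i - k) (Ls χ) σ‖ := by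
          rw [← norm_mul, e]
      _ ≤ 3 * (i + 1).factorial * R ^ (i + 1 + 1) + i.factorial * (4 * R ^ (i + 2) * c ^ i) := by
          refine (norm_sub_le _ _).trans ?_
          rw [norm_neg]
          exact add_le_add hfirst hsum
      _ = i.factorial * R ^ (i + 2) * (3 * (i + 1) + 4 * c ^ i) := by
          rw [Nat.factorial_succ]; push_cast; ring
      _ ≤ i.factorial * R ^ (i + 2) * (3 * c ^ i + 4 * c ^ i) := by gcongr
      _ = i.factorial * (c ^ i * R ^ (i + 1) * (7 * R)) := by ring
      _ = _ := by rw [← hcb, mul_pow]; ring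
  exact le_of_mul_le_mul_right hmain hb0

end SmallOmega

/-! ### Repulsion and good scales -/

namespace SmallOmega

open Finset ArithmeticFunction Filter

lemma summable_inv_rpow {s : ℝ} (hs : 1 < s) : Summable fun n : ℕ => 1 / (n + 1 : ℝ) ^ s := by
  have := (summable_nat_add_iff 1).mpr (Real.summable_one_div_nat_rpow.mpr hs)
  exact_mod_cast this

lemma tsum_inv_rpow_le {s : ℝ} (hs : 1 < s) :
    ∑' n : ℕ, 1 / (n + 1 : ℝ) ^ s ≤ 1 + 1 / (s - 1) := by
  have h := ZetaAsymptotics.zeta_limit_aux1 hs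
  have h2 : 0 ≤ ZetaAsymptotics.termTSum s := tsum_nonneg fun n => ZetaAsymptotics.term_nonneg _ s
  nlinarith

lemma norm_zeta_le {s : ℝ} (hs : 1 < s) : ‖riemannZeta s‖ ≤ 1 + 1 / (s - 1) := by
  rw [zeta_eq_tsum_one_div_nat_add_one_cpow (by simpa using hs)]
  have e : ∀ n : ℕ, (1 / ((n : ℂ) + 1) ^ (s : ℂ)) = ((1 / (n + 1 : ℝ) ^ s : ℝ) : ℂ) := by
    intro n
    rw [Complex.ofReal_div, Complex.ofReal_cpow (by positivity)]
    push_cast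
    rfl
  rw [tsum_congr e, ← Complex.ofReal_tsum, Complex.norm_real,
    Real.norm_of_nonneg (tsum_nonneg fun n => by positivity)]
  exact tsum_inv_rpow_le hs

/-- The finite form of the bound `ζ(1 + ε) ≤ 1 + 1 / ε`. -/
lemma sum_exp_log_le {ε : ℝ} (hε : 0 < ε) (a N : ℕ) :
    ∑ m ∈ Ioc a N, 1 / m * Real.exp (-(ε * Real.log m)) ≤ 1 + 1 / ε := by
  calc _ ≤ ∑ m ∈ Ioc 0 N, 1 / m * Real.exp (-(ε * Real.log m)) :=
        sum_le_sum_of_subset_of_nonneg (Ioc_subset_Ioc_left (Nat.zero_le _))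
          fun m _ _ => by positivity
    _ = ∑ m ∈ range N, 1 / (m + 1 : ℝ) ^ (1 + ε) := by
        have h := sum_Ico_add' (fun m : ℕ => 1 / (m : ℝ) ^ (1 + ε)) 0 N 1
        rw [range_eq_Ico]
        push_cast at h
        rw [h]
        refine sum_congr (by ext; simp; omega) fun m hm => ?_
        have hm := (mem_Ioc.mp hm)
        have hm0 : (0 : ℝ) < m := by exact_mod_cast (by omega : 0 < m)
        rw [Real.rpow_add hm0, Real.rpow_one, Real.rpow_def_of_pos hm0, Real.exp_neg,
          mul_comm ε]
        field_simp
    _ ≤ ∑' n : ℕ, 1 / (n + 1 : ℝ) ^ (1 + ε) :=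
        (summable_inv_rpow (by linarith)).sum_le_tsum _ fun n _ => by positivity
    _ ≤ _ := by simpa using tsum_inv_rpow_le (s := 1 + ε) (by linarith)

/-- The Dirichlet series `∑ χ(n) Λ(n) / log n n^{-σ}`, a logarithm of `L(σ, χ)`. -/
lemma logSeries_hasSum_re {q : ℕ} (χ : DirichletCharacter ℂ q) {σ : ℝ} (hσ : 1 < σ) :
    HasSum (fun n : ℕ => (χ n).re * (Λ n / Real.log n * Real.exp (-(σ * Real.log n))))
      (LSeries (fun n : ℕ => χ n * (Λ n : ℝ) / (Real.log n : ℝ)) σ).re := by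
  have hs : LSeriesSummable (fun n : ℕ => χ n * (Λ n : ℝ) / (Real.log n : ℝ)) (σ : ℂ) := by
    refine LSeriesSummable_of_bounded_of_one_lt_real (m := 1) (fun n hn => ?_) hσ
    rw [mul_div_assoc, norm_mul, ← Complex.ofReal_div, Complex.norm_real]
    have h1 : ‖Λ n / Real.log n‖ ≤ 1 := by
      rw [Real.norm_of_nonneg (div_nonneg vonMangoldt_nonneg (Real.log_natCast_nonneg _))]
      exact div_le_one_of_le₀ vonMangoldt_le_log (Real.log_natCast_nonneg _)
    exact mul_le_one₀ (χ.norm_le_one _) (norm_nonneg _) h1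
  have h := Complex.hasSum_re hs.LSeriesHasSum
  convert h using 1
  ext n
  rcases eq_or_ne n 0 with rfl | hn
  · simp
  · rw [LSeries.term_of_ne_zero hn, natCast_cpow_ofReal hn, mul_div_assoc, mul_div_assoc,
      ← Complex.ofReal_div, ← Complex.ofReal_div, Complex.re_mul_ofReal, Real.exp_neg]
    ring

lemma norm_Ls_eq {q : ℕ} (χ : DirichletCharacter ℂ q) {σ : ℝ} (hσ : 1 < σ) :
    ‖Ls χ σ‖ = Real.exp (LSeries (fun n : ℕ => χ n * (Λ n : ℝ) / (Real.log n : ℝ)) σ).re := by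
  rw [Ls, ← DirichletCharacter.LSeries_eq_exp_LSeries χ (s := σ) (by simpa using hσ),
    Complex.norm_exp]

/-- Repulsion of small values of `L(σ, χ)`, `L(σ, ψ)`: it rests on the pointwise inequality
`3 + 2 Re χ + 2 Re ψ + 2 Re (χ ψ̄) ≥ |1 + χ + ψ|² ≥ 0`. -/
lemma repulsion {d e N : ℕ} (χ : DirichletCharacter ℂ d) (ψ : DirichletCharacter ℂ e)
    (θ : DirichletCharacter ℂ N)
    (h : ∀ m : ℕ, θ (m : ZMod N) = χ (m : ZMod d) * (starRingEnd ℂ) (ψ (m : ZMod e)))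
    {σ : ℝ} (hσ : 1 < σ) :
    1 ≤ ‖riemannZeta σ‖ ^ 3 * ‖Ls χ σ‖ ^ 2 * ‖Ls ψ σ‖ ^ 2 * ‖Ls θ σ‖ ^ 2 := by
  have hz : ‖riemannZeta σ‖ = ‖Ls (1 : DirichletCharacter ℂ 1) σ‖ := by
    rw [Ls, ← LSeries_one_eq_riemannZeta (by simpa using hσ)]
    congr 2
    ext m
    simp [MulChar.one_apply (isUnit_of_subsingleton _)]
  rw [hz, norm_Ls_eq _ hσ, norm_Ls_eq χ hσ, norm_Ls_eq ψ hσ, norm_Ls_eq θ hσ, ← Real.exp_nat_mul,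
    ← Real.exp_nat_mul, ← Real.exp_nat_mul, ← Real.exp_nat_mul, ← Real.exp_add, ← Real.exp_add,
    ← Real.exp_add, Real.one_le_exp_iff]
  have hsum := (((logSeries_hasSum_re (1 : DirichletCharacter ℂ 1) hσ).mul_left 3).add
    ((logSeries_hasSum_re χ hσ).mul_left 2)).add (((logSeries_hasSum_re ψ hσ).mul_left 2).add
    ((logSeries_hasSum_re θ hσ).mul_left 2))
  have := hsum.nonneg fun n => ?_
  · simp only [Nat.cast_ofNat]; linarith
  · have h1 : ((1 : DirichletCharacter ℂ 1) (n : ZMod 1)).re = 1 := by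
      simp [MulChar.one_apply (isUnit_of_subsingleton _)]
    rw [h1, h n]
    set a := χ (n : ZMod d)
    set b := ψ (n : ZMod e)
    set w := Λ n / Real.log n * Real.exp (-(σ * Real.log n)) with hw
    have hw0 : 0 ≤ w := mul_nonneg
      (div_nonneg vonMangoldt_nonneg (Real.log_natCast_nonneg _)) (Real.exp_pos _).le
    have ha : a.re ^ 2 + a.im ^ 2 ≤ 1 := by
      have := χ.norm_le_one (n : ZMod d)
      have e := Complex.sq_norm a
      rw [Complex.normSq_apply] at e
      nlinarith [norm_nonneg a]
    have hb : b.re ^ 2 + b.im ^ 2 ≤ 1 := by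
      have := ψ.norm_le_one (n : ZMod e)
      have e := Complex.sq_norm b
      rw [Complex.normSq_apply] at e
      nlinarith [norm_nonneg b]
    have e : (a * (starRingEnd ℂ) b).re = a.re * b.re + a.im * b.im := by simp
    rw [e]
    have : 0 ≤ 3 + 2 * a.re + (2 * b.re + 2 * (a.re * b.re + a.im * b.im)) := by
      nlinarith [sq_nonneg (1 + a.re + b.re), sq_nonneg (a.im + b.im)]
    nlinarith

lemma eventually_poly_le_exp (C : ℝ) (k : ℕ) {c : ℝ} (hc : 0 < c) :
    ∀ᶠ j : ℕ in atTop, C * ((j : ℝ) + 1) ^ k ≤ Real.exp (c * j) := by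
  have h1 : Tendsto (fun x : ℝ => Real.exp (c * x) / x ^ k) atTop atTop := by
    simpa using tendsto_exp_mul_div_rpow_atTop (k : ℝ) c hc
  have h2 : Tendsto (fun j : ℕ => (j : ℝ) + 1) atTop atTop :=
    tendsto_atTop_add_const_right _ _ tendsto_natCast_atTop_atTop
  filter_upwards [(h1.comp h2).eventually_ge_atTop (C * Real.exp c)] with j hj
  simp only [Function.comp] at hj
  rw [le_div_iff₀ (by positivity), mul_add, Real.exp_add, mul_one] at hj
  have := Real.exp_pos c
  refine le_of_mul_le_mul_right ?_ this
  linarith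

lemma norm_Ls_le {q : ℕ} [NeZero q] (hq : 2 ≤ q) (χ : DirichletCharacter ℂ q) (hχ : χ ≠ 1)
    {σ : ℝ} (h1 : 1 < σ) (h2 : σ ≤ 2) : ‖Ls χ σ‖ ≤ 3 * Rq q := by
  have := norm_iteratedDeriv_Ls_le hq χ hχ 0 h1 h2
  rw [iteratedDeriv_zero] at this
  simpa using this

lemma norm_Ls_sub_le {q : ℕ} [NeZero q] (hq : 2 ≤ q) (χ : DirichletCharacter ℂ q) (hχ : χ ≠ 1)
    {a b : ℝ} (ha : 1 < a) (hab : a ≤ b) (hb : b ≤ 2) :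
    ‖Ls χ b - Ls χ a‖ ≤ 3 * Rq q ^ 2 * (b - a) := by
  have hd : ∀ x ∈ Set.Icc a b, HasDerivWithinAt (fun x : ℝ => Ls χ x) (deriv (Ls χ) x)
      (Set.Icc a b) x := by
    intro x hx
    have h := (LSeries_hasDerivAt (abscissa_char_lt χ (s := x)
      (by simpa using lt_of_lt_of_le ha hx.1)))
    exact (h.deriv ▸ h).comp_ofReal.hasDerivWithinAt
  have hbd : ∀ x ∈ Set.Icc a b, ‖deriv (Ls χ) x‖ ≤ 3 * Rq q ^ 2 := by
    intro x hx
    have := norm_iteratedDeriv_Ls_le hq χ hχ 1 (lt_of_lt_of_le ha hx.1) (hx.2.trans hb)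
    rw [iteratedDeriv_one] at this
    simpa using this
  have := (convex_Icc a b).norm_image_sub_le_of_norm_hasDerivWithin_le hd hbd
    (Set.left_mem_Icc.mpr hab) (Set.right_mem_Icc.mpr hab)
  rwa [Real.norm_of_nonneg (by linarith : 0 ≤ b - a)] at this

lemma primitive_ne_one {q : ℕ} [NeZero q] (hq : 2 ≤ q) {χ : DirichletCharacter ℂ q}
    (hp : χ.IsPrimitive) : χ ≠ 1 := by
  intro h
  rw [DirichletCharacter.isPrimitive_def, h, DirichletCharacter.conductor_one] at hp
  omega

set_option maxHeartbeats 1000000 in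
/-- There are arbitrarily large scales `j` at which no primitive character of conductor at most
`e ^ (A j)` has an exceptionally small value `L(1 + e ^ (-j), χ)`. A character that is exceptional at
some scale ceases to be so at a first later scale, where its value is still small enough
to repel all other characters. -/
theorem exists_good_scale (A J : ℕ) : ∃ j ≥ J, ∀ q : ℕ, 2 ≤ q → Real.log q ≤ A * j →
    ∀ χ : DirichletCharacter ℂ q, χ.IsPrimitive →
      Real.exp (-(4 / 5 * j)) ≤ ‖Ls χ ((1 + Real.exp (-j) : ℝ) : ℂ)‖ := by
  obtain ⟨J₀, hJ₀⟩ := eventually_atTop.mp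
    (eventually_poly_le_exp (2000 * (4 * A + 4) ^ 2) 2 (by norm_num : (0 : ℝ) < 1 / 5))
  by_contra! hcon
  obtain ⟨q, hq, hqA, χ, hχ, hbad⟩ := hcon (max J J₀) (le_max_left _ _)
  have : NeZero q := ⟨by omega⟩
  have hχ1 := primitive_ne_one hq hχ
  -- some larger scale is not exceptional for `χ`, since `L(1, χ) ≠ 0`
  have hex : ∃ j, max J J₀ < j ∧
      Real.exp (-(4 / 5 * j)) ≤ ‖Ls χ ((1 + Real.exp (-j) : ℝ) : ℂ)‖ := by
    have t1 : Tendsto (fun j : ℕ => Real.exp (-(j : ℝ))) atTop (nhds 0) :=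
      Real.tendsto_exp_neg_atTop_nhds_zero.comp tendsto_natCast_atTop_atTop
    have t1' : Tendsto (fun j : ℕ => ((1 + Real.exp (-(j : ℝ)) : ℝ) : ℂ)) atTop (nhds 1) := by
      have : Tendsto (fun j : ℕ => 1 + Real.exp (-(j : ℝ))) atTop (nhds 1) := by
        simpa using t1.const_add 1
      exact (Complex.continuous_ofReal.tendsto 1).comp this
    have t2 : Tendsto (fun j : ℕ => Real.exp (-(4 / 5 * (j : ℝ)))) atTop (nhds 0) :=
      Real.tendsto_exp_neg_atTop_nhds_zero.comp
        (tendsto_natCast_atTop_atTop.const_mul_atTop (by norm_num))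
    have t3 : Tendsto (fun j : ℕ => ‖DirichletCharacter.LFunction χ
        ((1 + Real.exp (-(j : ℝ)) : ℝ) : ℂ)‖) atTop (nhds ‖DirichletCharacter.LFunction χ 1‖) :=
      (((DirichletCharacter.differentiable_LFunction hχ1).continuous.tendsto 1).comp t1').norm
    have hpos : 0 < ‖DirichletCharacter.LFunction χ 1‖ :=
      norm_pos_iff.mpr (DirichletCharacter.LFunction_apply_one_ne_zero hχ1)
    have := (t2.eventually_lt t3 hpos).and (eventually_gt_atTop (max J J₀))
    obtain ⟨j, hj1, hj2⟩ := this.exists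
    refine ⟨j, hj2, ?_⟩
    rw [DirichletCharacter.LFunction_eq_LSeries χ
      (by rw [Complex.ofReal_re]; linarith [Real.exp_pos (-(j : ℝ))])] at hj1
    exact hj1.le
  classical
  obtain ⟨j, ⟨hj1, hj2⟩, hjmin⟩ : ∃ j, (max J J₀ < j ∧
      Real.exp (-(4 / 5 * j)) ≤ ‖Ls χ ((1 + Real.exp (-j) : ℝ) : ℂ)‖) ∧ ∀ k < j,
      ¬ (max J J₀ < k ∧ Real.exp (-(4 / 5 * k)) ≤ ‖Ls χ ((1 + Real.exp (-k) : ℝ) : ℂ)‖) :=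
    ⟨Nat.find hex, Nat.find_spec hex, fun k hk => Nat.find_min hex hk⟩
  have hJ : J₀ ≤ j := by omega
  obtain ⟨i, rfl⟩ : ∃ i, j = i + 1 := ⟨j - 1, by omega⟩
  have hprev : ‖Ls χ ((1 + Real.exp (-i) : ℝ) : ℂ)‖ < Real.exp (-(4 / 5 * i)) := by
    rcases eq_or_lt_of_le (Nat.lt_succ_iff.mp hj1) with h | h
    · rw [← h]; exact hbad
    · by_contra! h'
      exact hjmin i (by omega) ⟨h, h'⟩
  obtain ⟨q', hq', hqA', ψ, hψ, hbad'⟩ := hcon (i + 1) (by omega)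
  have : NeZero q' := ⟨by omega⟩
  have hne : (⟨q, χ⟩ : Σ d : ℕ, DirichletCharacter ℂ d) ≠ ⟨q', ψ⟩ := by
    rintro h
    cases h
    exact absurd hj2 (not_le.mpr hbad')
  obtain ⟨θ, hθ, hθv⟩ := exists_pair_char (by omega) (by omega) χ ψ hχ hψ hne
  have : NeZero (q * q') := ⟨by positivity⟩
  set y : ℝ := ((i + 1 : ℕ) : ℝ) with hy
  set σ : ℝ := 1 + Real.exp (-y) with hσ
  have hy1 : 1 ≤ y := by rw [hy]; push_cast; linarith [(by positivity : (0 : ℝ) ≤ i)]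
  have hey : 0 < Real.exp (-y) := Real.exp_pos _
  have hσ1 : 1 < σ := by linarith
  have hσ2 : σ ≤ 2 := by
    have : Real.exp (-y) ≤ 1 := by rw [Real.exp_le_one_iff]; linarith
    linarith
  have hbig := hJ₀ (i + 1) hJ
  rw [← hy] at hbig
  have hqAy : Real.log q ≤ A * y := hqA.trans (by
    gcongr
    rw [hy]
    exact_mod_cast hj1.le)
  have hApos : (0 : ℝ) ≤ A := by positivity
  set Z := Real.exp (1 / 5 * y) with hZ
  have hZ0 : 0 < Z := Real.exp_pos _
  have hRq : Rq q ≤ (4 * A + 4) * (y + 1) := by rw [Rq]; nlinarith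
  have hRqq : Rq (q * q') ≤ (4 * A + 4) * (y + 1) := by
    rw [Rq]
    push_cast
    rw [Real.log_mul (by positivity) (by positivity)]
    nlinarith
  set P := (4 * A + 4) * (y + 1) with hP
  have hPZ : 2000 * P ^ 2 ≤ Z := by rw [hP]; nlinarith
  have hP0 : 0 < P := by rw [hP]; positivity
  have e1 : Real.exp (-y) = (Z ^ 5)⁻¹ := by
    rw [hZ, ← Real.exp_nat_mul, ← Real.exp_neg]; congr 1; push_cast; ring
  have e2 : Real.exp (-(4 / 5 * y)) = (Z ^ 4)⁻¹ := by
    rw [hZ, ← Real.exp_nat_mul, ← Real.exp_neg]; congr 1; push_cast; ring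
  have hyi : y = i + 1 := by rw [hy]; push_cast; ring
  have e3 : Real.exp (-(i : ℝ)) = Real.exp 1 * (Z ^ 5)⁻¹ := by
    rw [← e1, ← Real.exp_add]; congr 1; rw [hyi]; ring
  have e4 : Real.exp (-(4 / 5 * (i : ℝ))) ≤ 3 * (Z ^ 4)⁻¹ := by
    calc Real.exp (-(4 / 5 * (i : ℝ))) = Real.exp (4 / 5) * (Z ^ 4)⁻¹ := by
          rw [← e2, ← Real.exp_add]; congr 1; rw [hyi]; ring
      _ ≤ 3 * (Z ^ 4)⁻¹ := by
          gcongr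
          calc Real.exp (4 / 5) ≤ Real.exp 1 := Real.exp_le_exp.mpr (by norm_num)
            _ ≤ 3 := by linarith [Real.exp_one_lt_d9]
  -- the value of `χ` at the new scale is still small
  have hsmall : ‖Ls χ σ‖ ≤ 4 * (Z ^ 4)⁻¹ := by
    have hi1 : (1 + Real.exp (-(i : ℝ))) ≤ 2 := by
      have : Real.exp (-(i : ℝ)) ≤ 1 := by rw [Real.exp_le_one_iff]; simp
      linarith
    have hle : σ ≤ 1 + Real.exp (-(i : ℝ)) := by
      rw [hσ]
      gcongr
      rw [hyi]; linarith
    have hlip := norm_Ls_sub_le hq χ hχ1 hσ1 hle hi1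
    have h3 : ‖Ls χ σ‖ ≤ ‖Ls χ ((1 + Real.exp (-(i : ℝ)) : ℝ) : ℂ)‖
        + ‖Ls χ ((1 + Real.exp (-(i : ℝ)) : ℝ) : ℂ) - Ls χ σ‖ := by
      rw [norm_sub_rev]
      simpa using norm_add_le (Ls χ ((1 + Real.exp (-(i : ℝ)) : ℝ) : ℂ))
        (Ls χ σ - Ls χ ((1 + Real.exp (-(i : ℝ)) : ℝ) : ℂ))
    have hR4 := four_le_Rq q
    have h4 : 3 * Rq q ^ 2 * (1 + Real.exp (-(i : ℝ)) - σ) ≤ (Z ^ 4)⁻¹ := by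
      calc _ ≤ 3 * P ^ 2 * (3 * (Z ^ 5)⁻¹) := by
            have : 1 + Real.exp (-(i : ℝ)) - σ ≤ 3 * (Z ^ 5)⁻¹ := by
              rw [hσ, e3]
              have : Real.exp 1 * (Z ^ 5)⁻¹ ≤ 3 * (Z ^ 5)⁻¹ := by
                gcongr
                linarith [Real.exp_one_lt_d9]
              linarith
            have h0 : 0 ≤ 1 + Real.exp (-(i : ℝ)) - σ := by linarith
            gcongr
        _ ≤ Z * (Z ^ 5)⁻¹ := by
            have : 0 < (Z ^ 5)⁻¹ := by positivity
            nlinarith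
        _ = (Z ^ 4)⁻¹ := by field_simp
    linarith
  have hψs : ‖Ls ψ σ‖ ≤ (Z ^ 4)⁻¹ := by rw [← e2]; exact hbad'.le
  have hθs : ‖Ls θ σ‖ ≤ 3 * P := by
    have := norm_Ls_le (by nlinarith : 2 ≤ q * q') θ hθ hσ1 hσ2
    linarith
  have hZ1 : 1 ≤ Z := by rw [hZ, Real.one_le_exp_iff]; linarith
  have hζ : ‖riemannZeta σ‖ ≤ 2 * Z ^ 5 := by
    have := norm_zeta_le hσ1
    rw [hσ, add_sub_cancel_left, e1] at this
    have h1 : 1 ≤ Z ^ 5 := one_le_pow₀ hZ1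
    rw [one_div, inv_inv] at this
    rw [hσ, e1]
    linarith
  have hrep := repulsion χ ψ θ hθv hσ1
  have hle : ‖riemannZeta σ‖ ^ 3 * ‖Ls χ σ‖ ^ 2 * ‖Ls ψ σ‖ ^ 2 * ‖Ls θ σ‖ ^ 2
      ≤ (2 * Z ^ 5) ^ 3 * (4 * (Z ^ 4)⁻¹) ^ 2 * ((Z ^ 4)⁻¹) ^ 2 * (3 * P) ^ 2 := by gcongr
  have hfin : (2 * Z ^ 5) ^ 3 * (4 * (Z ^ 4)⁻¹) ^ 2 * ((Z ^ 4)⁻¹) ^ 2 * (3 * P) ^ 2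
      = 1152 * P ^ 2 / Z := by field_simp; ring
  rw [hfin] at hle
  have : 1152 * P ^ 2 / Z < 1 := by
    rw [div_lt_one hZ0]
    nlinarith [sq_pos_of_pos hP0]
  linarith

end SmallOmega

/-! ### From derivatives of `L'/L` to prime sums in a window -/

namespace SmallOmega

open Finset ArithmeticFunction Filter

lemma term_Bs {q : ℕ} (χ : DirichletCharacter ℂ q) (j : ℕ) {m : ℕ} (hm : m ≠ 0) :
    LSeries.term (LSeries.logMul^[j] ((fun m : ℕ => χ (m : ZMod q)) * fun m : ℕ => ((Λ m : ℝ) : ℂ)))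
      ((1 + Real.exp (-(j : ℝ)) : ℝ) : ℂ) m
      = χ m * ((Λ m / m * gw j (Real.log m) : ℝ) : ℂ) := by
  have hm0 : (0 : ℝ) < m := by exact_mod_cast Nat.pos_of_ne_zero hm
  rw [term_logMul _ _ _ hm, Pi.mul_apply, mul_assoc, ← Complex.ofReal_mul]
  congr 2
  rw [gw, add_mul, neg_add, Real.exp_add, one_mul, Real.exp_neg, Real.exp_log hm0]
  ring

lemma gmax_eq (j : ℕ) : gmax j = (j * Real.exp j / Real.exp 1) ^ j := by
  rw [gmax, Real.exp_neg]
  congr 1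
  field_simp

/-- The contribution of `m ≤ a` when `log a` is far below the peak of `gw j`. -/
lemma head_le (j : ℕ) {η : ℝ} {a : ℕ} (ha : 1 ≤ a)
    (h : Real.log a ≤ η * (j * Real.exp j)) :
    ∑ m ∈ Ioc 0 a, Λ m / m * gw j (Real.log m)
      ≤ 6 * (2 + Real.log a) * (η * Real.exp 1) ^ j * gmax j := by
  have hl : 0 ≤ Real.log a := Real.log_natCast_nonneg a
  have hpow : Real.log a ^ j ≤ (η * Real.exp 1) ^ j * gmax j := by
    rw [gmax_eq, ← mul_pow]
    refine pow_le_pow_left₀ hl (h.trans (le_of_eq ?_)) _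
    field_simp
  calc _ ≤ ∑ m ∈ Ioc 0 a, Λ m / m * Real.log a ^ j := by
        refine sum_le_sum fun m hm => ?_
        rw [mem_Ioc] at hm
        have h0 : 0 ≤ Λ m / m := div_nonneg vonMangoldt_nonneg (by positivity)
        refine mul_le_mul_of_nonneg_left ?_ h0
        have hv : 0 ≤ Real.log m := Real.log_natCast_nonneg m
        have hva : Real.log m ≤ Real.log a :=
          Real.log_le_log (by exact_mod_cast hm.1) (by exact_mod_cast hm.2)
        rw [gw]
        calc _ ≤ Real.log m ^ j * 1 := by
              gcongr
              rw [Real.exp_le_one_iff]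
              have : 0 ≤ Real.exp (-(j : ℝ)) * Real.log m := by positivity
              linarith
          _ ≤ _ := by rw [mul_one]; gcongr
    _ = (∑ m ∈ Ioc 0 a, Λ m / m) * Real.log a ^ j := by rw [sum_mul]
    _ ≤ (6 * (2 + Real.log a)) * ((η * Real.exp 1) ^ j * gmax j) :=
        mul_le_mul (sum_vonMangoldt_div_le a ha) hpow (by positivity) (by positivity)
    _ = _ := by ring

/-- The contribution of `m > N` when `log N` is far above the peak of `gw j`. -/
lemma tail_le (j : ℕ) {K : ℝ} {N : ℕ} (hN : 1 ≤ N)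
    (h : K * (j * Real.exp j) ≤ Real.log N) (N' : ℕ) :
    ∑ m ∈ Ioc N N', Λ m / m * gw j (Real.log m)
      ≤ 72 * Real.exp (3 * j - K * j / 4) * gmax j := by
  set X := Real.exp (j : ℝ) with hX
  have hX0 : 0 < X := Real.exp_pos _
  have hX1 : 1 ≤ X := Real.one_le_exp (by positivity)
  have hXi : Real.exp (-(j : ℝ)) = X⁻¹ := by rw [Real.exp_neg]
  have hg := (gmax_pos j).le
  have key : ∀ m ∈ Ioc N N', Λ m / m * gw j (Real.log m) ≤
      (2 ^ j * gmax j * Real.exp (-(K * j / 4)) * (8 * X)) *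
        (1 / m * Real.exp (-((8 * X)⁻¹ * Real.log m))) := by
    intro m hm
    rw [mem_Ioc] at hm
    have hm0 : (0 : ℝ) < m := by exact_mod_cast (by omega : 0 < m)
    set v := Real.log m with hv
    have hv0 : 0 ≤ v := Real.log_natCast_nonneg m
    have hvN : K * (j * X) ≤ v :=
      h.trans (Real.log_le_log (by exact_mod_cast hN) (by exact_mod_cast hm.1.le))
    have h1 : v ^ j * Real.exp (-((2 * X)⁻¹ * v)) ≤ 2 ^ j * gmax j := by
      refine (pow_mul_exp_le j (by positivity : 0 < (2 * X)⁻¹) hv0).trans (le_of_eq ?_)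
      rw [gmax_eq, ← mul_pow, ← hX]
      congr 1
      field_simp
    have h2 : Real.exp (-((4 * X)⁻¹ * v)) ≤ Real.exp (-(K * j / 4)) := by
      rw [Real.exp_le_exp, neg_le_neg_iff]
      calc K * j / 4 = (4 * X)⁻¹ * (K * (j * X)) := by field_simp
        _ ≤ _ := by gcongr
    have h3 : Λ m ≤ 8 * X * Real.exp ((8 * X)⁻¹ * v) := by
      refine vonMangoldt_le_log.trans ?_
      have := Real.add_one_le_exp ((8 * X)⁻¹ * v)
      calc v = 8 * X * ((8 * X)⁻¹ * v) := by field_simp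
        _ ≤ _ := by gcongr; linarith
    have e : gw j v = v ^ j * Real.exp (-((2 * X)⁻¹ * v)) * Real.exp (-((4 * X)⁻¹ * v))
        * Real.exp (-((4 * X)⁻¹ * v)) := by
      rw [gw, mul_assoc, mul_assoc, ← Real.exp_add, ← Real.exp_add, hXi]
      congr 2
      field_simp
      ring
    have e2 : Real.exp ((8 * X)⁻¹ * v) * Real.exp (-((4 * X)⁻¹ * v))
        = Real.exp (-((8 * X)⁻¹ * v)) := by
      rw [← Real.exp_add]
      congr 1
      field_simp
      ring
    rw [e]
    calc Λ m / m * (v ^ j * Real.exp (-((2 * X)⁻¹ * v)) * Real.exp (-((4 * X)⁻¹ * v))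
          * Real.exp (-((4 * X)⁻¹ * v)))
        ≤ (8 * X * Real.exp ((8 * X)⁻¹ * v)) / m * (2 ^ j * gmax j * Real.exp (-(K * j / 4))
          * Real.exp (-((4 * X)⁻¹ * v))) := by gcongr
      _ = (2 ^ j * gmax j * Real.exp (-(K * j / 4)) * (8 * X)) * (1 / m *
          (Real.exp ((8 * X)⁻¹ * v) * Real.exp (-((4 * X)⁻¹ * v)))) := by ring
      _ = _ := by rw [e2]
  refine (sum_le_sum key).trans ?_
  rw [← mul_sum]
  have hs := sum_exp_log_le (by positivity : 0 < (8 * X)⁻¹) N N'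
  have h2 : (2 : ℝ) ^ j ≤ X := by
    rw [hX, ← Real.exp_one_pow]
    gcongr
    linarith [Real.exp_one_gt_d9]
  calc _ ≤ (X * gmax j * Real.exp (-(K * j / 4)) * (8 * X)) * (1 + 1 / (8 * X)⁻¹) := by gcongr
    _ = 8 * X ^ 2 * (1 + 8 * X) * Real.exp (-(K * j / 4)) * gmax j := by
        rw [one_div, inv_inv]; ring
    _ ≤ 72 * X ^ 3 * Real.exp (-(K * j / 4)) * gmax j := by
        gcongr ?_ * _ * _
        nlinarith [sq_pos_of_pos hX0]
    _ = _ := by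
        rw [sub_eq_add_neg, Real.exp_add, hX, ← Real.exp_nat_mul]
        push_cast
        ring

/-- Truncating a Dirichlet series to a window costs its head and its tail. -/
lemma norm_window_le {f : ℕ → ℂ} {s : ℂ} (hs : LSeriesSummable f s) {a N : ℕ} (haN : a ≤ N)
    {H T : ℝ} (hH : ∑ m ∈ Ioc 0 a, ‖LSeries.term f s m‖ ≤ H)
    (hT : ∀ N', ∑ m ∈ Ioc N N', ‖LSeries.term f s m‖ ≤ T) :
    ‖∑ m ∈ Ioc a N, LSeries.term f s m‖ ≤ ‖LSeries f s‖ + H + T := by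
  have h1 := (hs.LSeriesHasSum).tendsto_sum_nat.norm
  have h2 : ∀ᶠ n : ℕ in atTop, ‖∑ m ∈ Ioc a N, LSeries.term f s m‖ - H - T
      ≤ ‖∑ m ∈ range n, LSeries.term f s m‖ := by
    filter_upwards [eventually_gt_atTop N] with n hn
    have e : ∑ m ∈ range n, LSeries.term f s m = ∑ m ∈ Ioc 0 a, LSeries.term f s m
        + ∑ m ∈ Ioc a N, LSeries.term f s m + ∑ m ∈ Ioc N (n - 1), LSeries.term f s m := by
      rw [← sum_union, Ioc_union_Ioc_eq_Ioc (by omega) haN, ← sum_union,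
        Ioc_union_Ioc_eq_Ioc (by omega) (by omega)]
      · have : range n = insert 0 (Ioc 0 (n - 1)) := by ext; simp; omega
        rw [this, sum_insert (by simp)]
        simp
      · exact disjoint_left.mpr fun x hx hx' => by simp at hx hx'; omega
      · exact disjoint_left.mpr fun x hx hx' => by simp at hx hx'; omega
    have e' : ∑ m ∈ Ioc a N, LSeries.term f s m = ∑ m ∈ range n, LSeries.term f s m
        - ∑ m ∈ Ioc 0 a, LSeries.term f s m - ∑ m ∈ Ioc N (n - 1), LSeries.term f s m := by
      rw [e]; ring
    have h3 := norm_sub_le (∑ m ∈ range n, LSeries.term f s m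
        - ∑ m ∈ Ioc 0 a, LSeries.term f s m) (∑ m ∈ Ioc N (n - 1), LSeries.term f s m)
    have h4 := norm_sub_le (∑ m ∈ range n, LSeries.term f s m) (∑ m ∈ Ioc 0 a, LSeries.term f s m)
    have h5 := (norm_sum_le _ _).trans hH
    have h6 := (norm_sum_le _ _).trans (hT (n - 1))
    rw [e'] at *
    linarith
  have := ge_of_tendsto h1 h2
  change _ ≤ ‖LSeries f s‖ at this
  linarith

/-- A character sum over the primes of a window, in terms of a derivative of `-L'/L`. -/
lemma norm_prime_sum_le {q : ℕ} (χ : DirichletCharacter ℂ q) (j : ℕ) {D N : ℕ} {H T : ℝ}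
    (hD : 1 ≤ D) (hN : D ^ 24 ≤ N)
    (hH : ∑ m ∈ Ioc 0 (D ^ 24), Λ m / m * gw j (Real.log m) ≤ H)
    (hT : ∀ N', ∑ m ∈ Ioc N N', Λ m / m * gw j (Real.log m) ≤ T) :
    ‖∑ p ∈ Ioc (D ^ 24) N with p.Prime, χ p * (wt j p : ℂ)‖ ≤
      ‖iteratedDeriv j (Bs χ) ((1 + Real.exp (-(j : ℝ)) : ℝ) : ℂ)‖ + H + T
        + gmax j * (8 / (D : ℝ) ^ 6 * (2 + Real.log N)) := by
  set s : ℂ := ((1 + Real.exp (-(j : ℝ)) : ℝ) : ℂ) with hs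
  set f := ((fun m : ℕ => χ (m : ZMod q)) * fun m : ℕ => ((Λ m : ℝ) : ℂ)) with hf
  have hab : LSeries.abscissaOfAbsConv f < s.re :=
    abscissa_Bs_lt χ (by rw [hs, Complex.ofReal_re]; linarith [Real.exp_pos (-(j : ℝ))])
  have hsum : LSeriesSummable (LSeries.logMul^[j] f) s :=
    LSeriesSummable_of_abscissaOfAbsConv_lt_re (by rwa [LSeries.absicssaOfAbsConv_logPowMul])
  have e1 : ‖iteratedDeriv j (Bs χ) s‖ = ‖LSeries (LSeries.logMul^[j] f) s‖ := by
    rw [LSeries_iteratedDeriv j hab, norm_mul, norm_pow, norm_neg, norm_one, one_pow, one_mul]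
  have hnn : ∀ m : ℕ, 0 ≤ Λ m / m * gw j (Real.log m) := fun m =>
    mul_nonneg (div_nonneg vonMangoldt_nonneg (by positivity))
      (gw_nonneg _ (Real.log_natCast_nonneg _))
  have hnorm : ∀ m : ℕ, ‖LSeries.term (LSeries.logMul^[j] f) s m‖
      ≤ Λ m / m * gw j (Real.log m) := by
    intro m
    rcases eq_or_ne m 0 with rfl | hm
    · simp
    · rw [term_Bs χ j hm, norm_mul, Complex.norm_real, Real.norm_of_nonneg (hnn m)]
      exact mul_le_of_le_one_left (hnn m) (DirichletCharacter.norm_le_one _ _)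
  have hw := norm_window_le hsum hN ((sum_le_sum fun m _ => hnorm m).trans hH)
    (fun N' => (sum_le_sum fun m _ => hnorm m).trans (hT N'))
  have hN1 : 1 ≤ N := (Nat.one_le_pow _ _ hD).trans hN
  have e2 : ∑ p ∈ Ioc (D ^ 24) N with p.Prime, χ p * (wt j p : ℂ)
      = ∑ m ∈ Ioc (D ^ 24) N, LSeries.term (LSeries.logMul^[j] f) s m
        - ∑ m ∈ Ioc (D ^ 24) N, χ m * ((properPow m / m * gw j (Real.log m) : ℝ) : ℂ) := by
    rw [sum_filter, ← sum_sub_distrib]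
    refine sum_congr rfl fun m hm => ?_
    rw [mem_Ioc] at hm
    rw [term_Bs χ j (by omega), ← mul_sub, ← Complex.ofReal_sub, properPow_apply]
    split_ifs with hp
    · rw [wt, vonMangoldt_apply_prime hp]; simp
    · simp
  have h3 : ‖∑ m ∈ Ioc (D ^ 24) N, χ m * ((properPow m / m * gw j (Real.log m) : ℝ) : ℂ)‖
      ≤ gmax j * (8 / (D : ℝ) ^ 6 * (2 + Real.log N)) := by
    refine (norm_sum_le _ _).trans ?_
    refine le_trans ?_ (mul_le_mul_of_nonneg_left (sum_properPow_div_le D hD N hN1)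
      (gmax_pos j).le)
    rw [mul_sum]
    refine sum_le_sum fun m _ => ?_
    have h0 : 0 ≤ properPow m / m := div_nonneg (properPow_nonneg m) (by positivity)
    have hg := gw_nonneg j (Real.log_natCast_nonneg m)
    rw [norm_mul, Complex.norm_real, Real.norm_of_nonneg (mul_nonneg h0 hg)]
    calc _ ≤ 1 * (properPow m / m * gw j (Real.log m)) := by
          gcongr
          exact DirichletCharacter.norm_le_one _ _
      _ ≤ gmax j * (properPow m / m) := by
          rw [one_mul, mul_comm]
          gcongr
          exact gw_le j (Real.log_natCast_nonneg m)
  rw [e2, e1]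
  exact (norm_sub_le _ _).trans (add_le_add hw h3)

end SmallOmega

/-! ### Characters of small conductor -/

namespace SmallOmega

open Finset ArithmeticFunction Filter

lemma linear_exp_le {C : ℝ} : ∀ᶠ j : ℕ in atTop,
    C * (2 + (j : ℝ) * Real.exp j) ≤ Real.exp (2 * j) := by
  filter_upwards [eventually_poly_le_exp (2 * |C|) 1 one_pos] with j hj
  rw [pow_one, one_mul] at hj
  have h1 : 1 ≤ Real.exp (j : ℝ) := Real.one_le_exp (by positivity)
  have hj0 : (0 : ℝ) ≤ j := by positivity
  calc C * (2 + (j : ℝ) * Real.exp j) ≤ |C| * (2 * ((j + 1) * Real.exp j)) := by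
        gcongr
        · exact le_abs_self C
        · nlinarith
    _ = 2 * |C| * (j + 1) * Real.exp j := by ring
    _ ≤ Real.exp j * Real.exp j := by gcongr
    _ = _ := by rw [← Real.exp_add]; congr 1; ring

/-- Derivative part: a nearly factorial bound is far below the peak of `gw j`. -/
lemma deriv_part (A B : ℕ) : ∀ᶠ j : ℕ in atTop, ∀ R : ℝ, 4 ≤ R → R ≤ 2 * (A * j) + 4 →
    (j.factorial : ℝ) * (7 * R ^ 2 / Real.exp (-(4 / 5 * (j : ℝ)))) ^ (j + 1)
      ≤ 1 / 4 * Real.exp (-(B * j)) * gmax j := by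
  filter_upwards [eventually_poly_le_exp (7 * (2 * A + 4) ^ 2) 2 (by norm_num : (0 : ℝ) < 1 / 20),
    eventually_ge_atTop (20 * B + 50)] with j hj hjB R hR4 hR
  have hj0 : (0 : ℝ) ≤ j := by positivity
  have hjB' : 20 * (B : ℝ) + 50 ≤ j := by exact_mod_cast hjB
  have h1 : 7 * R ^ 2 ≤ Real.exp (1 / 20 * j) := by
    refine le_trans ?_ hj
    rw [mul_assoc, ← mul_pow]
    have hA : (0 : ℝ) ≤ A := by positivity
    gcongr
    nlinarith
  have h2 : 7 * R ^ 2 / Real.exp (-(4 / 5 * (j : ℝ))) ≤ Real.exp (17 / 20 * j) := by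
    rw [Real.exp_neg, div_inv_eq_mul]
    calc _ ≤ Real.exp (1 / 20 * j) * Real.exp (4 / 5 * j) := by gcongr
      _ = _ := by rw [← Real.exp_add]; congr 1; ring
  have h3 : (j.factorial : ℝ) ≤ (j : ℝ) ^ j := by exact_mod_cast Nat.factorial_le_pow j
  have h4 : gmax j = (j : ℝ) ^ j * Real.exp (j * (j - 1)) := by
    rw [gmax_eq, mul_div_assoc, mul_pow, ← Real.exp_sub, ← Real.exp_nat_mul]
  have h5 : (1 : ℝ) / 4 ≥ Real.exp (-2) := by
    rw [Real.exp_neg, ge_iff_le, inv_le_comm₀ (Real.exp_pos _) (by norm_num)]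
    have : Real.exp 2 = Real.exp 1 * Real.exp 1 := by rw [← Real.exp_add]; norm_num
    rw [this]
    nlinarith [Real.exp_one_gt_d9]
  calc _ ≤ (j : ℝ) ^ j * Real.exp (17 / 20 * j) ^ (j + 1) := by gcongr
    _ = (j : ℝ) ^ j * Real.exp ((j + 1) * (17 / 20 * j)) := by
        rw [← Real.exp_nat_mul]; push_cast; rfl
    _ ≤ (j : ℝ) ^ j * Real.exp (-2 + -(B * j) + j * (j - 1)) := by
        gcongr
        nlinarith
    _ = Real.exp (-2) * Real.exp (-(B * j)) * gmax j := by
        rw [h4, Real.exp_add, Real.exp_add]; ring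
    _ ≤ _ := by
        have := (gmax_pos j).le
        gcongr

set_option maxHeartbeats 1000000 in
/-- The power saving for a character of small conductor that is not small at `1 + e^{-j}`. -/
lemma small_conductor (A B : ℕ) {η K κ K' : ℝ} (hη0 : 0 < η) (hη1 : η ≤ 1)
    (hη : η * Real.exp 1 ≤ Real.exp (-((B : ℝ) + 2))) (hK : 4 * ((B : ℝ) + 4) ≤ K) (hκ : 0 < κ) :
    ∀ᶠ j : ℕ in atTop, ∀ D N : ℕ, κ * (j * Real.exp j) ≤ Real.log D →
      24 * Real.log D ≤ η * (j * Real.exp j) → K * (j * Real.exp j) ≤ Real.log N →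
      Real.log N ≤ K' * (j * Real.exp j) → ∀ q : ℕ, 2 ≤ q → Real.log q ≤ A * j →
      ∀ χ : DirichletCharacter ℂ q, χ.IsPrimitive →
      Real.exp (-(4 / 5 * (j : ℝ))) ≤ ‖Ls χ ((1 + Real.exp (-(j : ℝ)) : ℝ) : ℂ)‖ →
      ‖∑ p ∈ Ioc (D ^ 24) N with p.Prime, χ p * (wt j p : ℂ)‖ ≤ Real.exp (-(B * j)) * gmax j := by
  have hexp : Tendsto (fun j : ℕ => Real.exp (j : ℝ)) atTop atTop :=
    Real.tendsto_exp_atTop.comp tendsto_natCast_atTop_atTop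
  filter_upwards [deriv_part A B, linear_exp_le (C := 24), linear_exp_le (C := 32 * max K' 1),
    hexp.eventually_ge_atTop 288, hexp.eventually_ge_atTop ((B + 2) / (6 * κ)),
    eventually_ge_atTop 1] with j hdp h24 h32 h288 hκj hj1 D N hD1 hD2 hN1 hN2 q hq hqA χ hχ hL
  have : NeZero q := ⟨by omega⟩
  set X := Real.exp (j : ℝ) with hX
  have hX0 : 0 < X := Real.exp_pos _
  have hj0 : (1 : ℝ) ≤ j := by exact_mod_cast hj1
  have hy : 0 < (j : ℝ) * X := by positivity
  have hg := (gmax_pos j).le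
  have hlogD : 0 < Real.log D := lt_of_lt_of_le (by positivity) hD1
  have hD : 1 ≤ D := by
    rcases Nat.eq_zero_or_pos D with rfl | h
    · simp at hlogD
    · exact h
  have hD0 : (0 : ℝ) < D := by exact_mod_cast hD
  have hK1 : 1 ≤ K := by
    have : (0 : ℝ) ≤ B := by positivity
    linarith
  have hlogN : 0 < Real.log N := lt_of_lt_of_le (by positivity) hN1
  have hN : 1 ≤ N := by
    rcases Nat.eq_zero_or_pos N with rfl | h
    · simp at hlogN
    · exact h
  have hlog24 : Real.log ((D ^ 24 : ℕ) : ℝ) = 24 * Real.log D := by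
    push_cast; rw [Real.log_pow]; norm_num
  have hDN : D ^ 24 ≤ N := by
    have : Real.log ((D ^ 24 : ℕ) : ℝ) ≤ Real.log N := by
      rw [hlog24]
      nlinarith
    rw [Real.log_le_log_iff (by positivity) (by exact_mod_cast hN)] at this
    exact_mod_cast this
  have hD24 : 1 ≤ D ^ 24 := Nat.one_le_pow _ _ hD
  have hH := head_le j hD24 (hlog24.trans_le hD2)
  have hT := tail_le j hN hN1
  refine (norm_prime_sum_le χ j hD hDN hH hT).trans ?_
  have hE : Real.exp (-((B : ℝ) + 2)) ^ j = Real.exp (-(B * j)) * Real.exp (-(2 * j)) := by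
    rw [← Real.exp_nat_mul, ← Real.exp_add]; congr 1; ring
  have hE2 : Real.exp (2 * (j : ℝ)) * Real.exp (-(2 * j)) = 1 := by
    rw [← Real.exp_add]; simp
  set E := Real.exp (-(B * j)) with hEdef
  have hE0 : 0 < E := Real.exp_pos _
  set Q := Real.exp (-(2 * (j : ℝ))) with hQ
  have hQ0 : 0 < Q := Real.exp_pos _
  have hσ : Real.exp (-(j : ℝ)) ≤ 1 := by rw [Real.exp_le_one_iff]; linarith
  have t1 : ‖iteratedDeriv j (Bs χ) ((1 + Real.exp (-(j : ℝ)) : ℝ) : ℂ)‖ ≤ 1 / 4 * E * gmax j := by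
    refine (norm_iteratedDeriv_Bs_le hq χ (primitive_ne_one hq hχ)
      (by linarith [Real.exp_pos (-(j : ℝ))]) (by linarith) (Real.exp_pos _)
      (by rw [Real.exp_le_one_iff]; linarith) hL j).trans ?_
    exact hdp _ (four_le_Rq q) (by rw [Rq]; linarith)
  -- `log (D ^ 24)` lies far below the peak `j * e ^ j` of the weight
  have t2 : 6 * (2 + Real.log ((D ^ 24 : ℕ) : ℝ)) * (η * Real.exp 1) ^ j * gmax j
      ≤ 1 / 4 * E * gmax j := by
    have h1 : (η * Real.exp 1) ^ j ≤ E * Q := hE ▸ pow_le_pow_left₀ (by positivity) hη j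
    have h2 : Real.log ((D ^ 24 : ℕ) : ℝ) ≤ j * X := by rw [hlog24]; nlinarith
    gcongr ?_ * _
    calc _ ≤ 6 * (2 + j * X) * (E * Q) := by gcongr
      _ = 1 / 4 * (24 * (2 + j * X)) * E * Q := by ring
      _ ≤ 1 / 4 * Real.exp (2 * j) * E * Q := by gcongr
      _ = 1 / 4 * E * (Real.exp (2 * j) * Q) := by ring
      _ = _ := by rw [hE2, mul_one]
  -- `log N` lies far above the peak of the weight
  have t3 : 72 * Real.exp (3 * j - K * j / 4) * gmax j ≤ 1 / 4 * E * gmax j := by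
    gcongr ?_ * _
    have : Real.exp (3 * j - K * j / 4) ≤ E * X⁻¹ := by
      rw [hEdef, hX, ← Real.exp_neg, ← Real.exp_add, Real.exp_le_exp]
      nlinarith
    calc _ ≤ 72 * (E * X⁻¹) := by gcongr
      _ = 1 / 4 * (288 * X⁻¹) * E := by ring
      _ ≤ 1 / 4 * (X * X⁻¹) * E := by gcongr
      _ = _ := by rw [mul_inv_cancel₀ hX0.ne', mul_one]
  -- proper prime powers beyond `D ^ 24` are negligible
  have t4 : gmax j * (8 / (D : ℝ) ^ 6 * (2 + Real.log N)) ≤ 1 / 4 * E * gmax j := by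
    rw [mul_comm]
    gcongr ?_ * _
    have hD6 : 1 / (D : ℝ) ^ 6 ≤ E * Q := by
      have e : (D : ℝ) ^ 6 = Real.exp (6 * Real.log D) := by
        rw [← Real.exp_log hD0, ← Real.exp_nat_mul, Real.log_exp]; norm_num
      rw [← hE, ← Real.exp_nat_mul, e, one_div, ← Real.exp_neg, Real.exp_le_exp]
      have h6 : ((B : ℝ) + 2) ≤ X * (6 * κ) := (div_le_iff₀ (by positivity)).mp hκj
      have h7 : (j : ℝ) * (B + 2) ≤ j * (X * (6 * κ)) := by gcongr
      have h8 : (j : ℝ) * (X * (6 * κ)) = 6 * (κ * (j * X)) := by ring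
      linarith
    have hN3 : 2 + Real.log N ≤ max K' 1 * (2 + j * X) := by
      have h1 : (1 : ℝ) ≤ max K' 1 := le_max_right _ _
      have h2 : K' * (j * X) ≤ max K' 1 * (j * X) := by
        gcongr; exact le_max_left _ _
      nlinarith
    calc 8 / (D : ℝ) ^ 6 * (2 + Real.log N) = 8 * (1 / (D : ℝ) ^ 6) * (2 + Real.log N) := by ring
      _ ≤ 8 * (E * Q) * (max K' 1 * (2 + j * X)) := by gcongr
      _ = 1 / 4 * (32 * max K' 1 * (2 + j * X)) * E * Q := by ring
      _ ≤ 1 / 4 * Real.exp (2 * j) * E * Q := by gcongr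
      _ = 1 / 4 * E * (Real.exp (2 * j) * Q) := by ring
      _ = _ := by rw [hE2, mul_one]
  linarith

end SmallOmega

/-! ### A theorem of Rényi type and the main term -/

namespace SmallOmega

open Finset ArithmeticFunction Filter

/-- A theorem of Rényi type: at infinitely many scales `j`, the primes of the window
`(D ^ 24, N]`, weighted by `wt j`, are equidistributed on average over the characters of
conductor at most `D`, with a saving of an arbitrary power of `e ^ j`. -/
theorem error_bound (B' : ℕ) : ∃ η : ℝ, 0 < η ∧ η ≤ 1 ∧ ∃ K : ℝ, 1 ≤ K ∧ ∀ κ : ℝ, 0 < κ →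
    ∀ (K' : ℝ) (J : ℕ), ∃ j ≥ J, ∀ D N : ℕ, κ * (j * Real.exp j) ≤ Real.log D →
      24 * Real.log D ≤ η * (j * Real.exp j) → K * (j * Real.exp j) ≤ Real.log N →
      Real.log N ≤ K' * (j * Real.exp j) →
      ∑ i ∈ primChars D, 1 / Real.sqrt i.1 *
        ‖∑ p ∈ Ioc (D ^ 24) N with p.Prime, cv i p * (wt j p : ℂ)‖
        ≤ Real.exp (-(B' * j)) * gmax j := by
  set A : ℕ := 2 * B' + 16 with hA
  set B : ℕ := 2 * A + B' + 1 with hB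
  refine ⟨Real.exp (-((B : ℝ) + 3)), Real.exp_pos _, ?_, 4 * ((B : ℝ) + 4), ?_, ?_⟩
  · rw [Real.exp_le_one_iff]
    have : (0 : ℝ) ≤ B := by positivity
    linarith
  · have : (0 : ℝ) ≤ B := by positivity
    linarith
  intro κ hκ K' J
  have hexp : Tendsto (fun j : ℕ => Real.exp (j : ℝ)) atTop atTop :=
    Real.tendsto_exp_atTop.comp tendsto_natCast_atTop_atTop
  have hη1 : Real.exp (-((B : ℝ) + 3)) ≤ 1 := by
    rw [Real.exp_le_one_iff]
    have : (0 : ℝ) ≤ B := by positivity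
    linarith
  have hsc := small_conductor A B (η := Real.exp (-((B : ℝ) + 3))) (K := 4 * ((B : ℝ) + 4))
    (K' := K') (Real.exp_pos _) hη1 (by rw [← Real.exp_add]; apply le_of_eq; congr 1; ring)
    le_rfl hκ
  have hpoly := eventually_poly_le_exp (48 * (1 + |K'|) ^ 7) 8 one_pos
  obtain ⟨J', hJ'⟩ := eventually_atTop.mp
    (hsc.and (hpoly.and ((hexp.eventually_ge_atTop 2).and (eventually_ge_atTop 1))))
  obtain ⟨j, hjJ, hgood⟩ := exists_good_scale A (max J J')
  obtain ⟨hsc, hpoly, h2, hj1⟩ := hJ' j (le_of_max_le_right hjJ)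
  refine ⟨j, le_of_max_le_left hjJ, fun D N hD1 hD2 hN1 hN2 => ?_⟩
  have hg := (gmax_pos j).le
  have hj0 : (1 : ℝ) ≤ j := by exact_mod_cast hj1
  set X := Real.exp (j : ℝ) with hX
  have hX0 : 0 < X := Real.exp_pos _
  have hlogD : 0 < Real.log D := lt_of_lt_of_le (by positivity) hD1
  have hD : 2 ≤ D := by
    by_contra! h
    interval_cases D <;> simp at hlogD
  have hlogN : 0 ≤ Real.log N := Real.log_natCast_nonneg N
  set S : (Σ d, DirichletCharacter ℂ d) → ℝ :=
    fun i => ‖∑ p ∈ Ioc (D ^ 24) N with p.Prime, cv i p * (wt j p : ℂ)‖ with hS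
  have hSnn : ∀ i, 0 ≤ S i := fun i => norm_nonneg _
  rw [← sum_filter_add_sum_filter_not (primChars D) (fun i => Real.log i.1 ≤ A * j)]
  -- conductor at most `e ^ (A j)`: fewer than about `e ^ (2 A j)` characters, each with a saving
  -- of `e ^ (-B j)`
  have small : ∑ i ∈ primChars D with Real.log i.1 ≤ A * j, 1 / Real.sqrt i.1 * S i
      ≤ 1 / 2 * (Real.exp (-(B' * j)) * gmax j) := by
    set Q := ⌊Real.exp (A * j)⌋₊ with hQ
    have hsub : (primChars D).filter (fun i => Real.log i.1 ≤ A * j) ⊆ primChars Q := by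
      intro i hi
      rw [mem_filter, mem_primChars] at hi
      rw [mem_primChars]
      refine ⟨hi.1.1, ?_, hi.1.2.2⟩
      refine Nat.le_floor ?_
      have : (0 : ℝ) < i.1 := by exact_mod_cast (by omega : 0 < i.1)
      rw [← Real.log_le_iff_le_exp this]
      exact hi.2
    have hcard : (#((primChars D).filter (fun i => Real.log i.1 ≤ A * j)) : ℝ)
        ≤ Real.exp (A * j) ^ 2 := by
      calc _ ≤ (#(primChars Q) : ℝ) := by exact_mod_cast card_le_card hsub
        _ ≤ (Q : ℝ) ^ 2 := card_primChars_le Q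
        _ ≤ _ := by gcongr; exact Nat.floor_le (Real.exp_pos _).le
    have hterm : ∀ i ∈ (primChars D).filter (fun i => Real.log i.1 ≤ A * j),
        1 / Real.sqrt i.1 * S i ≤ Real.exp (-(B * j)) * gmax j := by
      intro i hi
      rw [mem_filter, mem_primChars] at hi
      have h1 : S i ≤ Real.exp (-(B * j)) * gmax j :=
        hsc D N hD1 hD2 hN1 hN2 i.1 hi.1.1 hi.2 i.2 hi.1.2.2
          (hgood i.1 hi.1.1 hi.2 i.2 hi.1.2.2)
      have h3 : 1 / Real.sqrt i.1 ≤ 1 := by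
        rw [div_le_one (Real.sqrt_pos.mpr (by exact_mod_cast (by omega : 0 < i.1)))]
        rw [Real.one_le_sqrt]
        exact_mod_cast (by omega : 1 ≤ i.1)
      calc _ ≤ 1 * (Real.exp (-(B * j)) * gmax j) := by gcongr
        _ = _ := one_mul _
    refine (sum_le_card_nsmul _ _ _ hterm).trans ?_
    rw [nsmul_eq_mul]
    calc _ ≤ Real.exp (A * j) ^ 2 * (Real.exp (-(B * j)) * gmax j) := by gcongr
      _ = Real.exp (-(B' * j)) * Real.exp (-j) * gmax j := by
          rw [← Real.exp_nat_mul, ← mul_assoc, ← Real.exp_add, ← Real.exp_add]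
          congr 2
          rw [hB]; push_cast; ring
      _ ≤ Real.exp (-(B' * j)) * (1 / 2) * gmax j := by
          gcongr
          rw [Real.exp_neg, one_div]
          exact inv_anti₀ (by norm_num) h2
      _ = _ := by ring
  -- larger conductors: the factor `d ^ (-1/2)` saves `e ^ (-(B' + 8) j)`, and the mean value loses
  -- only a power of `log N`
  have large : ∑ i ∈ primChars D with ¬ Real.log i.1 ≤ A * j, 1 / Real.sqrt i.1 * S i
      ≤ 1 / 2 * (Real.exp (-(B' * j)) * gmax j) := by
    have hterm : ∀ i ∈ (primChars D).filter (fun i => ¬ Real.log i.1 ≤ A * j),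
        1 / Real.sqrt i.1 * S i ≤ Real.exp (-((B' + 8) * j)) * S i := by
      intro i hi
      rw [mem_filter, mem_primChars] at hi
      have h0 : (0 : ℝ) < i.1 := by exact_mod_cast (by omega : 0 < i.1)
      have h1 : 1 / Real.sqrt i.1 ≤ Real.exp (-((B' + 8) * j)) := by
        rw [← exp_neg_half_log (by omega), Real.exp_le_exp]
        have := hi.2
        rw [hA] at this
        push_cast at this
        linarith
      have := hSnn i
      gcongr
    refine (sum_le_sum hterm).trans ?_
    rw [← mul_sum]
    have hmv : ∑ i ∈ primChars D with ¬ Real.log i.1 ≤ A * j, S i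
        ≤ 24 * (j + 1) * gmax j * (1 + Real.log N) ^ 7 :=
      (sum_le_sum_of_subset_of_nonneg (filter_subset _ _) fun i _ _ => hSnn i).trans
        ((quasiOrth_primChars D).mean_value_primes hD j N)
    have hN3 : 1 + Real.log N ≤ (1 + |K'|) * ((j + 1) * X) := by
      have h1 : K' * (j * X) ≤ |K'| * ((j + 1) * X) := by
        gcongr
        · exact le_abs_self _
        · linarith
      have h3 : 1 ≤ (j + 1) * X := by nlinarith
      linarith
    rw [one_mul] at hpoly
    calc _ ≤ Real.exp (-((B' + 8) * j)) * (24 * (j + 1) * gmax j *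
          ((1 + |K'|) * ((j + 1) * X)) ^ 7) := by gcongr; exact hmv.trans (by gcongr)
      _ = 1 / 2 * Real.exp (-((B' + 8) * j)) * (48 * (1 + |K'|) ^ 7 * (j + 1) ^ 8) * X ^ 7 * gmax j := by
          ring
      _ ≤ 1 / 2 * Real.exp (-((B' + 8) * j)) * X * X ^ 7 * gmax j := by gcongr
      _ = 1 / 2 * (Real.exp (-((B' + 8) * j)) * X ^ 8) * gmax j := by ring
      _ = 1 / 2 * Real.exp (-(B' * j)) * gmax j := by
          rw [hX, ← Real.exp_nat_mul, ← Real.exp_add]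
          congr 3
          push_cast; ring
      _ = _ := by ring
  linarith

/-- Near its peak `e ^ j j`, the weight `gw j` is within a constant of its maximum. -/
lemma gw_ge (j : ℕ) (hj : 1 ≤ j) {v : ℝ} (h1 : j * Real.exp j ≤ v) (h2 : v ≤ j * Real.exp j + 4) :
    gmax j * Real.exp (-4) ≤ gw j v := by
  have hy : 0 < (j : ℝ) * Real.exp j := by positivity
  rw [gw, gmax_eq, div_pow, ← Real.exp_nat_mul, mul_one, div_eq_mul_inv, ← Real.exp_neg, mul_assoc,
    ← Real.exp_add]
  have : Real.exp (-(j : ℝ)) * v ≤ j + 4 := by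
    calc Real.exp (-(j : ℝ)) * v ≤ Real.exp (-(j : ℝ)) * (j * Real.exp j + 4) := by gcongr
      _ = j * (Real.exp (-(j : ℝ)) * Real.exp j) + 4 * Real.exp (-(j : ℝ)) := by ring
      _ = j + 4 * Real.exp (-(j : ℝ)) := by rw [← Real.exp_add]; simp
      _ ≤ j + 4 * 1 := by
          gcongr
          rw [Real.exp_le_one_iff]
          simp
      _ = _ := by ring
  have hv : 0 < v := hy.trans_le h1
  gcongr
  linarith

/-- Chebyshev: a positive proportion of `(x, 8x]`, in logarithmic weight, is prime. -/
lemma eventually_theta : ∀ᶠ x : ℕ in atTop,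
    (x : ℝ) ≤ ∑ p ∈ Ioc x (8 * x) with p.Prime, Real.log p := by
  have hlog : Tendsto (fun x : ℕ => Real.log (8 * (x : ℝ))) atTop atTop :=
    Real.tendsto_log_atTop.comp (tendsto_natCast_atTop_atTop.const_mul_atTop (by norm_num))
  filter_upwards [hlog.eventually_ge_atTop 40, eventually_ge_atTop 1] with x hx hx1
  have hx0 : (0 : ℝ) < x := by exact_mod_cast hx1
  have h1 := Chebyshev.theta_ge (8 * x)
  have h2 := Chebyshev.theta_le_log4_mul_x (x := x) hx0.le
  have e : ∑ p ∈ Ioc x (8 * x) with p.Prime, Real.log p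
      = Chebyshev.theta ((8 * x : ℕ) : ℝ) - Chebyshev.theta x := by
    rw [Chebyshev.theta, Chebyshev.theta, Nat.floor_natCast, Nat.floor_natCast,
      eq_sub_iff_add_eq', ← sum_union, ← filter_union, Ioc_union_Ioc_eq_Ioc (by omega) (by omega)]
    exact disjoint_filter_filter (disjoint_left.mpr fun y hy hy' => by simp at hy hy'; omega)
  rw [e]
  push_cast at h1
  push_cast
  set s := Real.sqrt (8 * (x : ℝ)) with hs
  have hs0 : 0 < s := Real.sqrt_pos.mpr (by positivity)
  have hss : s ^ 2 = 8 * x := Real.sq_sqrt (by positivity)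
  set ℓ := Real.log (8 * (x : ℝ)) with hℓ
  have hsℓ : s = Real.exp (ℓ / 2) := by
    rw [hs, Real.sqrt_eq_rpow, Real.rpow_def_of_pos (by positivity), ← hℓ]
    congr 1; ring
  have hℓs : 32 * ℓ ≤ s := by
    have := Real.pow_div_factorial_le_exp (ℓ / 2) (by positivity) 4
    rw [← hsℓ] at this
    norm_num [Nat.factorial] at this
    have h3 : 40 ^ 3 ≤ ℓ ^ 3 := by gcongr
    nlinarith
  have h3 : Real.log (8 * (x : ℝ) + 1) ≤ 2 * ℓ := by
    rw [hℓ, ← Real.log_rpow (by positivity)]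
    refine Real.log_le_log (by positivity) ?_
    norm_num
    have : (1 : ℝ) ≤ x := by exact_mod_cast hx1
    nlinarith
  have h4 : Real.log 4 = 2 * Real.log 2 := by
    rw [show (4 : ℝ) = 2 ^ 2 by norm_num, Real.log_pow]; norm_num
  have h5 := Real.log_two_gt_d9
  have h6 : 2 * s * ℓ ≤ s ^ 2 / 16 := by nlinarith
  have h7 : 2 * ℓ ≤ s ^ 2 / 16 := by nlinarith
  rw [h4] at h2
  have h8 : (0.69 : ℝ) * x ≤ Real.log 2 * x := by gcongr; linarith
  linarith

/-- The main term: total weight of the primes in a window containing the peak of `gw j`. -/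
lemma main_term : ∀ᶠ j : ℕ in atTop, ∀ a N : ℕ, Real.log a ≤ j * Real.exp j →
    j * Real.exp j + 4 ≤ Real.log N → gmax j / 500 ≤ ∑ p ∈ Ioc a N with p.Prime, wt j p := by
  have hexp : Tendsto (fun j : ℕ => ⌈Real.exp (j * Real.exp j)⌉₊) atTop atTop := by
    refine tendsto_nat_ceil_atTop.comp (Real.tendsto_exp_atTop.comp ?_)
    refine tendsto_natCast_atTop_atTop.atTop_mul_atTop₀
      (Real.tendsto_exp_atTop.comp tendsto_natCast_atTop_atTop)
  filter_upwards [hexp.eventually eventually_theta, eventually_ge_atTop 1] with j hj hj1 a N ha hN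
  set x := ⌈Real.exp (j * Real.exp j)⌉₊ with hx
  set y := (j : ℝ) * Real.exp j with hy
  have hy0 : 0 < y := by positivity
  have hx1 : Real.exp y ≤ x := Nat.le_ceil _
  have hx0 : (0 : ℝ) < x := (Real.exp_pos _).trans_le hx1
  have hx2 : (x : ℝ) ≤ 2 * Real.exp y := by
    have h1 := (Nat.ceil_lt_add_one (Real.exp_pos y).le).le
    have h2 : 1 ≤ Real.exp y := Real.one_le_exp hy0.le
    linarith
  have h16 : Real.log 16 ≤ 4 := by
    rw [show (16 : ℝ) = 2 ^ 4 by norm_num, Real.log_pow]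
    have := Real.log_two_lt_d9
    norm_num
    linarith
  have hlog8 : Real.log (8 * (x : ℝ)) ≤ y + 4 := by
    calc _ ≤ Real.log (16 * Real.exp y) := Real.log_le_log (by positivity) (by linarith)
      _ = Real.log 16 + y := by rw [Real.log_mul (by norm_num) (Real.exp_pos _).ne', Real.log_exp]
      _ ≤ _ := by linarith
  have hN0 : 0 < N := by
    rcases Nat.eq_zero_or_pos N with rfl | h
    · simp at hN; linarith
    · exact h
  have hax : a ≤ x := by
    rcases Nat.eq_zero_or_pos a with rfl | h
    · omega
    · have := (Real.log_le_iff_le_exp (by exact_mod_cast h)).mp ha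
      exact_mod_cast this.trans hx1
  have hxN : 8 * x ≤ N := by
    have := (Real.log_le_log_iff (by positivity) (by exact_mod_cast hN0)).mp (hlog8.trans hN)
    exact_mod_cast this
  have hg := (gmax_pos j).le
  have he4 : (8 : ℝ) / 500 ≤ Real.exp (-4) := by
    have h1 : Real.exp 4 = Real.exp 1 ^ 4 := by rw [← Real.exp_nat_mul]; norm_num
    have h2 : Real.exp 4 ≤ 2.7183 ^ 4 := by
      rw [h1]; gcongr; linarith [Real.exp_one_lt_d9]
    rw [Real.exp_neg, le_inv_comm₀ (by norm_num) (Real.exp_pos _)]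
    refine h2.trans (by norm_num)
  calc gmax j / 500 = gmax j * (8 / 500) / (8 * x) * x := by field_simp
    _ ≤ gmax j * Real.exp (-4) / (8 * x) * ∑ p ∈ Ioc x (8 * x) with p.Prime, Real.log p := by
        gcongr
    _ = ∑ p ∈ Ioc x (8 * x) with p.Prime, gmax j * Real.exp (-4) / (8 * x) * Real.log p := by
        rw [mul_sum]
    _ ≤ ∑ p ∈ Ioc x (8 * x) with p.Prime, wt j p := by
        refine sum_le_sum fun p hp => ?_
        rw [mem_filter, mem_Ioc] at hp
        have hxp : (x : ℝ) ≤ p := by exact_mod_cast hp.1.1.le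
        have hp8 : (p : ℝ) ≤ 8 * x := by exact_mod_cast hp.1.2
        have hp0 : (0 : ℝ) < p := hx0.trans_le hxp
        have hlp : 0 ≤ Real.log p := Real.log_natCast_nonneg p
        have h1 : y ≤ Real.log p := by
          rw [← Real.log_exp y]
          exact Real.log_le_log (Real.exp_pos _) (hx1.trans hxp)
        have h2 := gw_ge j hj1 h1 ((Real.log_le_log hp0 hp8).trans hlog8)
        rw [wt]
        calc _ = Real.log p / (8 * x) * (gmax j * Real.exp (-4)) := by ring
          _ ≤ _ := by gcongr
    _ ≤ _ := by
        refine sum_le_sum_of_subset_of_nonneg ?_ fun p _ _ => wt_nonneg j p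
        exact filter_subset_filter _ (Ioc_subset_Ioc hax hxN)

end SmallOmega

/-! ### Brun–Hooley sieve weights -/

namespace SmallOmega

open Finset ArithmeticFunction Filter

/-- The multilinear polynomial with coefficients `c` in the variables indexed by `Q`. -/
noncomputable def ev (c : Finset ℕ → ℝ) (Q : Finset ℕ) (h : ℕ → ℝ) : ℝ :=
  ∑ S ∈ Q.powerset, c S * ∏ p ∈ S, h p

/-- Coefficients of the truncation of `∏ (1 - h)` at degree `m`. -/
noncomputable def cT (m : ℕ) (S : Finset ℕ) : ℝ := if #S ≤ m then (-1) ^ #S else 0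

/-- Coefficients of the elementary symmetric polynomial of degree `m`. -/
noncomputable def cE (m : ℕ) (S : Finset ℕ) : ℝ := if #S = m then 1 else 0

lemma ev_insert (c : Finset ℕ → ℝ) {Q : Finset ℕ} {p : ℕ} (hp : p ∉ Q) (h : ℕ → ℝ) :
    ev c (insert p Q) h = ev c Q h + h p * ev (fun S => c (insert p S)) Q h := by
  rw [ev, ev, ev, sum_powerset_insert hp, mul_sum]
  congr 1
  refine sum_congr rfl fun S hS => ?_
  rw [mem_powerset] at hS
  rw [prod_insert fun hpS => hp (hS hpS)]
  ring

lemma ev_congr {c d : Finset ℕ → ℝ} {Q : Finset ℕ} (hcd : ∀ S ⊆ Q, c S = d S) (h : ℕ → ℝ) :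
    ev c Q h = ev d Q h :=
  sum_congr rfl fun S hS => by rw [hcd S (mem_powerset.mp hS)]

lemma ev_cT_zero (Q : Finset ℕ) (h : ℕ → ℝ) : ev (cT 0) Q h = 1 := by
  rw [ev, sum_eq_single ∅]
  · simp [cT]
  · intro S _ hS
    simp [cT, hS]
  · simp

lemma ev_cT_insert (m : ℕ) {Q : Finset ℕ} {p : ℕ} (hp : p ∉ Q) (h : ℕ → ℝ) :
    ev (cT (m + 1)) (insert p Q) h = ev (cT (m + 1)) Q h - h p * ev (cT m) Q h := by
  rw [ev_insert _ hp, sub_eq_add_neg, ← mul_neg]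
  congr 2
  rw [ev, ev, ← sum_neg_distrib]
  refine sum_congr rfl fun S hS => ?_
  rw [mem_powerset] at hS
  rw [cT, cT, card_insert_of_notMem fun hpS => hp (hS hpS)]
  by_cases hm : #S ≤ m
  · rw [if_pos hm, if_pos (by omega), pow_succ]; ring
  · rw [if_neg hm, if_neg (by omega)]; ring

/-- Bonferroni's inequalities. -/
lemma bonferroni {h : ℕ → ℝ} (Q : Finset ℕ) (hh : ∀ p ∈ Q, 0 ≤ h p ∧ h p ≤ 1) (m : ℕ) :
    0 ≤ (-1) ^ m * (ev (cT m) Q h - ∏ p ∈ Q, (1 - h p)) := by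
  induction Q using Finset.induction_on generalizing m with
  | empty => simp [ev, cT]
  | insert p Q hp ih =>
    have hQ : ∀ q ∈ Q, 0 ≤ h q ∧ h q ≤ 1 := fun q hq => hh q (mem_insert_of_mem hq)
    cases m with
    | zero =>
      rw [ev_cT_zero, pow_zero, one_mul, sub_nonneg]
      exact prod_le_one (fun q hq => by linarith [(hh q hq).2]) (fun q hq => by linarith [(hh q hq).1])
    | succ m =>
      rw [ev_cT_insert m hp, prod_insert hp]
      have h1 := ih hQ (m + 1)
      have h2 := mul_nonneg (hh p (mem_insert_self _ _)).1 (ih hQ m)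
      rw [pow_succ] at *
      linarith

lemma ev_cT_succ (m : ℕ) (Q : Finset ℕ) (h : ℕ → ℝ) :
    ev (cT (m + 1)) Q h = ev (cT m) Q h + (-1) ^ (m + 1) * ev (cE (m + 1)) Q h := by
  rw [ev, ev, ev, mul_sum, ← sum_add_distrib]
  refine sum_congr rfl fun S _ => ?_
  rw [cT, cT, cE]
  rcases lt_trichotomy #S (m + 1) with h1 | h1 | h1
  · rw [if_pos h1.le, if_pos (by omega), if_neg h1.ne]; ring
  · rw [if_pos h1.le, if_neg (by omega), if_pos h1, h1]; ring
  · rw [if_neg (by omega), if_neg (by omega), if_neg h1.ne']; ring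

lemma le_ev_cT {h : ℕ → ℝ} (Q : Finset ℕ) (hh : ∀ p ∈ Q, 0 ≤ h p ∧ h p ≤ 1) (b : ℕ) :
    ∏ p ∈ Q, (1 - h p) ≤ ev (cT (2 * b)) Q h := by
  have := bonferroni Q hh (2 * b)
  rw [pow_mul] at this
  norm_num at this
  exact this

lemma ev_cT_le {h : ℕ → ℝ} (Q : Finset ℕ) (hh : ∀ p ∈ Q, 0 ≤ h p ∧ h p ≤ 1) (b : ℕ) :
    ev (cT (2 * b)) Q h ≤ ∏ p ∈ Q, (1 - h p) + ev (cE (2 * b + 1)) Q h := by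
  have := bonferroni Q hh (2 * b + 1)
  rw [ev_cT_succ, pow_succ, pow_mul] at this
  norm_num at this
  linarith

lemma ev_cE_nonneg {h : ℕ → ℝ} (Q : Finset ℕ) (hh : ∀ p ∈ Q, 0 ≤ h p) (m : ℕ) :
    0 ≤ ev (cE m) Q h := by
  refine sum_nonneg fun S hS => mul_nonneg ?_ (prod_nonneg fun p hp => hh p (mem_powerset.mp hS hp))
  rw [cE]; split_ifs <;> norm_num

lemma ev_cE_le {h : ℕ → ℝ} (Q : Finset ℕ) (hh : ∀ p ∈ Q, 0 ≤ h p) (m : ℕ) :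
    ev (cE m) Q h ≤ (1 / 2) ^ m * Real.exp (2 * ∑ p ∈ Q, h p) := by
  calc ev (cE m) Q h ≤ ∑ S ∈ Q.powerset, (1 / 2) ^ m * ∏ p ∈ S, (2 * h p) := by
        refine sum_le_sum fun S hS => ?_
        have hS0 : 0 ≤ ∏ p ∈ S, h p := prod_nonneg fun p hp => hh p (mem_powerset.mp hS hp)
        rw [cE, prod_mul_distrib, prod_const]
        split_ifs with hm
        · rw [hm, ← mul_assoc, ← mul_pow]; norm_num
        · rw [zero_mul]; positivity
    _ = (1 / 2) ^ m * ∏ p ∈ Q, (1 + 2 * h p) := by rw [← mul_sum, prod_one_add]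
    _ ≤ _ := by
        gcongr
        rw [mul_sum, Real.exp_sum]
        refine prod_le_prod (fun p hp => by linarith [hh p hp]) fun p _ => ?_
        linarith [Real.add_one_le_exp (2 * h p)]

lemma ev_union (c d : Finset ℕ → ℝ) {P Q : Finset ℕ} (hd : Disjoint P Q) (h : ℕ → ℝ) :
    ev (fun S => c (S ∩ P) * d (S ∩ Q)) (P ∪ Q) h = ev c P h * ev d Q h := by
  rw [ev, ev, ev, sum_mul_sum, ← sum_product']
  refine sum_bij' (fun S _ => (S ∩ P, S ∩ Q)) (fun x _ => x.1 ∪ x.2) ?_ ?_ ?_ ?_ ?_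
  · intro S _; simp
  · intro x hx
    rw [mem_product, mem_powerset, mem_powerset] at hx
    exact mem_powerset.mpr (union_subset_union hx.1 hx.2)
  · intro S hS
    rw [mem_powerset] at hS
    rw [← inter_union_distrib_left, inter_eq_left.mpr hS]
  · rintro ⟨A, B⟩ hx
    rw [mem_product, mem_powerset, mem_powerset] at hx
    simp only at hx ⊢
    rw [union_inter_distrib_right, union_inter_distrib_right, inter_eq_left.mpr hx.1,
      inter_eq_left.mpr hx.2, disjoint_iff_inter_eq_empty.mp (hd.symm.mono_left hx.2),
      disjoint_iff_inter_eq_empty.mp (hd.mono_left hx.1), union_empty, empty_union]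
  · intro S hS
    rw [mem_powerset] at hS
    have : ∏ p ∈ S, h p = (∏ p ∈ S ∩ P, h p) * ∏ p ∈ S ∩ Q, h p := by
      rw [← prod_union (hd.mono inter_subset_right inter_subset_right),
        ← inter_union_distrib_left, inter_eq_left.mpr hS]
    rw [this]; ring

lemma ev_sub (c d : Finset ℕ → ℝ) (Q : Finset ℕ) (h : ℕ → ℝ) :
    ev (fun S => c S - d S) Q h = ev c Q h - ev d Q h := by
  rw [ev, ev, ev, ← sum_sub_distrib]
  exact sum_congr rfl fun S _ => by ring

/-- The union of the first `k` blocks. -/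
def PP (P : ℕ → Finset ℕ) (k : ℕ) : Finset ℕ := (range k).biUnion P

lemma PP_succ (P : ℕ → Finset ℕ) (k : ℕ) : PP P (k + 1) = PP P k ∪ P k := by
  rw [PP, PP, range_add_one, biUnion_insert, union_comm]

/-- Upper bound sieve weights: the product over the blocks of even truncations. -/
noncomputable def lamU (P : ℕ → Finset ℕ) (b : ℕ → ℕ) : ℕ → Finset ℕ → ℝ
  | 0, _ => 1
  | k + 1, S => lamU P b k (S ∩ PP P k) * cT (2 * b k) (S ∩ P k)

/-- Brun–Hooley lower bound sieve weights. -/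
noncomputable def lamL (P : ℕ → Finset ℕ) (b : ℕ → ℕ) : ℕ → Finset ℕ → ℝ
  | 0, _ => 1
  | k + 1, S => lamL P b k (S ∩ PP P k) * cT (2 * b k) (S ∩ P k)
      - lamU P b k (S ∩ PP P k) * cE (2 * b k + 1) (S ∩ P k)

section
variable {P : ℕ → Finset ℕ} {b : ℕ → ℕ}

lemma disjoint_PP (hP : ∀ i j, i ≠ j → Disjoint (P i) (P j)) (k : ℕ) :
    Disjoint (PP P k) (P k) := by
  rw [PP, disjoint_biUnion_left]
  exact fun i hi => hP i k (by rw [mem_range] at hi; omega)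

lemma ev_lamU_succ (hP : ∀ i j, i ≠ j → Disjoint (P i) (P j)) (k : ℕ) (h : ℕ → ℝ) :
    ev (lamU P b (k + 1)) (PP P (k + 1)) h
      = ev (lamU P b k) (PP P k) h * ev (cT (2 * b k)) (P k) h := by
  rw [PP_succ, ← ev_union _ _ (disjoint_PP hP k)]
  rfl

lemma ev_lamL_succ (hP : ∀ i j, i ≠ j → Disjoint (P i) (P j)) (k : ℕ) (h : ℕ → ℝ) :
    ev (lamL P b (k + 1)) (PP P (k + 1)) h
      = ev (lamL P b k) (PP P k) h * ev (cT (2 * b k)) (P k) h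
        - ev (lamU P b k) (PP P k) h * ev (cE (2 * b k + 1)) (P k) h := by
  rw [PP_succ, ← ev_union _ _ (disjoint_PP hP k), ← ev_union _ _ (disjoint_PP hP k), ← ev_sub]
  rfl

lemma prod_PP_succ (hP : ∀ i j, i ≠ j → Disjoint (P i) (P j)) (k : ℕ) (f : ℕ → ℝ) :
    ∏ p ∈ PP P (k + 1), f p = (∏ p ∈ PP P k, f p) * ∏ p ∈ P k, f p := by
  rw [PP_succ, prod_union (disjoint_PP hP k)]

lemma abs_cT_le (m : ℕ) (S : Finset ℕ) : |cT m S| ≤ 1 := by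
  rw [cT]; split_ifs <;> simp

lemma abs_lamU_le (k : ℕ) (S : Finset ℕ) : |lamU P b k S| ≤ 1 := by
  induction k generalizing S with
  | zero => simp [lamU]
  | succ k ih =>
    rw [lamU, abs_mul]
    exact mul_le_one₀ (ih _) (abs_nonneg _) (abs_cT_le _ _)

lemma abs_lamL_le (k : ℕ) (S : Finset ℕ) : |lamL P b k S| ≤ 1 := by
  induction k generalizing S with
  | zero => simp [lamL]
  | succ k ih =>
    rw [lamL]
    by_cases hc : #(S ∩ P k) = 2 * b k + 1
    · rw [cT, cE, if_neg (by omega), if_pos hc, mul_zero, zero_sub, abs_neg, mul_one]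
      exact abs_lamU_le k _
    · rw [cE, if_neg hc, mul_zero, sub_zero, abs_mul]
      exact mul_le_one₀ (ih _) (abs_nonneg _) (abs_cT_le _ _)

lemma inter_PP_inter {i k : ℕ} (hik : i < k) (S : Finset ℕ) : S ∩ PP P k ∩ P i = S ∩ P i := by
  rw [inter_assoc]
  congr 1
  exact inter_eq_right.mpr (subset_biUnion_of_mem P (mem_range.mpr hik))

lemma lamU_support (k : ℕ) (S : Finset ℕ) (hS : lamU P b k S ≠ 0) :
    ∀ i < k, #(S ∩ P i) ≤ 2 * b i + 1 := by
  induction k generalizing S with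
  | zero => intro i hi; omega
  | succ k ih =>
    rw [lamU] at hS
    intro i hi
    rcases Nat.lt_succ_iff_lt_or_eq.mp hi with hik | rfl
    · rw [← inter_PP_inter hik S]
      exact ih _ (left_ne_zero_of_mul hS) i hik
    · by_contra hc
      refine right_ne_zero_of_mul hS ?_
      rw [cT, if_neg (by omega)]

lemma lamL_support (k : ℕ) (S : Finset ℕ) (hS : lamL P b k S ≠ 0) :
    ∀ i < k, #(S ∩ P i) ≤ 2 * b i + 1 := by
  induction k generalizing S with
  | zero => intro i hi; omega
  | succ k ih =>
    rw [lamL] at hS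
    intro i hi
    rcases Nat.lt_succ_iff_lt_or_eq.mp hi with hik | rfl
    · rw [← inter_PP_inter hik S]
      by_cases h0 : lamL P b k (S ∩ PP P k) = 0
      · rw [h0, zero_mul, zero_sub, neg_ne_zero] at hS
        exact lamU_support k _ (left_ne_zero_of_mul hS) i hik
      · exact ih _ h0 i hik
    · by_contra hc
      refine hS ?_
      rw [cT, cE, if_neg (by omega), if_neg (by omega)]
      ring

/-- The weights `lamU` give an upper bound and `lamL` a lower bound for the sifting product. -/
lemma ev_lamL_le (hP : ∀ i j, i ≠ j → Disjoint (P i) (P j)) {h : ℕ → ℝ}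
    (hh : ∀ p, 0 ≤ h p ∧ h p ≤ 1) (k : ℕ) :
    ∏ p ∈ PP P k, (1 - h p) ≤ ev (lamU P b k) (PP P k) h ∧
      ev (lamL P b k) (PP P k) h ≤ ∏ p ∈ PP P k, (1 - h p) := by
  induction k with
  | zero => simp [PP, ev, lamU, lamL]
  | succ k ih =>
    rw [ev_lamU_succ hP, ev_lamL_succ hP, prod_PP_succ hP]
    have hV : 0 ≤ ∏ p ∈ PP P k, (1 - h p) := prod_nonneg fun p _ => by linarith [(hh p).2]
    have hv : 0 ≤ ∏ p ∈ P k, (1 - h p) := prod_nonneg fun p _ => by linarith [(hh p).2]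
    have h1 := le_ev_cT (P k) (fun p _ => hh p) (b k)
    have h2 := ev_cT_le (P k) (fun p _ => hh p) (b k)
    have h3 := ev_cE_nonneg (P k) (fun p _ => (hh p).1) (2 * b k + 1)
    obtain ⟨ihU, ihL⟩ := ih
    constructor
    · exact mul_le_mul ihU h1 hv (hV.trans ihU)
    · nlinarith

lemma prod_one_sub_ge {g : ℕ → ℝ} (Q : Finset ℕ) (hg : ∀ p ∈ Q, 0 ≤ g p ∧ g p ≤ 1 / 2) :
    Real.exp (-(2 * ∑ p ∈ Q, g p)) ≤ ∏ p ∈ Q, (1 - g p) := by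
  rw [mul_sum, ← sum_neg_distrib, Real.exp_sum]
  refine prod_le_prod (fun p _ => (Real.exp_pos _).le) fun p hp => ?_
  obtain ⟨h0, h1⟩ := hg p hp
  -- `e ^ (-2g) ≤ 1 / (1 + 2g) ≤ 1 - g`
  rw [Real.exp_neg]
  have h2 := Real.add_one_le_exp (2 * g p)
  refine (inv_anti₀ (by linarith) h2).trans ?_
  rw [inv_le_iff_one_le_mul₀ (by linarith)]
  nlinarith

/-- The lower bound sieve keeps at least half of the expected main term. -/
lemma le_ev_lamL (hP : ∀ i j, i ≠ j → Disjoint (P i) (P j)) {g : ℕ → ℝ} {G : ℝ}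
    (hg : ∀ i, ∀ p ∈ P i, 0 ≤ g p ∧ g p ≤ 1 / 2) (hG : ∀ i, ∑ p ∈ P i, g p ≤ G) (t : ℕ)
    (hb : ∑ i ∈ range t, (1 / 2) ^ (2 * b i + 1) * Real.exp (4 * G) ≤ 1 / 4) :
    1 / 2 * Real.exp (-(2 * G * t)) ≤ ev (lamL P b t) (PP P t) g := by
  set ε : ℕ → ℝ := fun i => (1 / 2) ^ (2 * b i + 1) * Real.exp (4 * G) with hε
  have hε0 : ∀ i, 0 ≤ ε i := fun i => by positivity
  have hg1 : ∀ i, ∀ p ∈ P i, 0 ≤ g p ∧ g p ≤ 1 := fun i p hp =>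
    ⟨(hg i p hp).1, by linarith [(hg i p hp).2]⟩
  have hv : ∀ i, Real.exp (-(2 * G)) ≤ ∏ p ∈ P i, (1 - g p) := fun i =>
    le_trans (Real.exp_le_exp.mpr (by linarith [hG i])) (prod_one_sub_ge (P i) (hg i))
  have he : ∀ i, ev (cE (2 * b i + 1)) (P i) g ≤ ε i * ∏ p ∈ P i, (1 - g p) := by
    intro i
    calc _ ≤ (1 / 2) ^ (2 * b i + 1) * Real.exp (2 * ∑ p ∈ P i, g p) :=
          ev_cE_le (P i) (fun p hp => (hg i p hp).1) _
      _ ≤ (1 / 2) ^ (2 * b i + 1) * Real.exp (2 * G) := by gcongr; exact hG i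
      _ = ε i * Real.exp (-(2 * G)) := by
          rw [hε]; simp only; rw [mul_assoc, ← Real.exp_add]; congr 2; ring
      _ ≤ _ := by gcongr; exact hv i
  have key : ∀ k ≤ t, 0 ≤ ev (lamU P b k) (PP P k) g ∧ Real.exp (-(2 * G * k)) ≤ ∏ p ∈ PP P k, (1 - g p) ∧
      ev (lamU P b k) (PP P k) g ≤ Real.exp (∑ i ∈ range k, ε i) * ∏ p ∈ PP P k, (1 - g p) ∧
      (1 - 2 * ∑ i ∈ range k, ε i) * ∏ p ∈ PP P k, (1 - g p) ≤ ev (lamL P b k) (PP P k) g := by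
    intro k
    induction k with
    | zero => intro _; simp [PP, ev, lamU, lamL]
    | succ k ih =>
      intro hk
      obtain ⟨ih0, ihV, ihU, ihL⟩ := ih (by omega)
      rw [ev_lamU_succ hP, ev_lamL_succ hP, prod_PP_succ hP, sum_range_succ]
      set V := ∏ p ∈ PP P k, (1 - g p)
      set v := ∏ p ∈ P k, (1 - g p)
      set s := ∑ i ∈ range k, ε i
      set U := ev (lamU P b k) (PP P k) g
      set L := ev (lamL P b k) (PP P k) g
      have hs : s ≤ 1 / 4 := le_trans (sum_le_sum_of_subset_of_nonneg
        (range_subset_range.mpr (by omega)) fun i _ _ => hε0 i) hb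
      have hV : 0 < V := (Real.exp_pos _).trans_le ihV
      have hvk : 0 < v := (Real.exp_pos _).trans_le (hv k)
      have h1 : v ≤ _ := le_ev_cT (P k) (hg1 k) (b k)
      have h2 : _ ≤ v + _ := ev_cT_le (P k) (hg1 k) (b k)
      have h3 := ev_cE_nonneg (P k) (fun p hp => (hg k p hp).1) (2 * b k + 1)
      have h4 : _ ≤ ε k * v := he k
      set T := ev (cT (2 * b k)) (P k) g
      set e := ev (cE (2 * b k + 1)) (P k) g
      refine ⟨mul_nonneg ih0 (hvk.le.trans h1), ?_, ?_, ?_⟩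
      · calc _ = Real.exp (-(2 * G * k)) * Real.exp (-(2 * G)) := by
              rw [← Real.exp_add]; congr 1; push_cast; ring
          _ ≤ V * v := by gcongr; exact hv k
      · have h5 : T ≤ Real.exp (ε k) * v := by
          have := Real.add_one_le_exp (ε k)
          nlinarith
        calc U * T ≤ (Real.exp s * V) * (Real.exp (ε k) * v) := by
              have hT0 : 0 ≤ T := hvk.le.trans h1
              gcongr
          _ = _ := by rw [Real.exp_add]; ring
      · have hs2 : Real.exp s ≤ 2 := by
          calc Real.exp s ≤ Real.exp (1 / 4) := Real.exp_le_exp.mpr hs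
            _ ≤ 2 := by
              rw [← Real.le_log_iff_exp_le (by norm_num)]
              linarith [Real.log_two_gt_d9]
        have h6 : U * e ≤ 2 * V * (ε k * v) := by
          calc U * e ≤ (Real.exp s * V) * (ε k * v) := by gcongr
            _ ≤ _ := by gcongr
        have hL0 : 0 ≤ (1 - 2 * s) * V := mul_nonneg (by linarith) hV.le
        have h7 : (1 - 2 * s) * V * v ≤ L * T :=
          mul_le_mul ihL h1 hvk.le (hL0.trans ihL)
        nlinarith
  obtain ⟨-, h1, -, h2⟩ := key t le_rfl
  refine le_trans ?_ h2
  have : (1 : ℝ) / 2 ≤ 1 - 2 * ∑ i ∈ range t, ε i := by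
    have : ∑ i ∈ range t, ε i ≤ 1 / 4 := hb
    linarith
  gcongr

end
end SmallOmega

/-! ### Sifting primes and densities -/

namespace SmallOmega

open Finset ArithmeticFunction Filter

/-- The `i`-th block of sifting primes. -/
def blk (w i : ℕ) : Finset ℕ := (Ioc (w ^ 2 ^ i) (w ^ 2 ^ (i + 1))).filter Nat.Prime

lemma blk_disjoint {w : ℕ} (hw : 1 ≤ w) (i k : ℕ) (hik : i ≠ k) : Disjoint (blk w i) (blk w k) := by
  wlog h : i < k generalizing i k
  · exact (this k i hik.symm (by omega)).symm
  · refine disjoint_left.mpr fun p hp hp' => ?_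
    rw [blk, mem_filter, mem_Ioc] at hp hp'
    have : w ^ 2 ^ (i + 1) ≤ w ^ 2 ^ k :=
      Nat.pow_le_pow_right hw (Nat.pow_le_pow_right (by norm_num) h)
    omega

lemma PP_blk {w : ℕ} (hw : 1 ≤ w) (t : ℕ) :
    PP (blk w) t = (Ioc w (w ^ 2 ^ t)).filter Nat.Prime := by
  induction t with
  | zero => simp [PP]
  | succ t ih =>
    rw [PP_succ, ih, blk, ← filter_union, Ioc_union_Ioc_eq_Ioc]
    · exact Nat.le_self_pow (by positivity) w
    · exact Nat.pow_le_pow_right hw (Nat.pow_le_pow_right (by norm_num) (by omega))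

lemma lt_of_mem_blk {w i p : ℕ} (hp : p ∈ blk w i) : w < p := by
  rw [blk, mem_filter, mem_Ioc] at hp
  exact lt_of_le_of_lt (Nat.le_self_pow (by positivity) w) hp.1.1

lemma sum_blk_inv_le {w : ℕ} (hw : 3 ≤ w) (i : ℕ) : ∑ p ∈ blk w i, 1 / (p : ℝ) ≤ 24 := by
  set x := w ^ 2 ^ i with hx
  have hx3 : 3 ≤ x := hw.trans (Nat.le_self_pow (by positivity) w)
  have hxx : w ^ 2 ^ (i + 1) = x ^ 2 := by rw [hx, ← pow_mul, pow_succ]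
  have hlog : 1 ≤ Real.log x := by
    rw [Real.le_log_iff_exp_le (by positivity)]
    have : (3 : ℝ) ≤ x := by exact_mod_cast hx3
    linarith [Real.exp_one_lt_d9]
  have h1 : Real.log x * ∑ p ∈ blk w i, 1 / (p : ℝ) ≤ 6 * (2 + 2 * Real.log x) := by
    have h2 := sum_vonMangoldt_div_le (x ^ 2) (by nlinarith)
    have h3 : Real.log ((x ^ 2 : ℕ) : ℝ) = 2 * Real.log x := by
      push_cast; rw [Real.log_pow]; norm_num
    rw [h3] at h2
    refine le_trans ?_ h2
    rw [mul_sum]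
    calc _ ≤ ∑ p ∈ blk w i, Λ p / p := by
          refine sum_le_sum fun p hp => ?_
          rw [blk, mem_filter, mem_Ioc] at hp
          rw [vonMangoldt_apply_prime hp.2, mul_one_div]
          gcongr
          exact hp.1.1.le
      _ ≤ _ := by
          refine sum_le_sum_of_subset_of_nonneg (fun p hp => ?_) fun p _ _ =>
            div_nonneg vonMangoldt_nonneg (by positivity)
          rw [blk, mem_filter, mem_Ioc, hxx] at hp
          rw [mem_Ioc]
          exact ⟨hp.2.pos, hp.1.2⟩
  nlinarith

/-- The number of `n`-th roots of unity modulo `p`. -/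
def rho (n p : ℕ) : ℕ := #((range p).filter fun b => b ^ n ≡ 1 [MOD p])

lemma rho_le {n p : ℕ} (hn : 0 < n) (hp : p.Prime) : rho n p ≤ n := by
  have : Fact p.Prime := ⟨hp⟩
  refine le_trans ?_ (Polynomial.card_nthRoots n (1 : ZMod p))
  refine le_trans ?_ (Multiset.toFinset_card_le _)
  refine card_le_card_of_injOn (fun b : ℕ => (b : ZMod p)) ?_ ?_
  · intro b hb
    simp only [coe_filter, mem_range, Set.mem_ofPred_eq] at hb
    simp only [Multiset.mem_toFinset, mem_coe, Polynomial.mem_nthRoots hn]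
    have := (ZMod.natCast_eq_natCast_iff _ _ _).mpr hb.2
    exact_mod_cast this
  · intro a ha b hb hab
    simp only [coe_filter, mem_range, Set.mem_ofPred_eq] at ha hb
    have := (ZMod.natCast_eq_natCast_iff _ _ _).mp hab
    exact Nat.ModEq.eq_of_lt_of_lt this ha.1 hb.1

/-- The density of the primes `r` with `p ∣ r ^ n - 1`. -/
noncomputable def gg (n p : ℕ) : ℝ := rho n p / ((p : ℝ) - 1)

lemma gg_nonneg (n : ℕ) {p : ℕ} (hp : 1 ≤ p) : 0 ≤ gg n p := by
  have : (1 : ℝ) ≤ p := by exact_mod_cast hp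
  exact div_nonneg (by positivity) (by linarith)

lemma gg_le_div {n p : ℕ} (hn : 0 < n) (hp : p.Prime) : gg n p ≤ 2 * n / p := by
  have h2 : (2 : ℝ) ≤ p := by exact_mod_cast hp.two_le
  have hr : (rho n p : ℝ) ≤ n := by exact_mod_cast rho_le hn hp
  rw [gg, div_le_div_iff₀ (by linarith) (by linarith)]
  have hn0 : (0 : ℝ) ≤ n := by positivity
  nlinarith

lemma gg_le_inv_sqrt {n p : ℕ} (hn : 0 < n) (hp : p.Prime) (h : 4 * n ^ 2 ≤ p) :
    gg n p ≤ 1 / Real.sqrt p := by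
  have hp0 : (0 : ℝ) < p := by exact_mod_cast hp.pos
  refine (gg_le_div hn hp).trans ?_
  have hs : 0 < Real.sqrt p := Real.sqrt_pos.mpr hp0
  have h2 : 2 * (n : ℝ) ≤ Real.sqrt p := by
    refine Real.le_sqrt_of_sq_le ?_
    have : (4 * (n : ℝ) ^ 2) ≤ p := by exact_mod_cast h
    linarith
  rw [div_le_div_iff₀ hp0 hs, one_mul]
  nth_rewrite 2 [← Real.mul_self_sqrt hp0.le]
  gcongr

lemma gg_le_half {n p : ℕ} (hn : 0 < n) (hp : p.Prime) (h : 4 * n ^ 2 ≤ p) :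
    gg n p ≤ 1 / 2 := by
  refine (gg_le_div hn hp).trans ?_
  have hp0 : (0 : ℝ) < p := by exact_mod_cast hp.pos
  rw [div_le_div_iff₀ hp0 (by norm_num)]
  have : (4 * n : ℝ) ≤ p := by
    have : 4 * n ≤ p := le_trans (by nlinarith) h
    exact_mod_cast this
  linarith

lemma sum_blk_gg_le {n w : ℕ} (hn : 0 < n) (hw : 3 ≤ w) (i : ℕ) :
    ∑ p ∈ blk w i, gg n p ≤ 48 * n := by
  calc _ ≤ ∑ p ∈ blk w i, 2 * n * (1 / (p : ℝ)) := by
        refine sum_le_sum fun p hp => ?_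
        rw [mul_one_div]
        exact gg_le_div hn (mem_filter.mp hp).2
    _ = 2 * n * ∑ p ∈ blk w i, 1 / (p : ℝ) := by rw [mul_sum]
    _ ≤ 2 * n * 24 := by gcongr; exact sum_blk_inv_le hw i
    _ = _ := by ring

lemma exponent_sum (c t : ℕ) :
    ∑ i ∈ range t, 2 ^ (i + 1) * (c + 2 * (t - 1 - i)) + (2 * c + 4 * t + 4)
      = 2 ^ t * (2 * c + 4) := by
  induction t with
  | zero => simp
  | succ t ih =>
    rw [sum_range_succ']
    have : ∑ k ∈ range t, 2 ^ (k + 1 + 1) * (c + 2 * (t + 1 - 1 - (k + 1)))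
        = 2 * ∑ i ∈ range t, 2 ^ (i + 1) * (c + 2 * (t - 1 - i)) := by
      rw [mul_sum]
      refine sum_congr rfl fun k _ => ?_
      rw [show t + 1 - 1 - (k + 1) = t - 1 - k by omega]
      ring
    rw [this]
    simp only [zero_add, pow_one, Nat.add_sub_cancel, Nat.sub_zero]
    rw [pow_succ]
    linarith

/-- The sieve weights are supported on products of size at most `z ^ (4 * b₀ + 6)`,
`z = w ^ 2 ^ t`. -/
lemma prod_le_of_support {w t b₀ : ℕ} (hw : 1 ≤ w) {S : Finset ℕ} (hS : S ⊆ PP (blk w) t)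
    (h : ∀ i < t, #(S ∩ blk w i) ≤ 2 * (b₀ + (t - 1 - i)) + 1) :
    ∏ p ∈ S, p ≤ (w ^ 2 ^ t) ^ (4 * b₀ + 6) := by
  have e : S = (range t).biUnion fun i => S ∩ blk w i := by
    rw [← inter_biUnion]
    exact (inter_eq_left.mpr hS).symm
  calc ∏ p ∈ S, p = ∏ i ∈ range t, ∏ p ∈ S ∩ blk w i, p := by
        conv_lhs => rw [e]
        refine prod_biUnion fun i _ k _ hik => ?_
        exact (blk_disjoint hw i k hik).mono inter_subset_right inter_subset_right
    _ ≤ ∏ i ∈ range t, w ^ (2 ^ (i + 1) * ((2 * b₀ + 1) + 2 * (t - 1 - i))) := by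
        refine prod_le_prod' fun i hi => ?_
        calc _ ≤ (w ^ 2 ^ (i + 1)) ^ #(S ∩ blk w i) := by
              refine prod_le_pow_card _ _ _ fun p hp => ?_
              have := mem_of_mem_inter_right hp
              rw [blk, mem_filter, mem_Ioc] at this
              exact this.1.2
          _ ≤ (w ^ 2 ^ (i + 1)) ^ ((2 * b₀ + 1) + 2 * (t - 1 - i)) := by
              refine Nat.pow_le_pow_right (Nat.one_le_pow _ _ hw) ?_
              have := h i (mem_range.mp hi)
              omega
          _ = _ := by rw [pow_mul]
    _ = w ^ ∑ i ∈ range t, 2 ^ (i + 1) * ((2 * b₀ + 1) + 2 * (t - 1 - i)) := by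
        rw [prod_pow_eq_pow_sum]
    _ ≤ w ^ (2 ^ t * (4 * b₀ + 6)) := by
        refine Nat.pow_le_pow_right hw ?_
        have := exponent_sum (2 * b₀ + 1) t
        have h2 : 2 ^ t * (2 * (2 * b₀ + 1) + 4) = 2 ^ t * (4 * b₀ + 6) := by ring
        omega
    _ = _ := by rw [pow_mul]

/-- A starting truncation level `b₀` for which the truncation errors of all blocks sum to at most
`1 / 4`. -/
lemma exists_b0 (E : ℝ) : ∃ b₀ : ℕ, ∀ t : ℕ,
    ∑ i ∈ range t, (1 / 2 : ℝ) ^ (2 * (b₀ + (t - 1 - i)) + 1) * Real.exp E ≤ 1 / 4 := by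
  obtain ⟨b₀, hb⟩ := exists_pow_lt_of_lt_one (by positivity : 0 < Real.exp (-E) / 4)
    (by norm_num : (1 / 4 : ℝ) < 1)
  refine ⟨b₀, fun t => ?_⟩
  rw [← sum_mul, sum_range_reflect (fun k => (1 / 2 : ℝ) ^ (2 * (b₀ + k) + 1)) t]
  have h1 : ∑ k ∈ range t, (1 / 2 : ℝ) ^ (2 * (b₀ + k) + 1)
      = (1 / 4) ^ b₀ * (1 / 2) * ∑ k ∈ range t, (1 / 4 : ℝ) ^ k := by
    rw [mul_sum]
    refine sum_congr rfl fun k _ => ?_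
    rw [pow_succ, pow_mul, pow_add]
    norm_num
    ring
  have h2 : ∑ k ∈ range t, (1 / 4 : ℝ) ^ k ≤ 2 := by
    rw [geom_sum_eq (by norm_num)]
    have : (0 : ℝ) ≤ (1 / 4) ^ t := by positivity
    rw [div_le_iff_of_neg (by norm_num)]
    linarith
  have h3 : (0 : ℝ) < (1 / 4) ^ b₀ := by positivity
  rw [h1]
  calc _ ≤ (1 / 4 : ℝ) ^ b₀ * (1 / 2) * 2 * Real.exp E := by gcongr
    _ = (1 / 4 : ℝ) ^ b₀ * Real.exp E := by ring
    _ ≤ Real.exp (-E) / 4 * Real.exp E := by gcongr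
    _ = (Real.exp (-E) * Real.exp E) / 4 := by ring
    _ = 1 / 4 := by rw [← Real.exp_add]; simp

end SmallOmega

/-! ### Residue classes and characters -/

namespace SmallOmega

open Finset ArithmeticFunction Filter

/-- The residues modulo `W * ∏ S` that are `a₀` modulo `W` and `n`-th roots of unity modulo the
elements of `S`. -/
def Bset (n W a₀ : ℕ) (S : Finset ℕ) : Finset ℕ :=
  (range (W * ∏ p ∈ S, p)).filter fun b => b ≡ a₀ [MOD W] ∧ ∀ p ∈ S, b ^ n ≡ 1 [MOD p]

lemma coprime_prod {W p : ℕ} {S : Finset ℕ} (hp : p.Prime) (hS : ∀ q ∈ S, q.Prime) (hpS : p ∉ S)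
    (hpW : ¬ p ∣ W) : (W * ∏ q ∈ S, q).Coprime p := by
  refine Nat.Coprime.mul_left ((hp.coprime_iff_not_dvd.mpr hpW).symm) ?_
  refine Nat.Coprime.prod_left fun q hq => ?_
  exact (Nat.coprime_primes (hS q hq) hp).mpr fun h => hpS (h ▸ hq)

lemma card_Bset {n W a₀ : ℕ} (hW : 0 < W) {S : Finset ℕ} (hS : ∀ p ∈ S, p.Prime ∧ ¬ p ∣ W) :
    #(Bset n W a₀ S) = ∏ p ∈ S, rho n p := by
  induction S using Finset.induction_on with
  | empty =>
    rw [prod_empty, card_eq_one]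
    refine ⟨a₀ % W, ?_⟩
    ext b
    simp only [Bset, prod_empty, mul_one, mem_filter, mem_range, notMem_empty, false_imp_iff,
      implies_true, and_true, mem_singleton]
    constructor
    · rintro ⟨h1, h2⟩
      rw [← Nat.mod_eq_of_lt h1]; exact h2
    · rintro rfl
      exact ⟨Nat.mod_lt _ hW, Nat.mod_modEq _ _⟩
  | insert p S hpS ih =>
    have hp := (hS p (mem_insert_self _ _)).1
    have hS' : ∀ q ∈ S, q.Prime ∧ ¬ q ∣ W := fun q hq => hS q (mem_insert_of_mem hq)
    have hco := coprime_prod hp (fun q hq => (hS' q hq).1) hpS (hS p (mem_insert_self _ _)).2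
    rw [prod_insert hpS, ← ih hS', rho, mul_comm, ← card_product]
    set q := W * ∏ p ∈ S, p with hq
    have hq0 : q ≠ 0 := by
      rw [hq]
      exact mul_ne_zero hW.ne' (prod_ne_zero_iff.mpr fun r hr => (hS' r hr).1.ne_zero)
    have hqp : W * ∏ p ∈ insert p S, p = q * p := by rw [prod_insert hpS, hq]; ring
    have hdiv : ∀ r ∈ S, r ∣ q := fun r hr => (dvd_prod_of_mem _ hr).mul_left W
    have hWq : W ∣ q := dvd_mul_right _ _
    have hq0' := Nat.pos_of_ne_zero hq0
    refine card_nbij' (fun b => (b % q, b % p)) (fun x => Nat.chineseRemainder hco x.1 x.2) ?_ ?_ ?_ ?_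
    · intro b hb
      rw [mem_coe, Bset, mem_filter, hqp, mem_range] at hb
      rw [mem_coe, mem_product, Bset, mem_filter, mem_filter, mem_range, mem_range]
      refine ⟨⟨Nat.mod_lt _ hq0', ?_, fun r hr => ?_⟩, Nat.mod_lt _ hp.pos, ?_⟩
      · exact ((Nat.mod_modEq b q).of_dvd hWq).trans hb.2.1
      · exact (((Nat.mod_modEq b q).of_dvd (hdiv r hr)).pow n).trans
          (hb.2.2 r (mem_insert_of_mem hr))
      · exact ((Nat.mod_modEq b p).pow n).trans (hb.2.2 p (mem_insert_self _ _))
    · rintro ⟨x, y⟩ hx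
      rw [mem_coe, mem_product, Bset, mem_filter, mem_filter, mem_range, mem_range] at hx
      rw [mem_coe, Bset, mem_filter, hqp, mem_range]
      obtain ⟨h1, h2⟩ := (Nat.chineseRemainder hco x y).2
      refine ⟨Nat.chineseRemainder_lt_mul hco x y hq0 hp.ne_zero, ?_, ?_⟩
      · exact (h1.of_dvd hWq).trans hx.1.2.1
      · intro r hr
        rcases mem_insert.mp hr with rfl | hr
        · exact (h2.pow n).trans hx.2.2
        · exact ((h1.of_dvd (hdiv r hr)).pow n).trans (hx.1.2.2 r hr)
    · intro b hb
      rw [mem_coe, Bset, mem_filter, hqp, mem_range] at hb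
      obtain ⟨h1, h2⟩ := (Nat.chineseRemainder hco (b % q) (b % p)).2
      refine Nat.ModEq.eq_of_lt_of_lt ?_
        (Nat.chineseRemainder_lt_mul hco _ _ hq0 hp.ne_zero) hb.1
      exact (Nat.modEq_and_modEq_iff_modEq_mul hco).mp
        ⟨h1.trans (Nat.mod_modEq _ _), h2.trans (Nat.mod_modEq _ _)⟩
    · rintro ⟨x, y⟩ hx
      rw [mem_coe, mem_product, Bset, mem_filter, mem_filter, mem_range, mem_range] at hx
      obtain ⟨h1, h2⟩ := (Nat.chineseRemainder hco x y).2
      refine Prod.ext ?_ ?_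
      · exact Nat.mod_eq_of_modEq h1 hx.1.1
      · exact Nat.mod_eq_of_modEq h2 hx.2.1

lemma totient_prod {W : ℕ} {S : Finset ℕ} (hS : ∀ p ∈ S, p.Prime ∧ ¬ p ∣ W) :
    (W * ∏ p ∈ S, p).totient = W.totient * ∏ p ∈ S, (p - 1) := by
  induction S using Finset.induction_on with
  | empty => simp
  | insert p S hpS ih =>
    have hp := (hS p (mem_insert_self _ _)).1
    have hS' : ∀ q ∈ S, q.Prime ∧ ¬ q ∣ W := fun q hq => hS q (mem_insert_of_mem hq)
    have hco := coprime_prod hp (fun q hq => (hS' q hq).1) hpS (hS p (mem_insert_self _ _)).2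
    rw [prod_insert hpS, prod_insert hpS, show W * (p * ∏ x ∈ S, x) = (W * ∏ x ∈ S, x) * p by ring,
      Nat.totient_mul hco, ih hS', Nat.totient_prime hp]
    ring

lemma card_div_totient {n W a₀ : ℕ} (hW : 0 < W) {S : Finset ℕ}
    (hS : ∀ p ∈ S, p.Prime ∧ ¬ p ∣ W) :
    (#(Bset n W a₀ S) : ℝ) / (W * ∏ p ∈ S, p).totient = (∏ p ∈ S, gg n p) / W.totient := by
  have e : ∏ p ∈ S, gg n p = (∏ p ∈ S, (rho n p : ℝ)) / ∏ p ∈ S, ((p - 1 : ℕ) : ℝ) := by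
    rw [← prod_div_distrib]
    refine prod_congr rfl fun p hp => ?_
    rw [gg, Nat.cast_sub (hS p hp).1.one_le, Nat.cast_one]
  rw [card_Bset hW hS, totient_prod hS, e]
  push_cast
  rw [div_div, mul_comm]

/-- Detecting a set of reduced residue classes with characters. -/
lemma residue_error {q : ℕ} [NeZero q] {B : Finset ℕ} (hBq : ∀ b ∈ B, b < q)
    (hBc : ∀ b ∈ B, b.Coprime q) (j a N : ℕ) (ha : q ≤ a) :
    |∑ r ∈ Ioc a N with r.Prime, (if r % q ∈ B then wt j r else 0)
      - (#B : ℝ) / q.totient * ∑ r ∈ Ioc a N with r.Prime, wt j r| ≤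
    (#B : ℝ) / q.totient * ∑ χ : DirichletCharacter ℂ q with χ ≠ 1,
      ‖∑ r ∈ Ioc a N with r.Prime, χ r * (wt j r : ℂ)‖ := by
  classical
  have hφ : (0 : ℝ) < q.totient := by exact_mod_cast Nat.totient_pos.mpr (NeZero.pos q)
  set R := (Ioc a N).filter Nat.Prime with hR
  set Sχ : DirichletCharacter ℂ q → ℂ := fun χ => ∑ r ∈ R, χ r * (wt j r : ℂ) with hSχ
  have hunit : ∀ b ∈ B, IsUnit (b : ZMod q) := fun b hb =>
    (ZMod.isUnit_iff_coprime b q).mpr (hBc b hb)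
  have hexp : (q.totient : ℂ) * ((∑ r ∈ R, (if r % q ∈ B then wt j r else 0) : ℝ) : ℂ)
      = ∑ χ : DirichletCharacter ℂ q, (∑ b ∈ B, χ (b : ZMod q)⁻¹) * Sχ χ := by
    have h1 : ∀ r : ℕ, (q.totient : ℂ) * (((if r % q ∈ B then wt j r else 0 : ℝ)) : ℂ)
        = ∑ b ∈ B, (∑ χ : DirichletCharacter ℂ q, χ (b : ZMod q)⁻¹ * χ r) * (wt j r : ℂ) := by
      intro r
      have h2 : ∀ b ∈ B, ∑ χ : DirichletCharacter ℂ q, χ (b : ZMod q)⁻¹ * χ r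
          = if b = r % q then (q.totient : ℂ) else 0 := by
        intro b hb
        rw [DirichletCharacter.sum_char_inv_mul_char_eq ℂ (hunit b hb)]
        congr 1
        rw [ZMod.natCast_eq_natCast_iff, eq_iff_iff]
        constructor
        · intro h; exact (Nat.mod_eq_of_lt (hBq b hb)).symm.trans h
        · intro h; rw [h]; exact Nat.mod_modEq _ _
      rw [← sum_mul, sum_congr rfl h2, sum_ite_eq']
      split_ifs <;> simp
    rw [Complex.ofReal_sum, mul_sum, sum_congr rfl fun r _ => h1 r]
    simp only [hSχ, sum_mul]
    rw [sum_comm]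
    have h4 : ∀ b ∈ B, ∑ r ∈ R, ∑ χ : DirichletCharacter ℂ q, χ (b : ZMod q)⁻¹ * χ r * (wt j r : ℂ)
        = ∑ χ : DirichletCharacter ℂ q, ∑ r ∈ R, χ (b : ZMod q)⁻¹ * (χ r * (wt j r : ℂ)) := by
      intro b _
      rw [sum_comm]
      exact sum_congr rfl fun χ _ => sum_congr rfl fun r _ => by ring
    rw [sum_congr rfl h4, sum_comm]
    simp only [mul_sum]
  have hone : (∑ b ∈ B, (1 : DirichletCharacter ℂ q) (b : ZMod q)⁻¹) * Sχ 1
      = (#B : ℂ) * ((∑ r ∈ R, wt j r : ℝ) : ℂ) := by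
    congr 1
    · rw [← nsmul_one, ← sum_const]
      refine sum_congr rfl fun b hb => ?_
      refine MulChar.one_apply ?_
      obtain ⟨u, hu⟩ := hunit b hb
      rw [← hu, ZMod.inv_coe_unit]
      exact Units.isUnit _
    · rw [hSχ]
      push_cast
      refine sum_congr rfl fun r hr => ?_
      rw [hR, mem_filter, mem_Ioc] at hr
      rw [MulChar.one_apply, one_mul]
      rw [ZMod.isUnit_iff_coprime, hr.2.coprime_iff_not_dvd]
      exact fun h => absurd (Nat.le_of_dvd (NeZero.pos q) h) (by omega)
  have hsplit : (q.totient : ℂ) * ((∑ r ∈ R, (if r % q ∈ B then wt j r else 0) : ℝ) : ℂ)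
      - (#B : ℂ) * ((∑ r ∈ R, wt j r : ℝ) : ℂ)
      = ∑ χ : DirichletCharacter ℂ q with χ ≠ 1, (∑ b ∈ B, χ (b : ZMod q)⁻¹) * Sχ χ := by
    rw [hexp, ← hone, ← sum_filter_add_sum_filter_not univ (fun χ : DirichletCharacter ℂ q => χ ≠ 1)]
    have : (univ.filter fun χ : DirichletCharacter ℂ q => ¬ χ ≠ 1) = {1} := by
      ext χ; simp
    rw [this, sum_singleton]
    ring
  have hnorm : ‖(q.totient : ℂ) * ((∑ r ∈ R, (if r % q ∈ B then wt j r else 0) : ℝ) : ℂ)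
      - (#B : ℂ) * ((∑ r ∈ R, wt j r : ℝ) : ℂ)‖
      ≤ #B * ∑ χ : DirichletCharacter ℂ q with χ ≠ 1, ‖Sχ χ‖ := by
    rw [hsplit, mul_sum]
    refine (norm_sum_le _ _).trans (sum_le_sum fun χ _ => ?_)
    rw [norm_mul]
    gcongr
    calc ‖∑ b ∈ B, χ (b : ZMod q)⁻¹‖ ≤ ∑ b ∈ B, 1 :=
          (norm_sum_le _ _).trans (sum_le_sum fun b _ => DirichletCharacter.norm_le_one _ _)
      _ = #B := by simp
  have hcast : ‖(q.totient : ℂ) * ((∑ r ∈ R, (if r % q ∈ B then wt j r else 0) : ℝ) : ℂ)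
      - (#B : ℂ) * ((∑ r ∈ R, wt j r : ℝ) : ℂ)‖
      = q.totient * |∑ r ∈ R, (if r % q ∈ B then wt j r else 0)
        - (#B : ℝ) / q.totient * ∑ r ∈ R, wt j r| := by
    have : (q.totient : ℂ) * ((∑ r ∈ R, (if r % q ∈ B then wt j r else 0) : ℝ) : ℂ)
      - (#B : ℂ) * ((∑ r ∈ R, wt j r : ℝ) : ℂ) = ((q.totient * (∑ r ∈ R, (if r % q ∈ B then wt j r else 0)
        - (#B : ℝ) / q.totient * ∑ r ∈ R, wt j r) : ℝ) : ℂ) := by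
      rw [mul_sub, ← mul_assoc, mul_div_cancel₀ _ hφ.ne']
      push_cast
      rfl
    rw [this, Complex.norm_real, Real.norm_eq_abs, abs_mul, abs_of_pos hφ]
  rw [hcast] at hnorm
  refine le_of_mul_le_mul_left ?_ hφ
  rw [← mul_assoc (q.totient : ℝ), mul_div_cancel₀ _ hφ.ne']
  exact hnorm

/-- Passing from the non-principal characters modulo `q` to primitive characters. -/
lemma sum_char_le_primChars {q D : ℕ} [NeZero q] (hqD : q ≤ D) (j a N : ℕ) (ha : q ≤ a) :
    ∑ χ : DirichletCharacter ℂ q with χ ≠ 1, ‖∑ r ∈ Ioc a N with r.Prime, χ r * (wt j r : ℂ)‖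
      ≤ ∑ i ∈ primChars D with i.1 ∣ q,
        ‖∑ r ∈ Ioc a N with r.Prime, cv i r * (wt j r : ℂ)‖ := by
  classical
  set f : DirichletCharacter ℂ q → Σ d : ℕ, DirichletCharacter ℂ d :=
    fun χ => ⟨χ.conductor, χ.primitiveCharacter⟩ with hf
  have hcv : ∀ χ (m : ℕ), m.Coprime q → cv (f χ) m = χ m := by
    intro χ m hm
    have := χ.primitiveCharacter_apply_of_isCoprime (a := (m : ℤ))
      (Nat.isCoprime_iff_coprime.mpr hm)
    simpa [cv, hf] using this
  have hinj : Function.Injective f := by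
    intro χ ψ h
    refine MulChar.ext fun u => ?_
    have hu : ((u : ZMod q).val).Coprime q := ZMod.val_coe_unit_coprime u
    have h1 := hcv χ _ hu
    rw [h, hcv ψ _ hu, ZMod.natCast_zmod_val] at h1
    exact h1.symm
  have e : ∑ χ : DirichletCharacter ℂ q with χ ≠ 1,
        ‖∑ r ∈ Ioc a N with r.Prime, χ r * (wt j r : ℂ)‖
      = ∑ i ∈ (univ.filter fun χ : DirichletCharacter ℂ q => χ ≠ 1).image f,
        ‖∑ r ∈ Ioc a N with r.Prime, cv i r * (wt j r : ℂ)‖ := by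
    rw [sum_image hinj.injOn]
    refine sum_congr rfl fun χ _ => ?_
    congr 1
    refine sum_congr rfl fun r hr => ?_
    rw [mem_filter, mem_Ioc] at hr
    rw [hcv]
    rw [hr.2.coprime_iff_not_dvd]
    exact fun h => absurd (Nat.le_of_dvd (NeZero.pos q) h) (by omega)
  rw [e]
  refine sum_le_sum_of_subset_of_nonneg ?_ fun _ _ _ => norm_nonneg _
  intro i hi
  obtain ⟨χ, hχ, rfl⟩ := mem_image.mp hi
  rw [mem_filter] at hχ
  have hd := χ.conductor_dvd_level
  rw [mem_filter, mem_primChars]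
  refine ⟨⟨?_, (Nat.le_of_dvd (NeZero.pos q) hd).trans hqD, χ.primitiveCharacter_isPrimitive⟩, hd⟩
  have h0 := χ.conductor_ne_zero
  have h1 : χ.conductor ≠ 1 := fun h => hχ.2 (DirichletCharacter.eq_one_iff_conductor_eq_one.mpr h)
  change 2 ≤ χ.conductor
  omega

end SmallOmega

/-! ### The sieve step -/

namespace SmallOmega

open Finset ArithmeticFunction Filter

/-- The total sieve density of the moduli `W * ∏ S` divisible by a given conductor `d`. A prime of
`P` dividing `d` must lie in `S`, which gains a factor `d ^ (-1/2)`. -/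
lemma sum_conductor_le {W : ℕ} {P : Finset ℕ} {g : ℕ → ℝ} (hW : 0 < W)
    (hP : ∀ p ∈ P, p.Prime ∧ ¬ p ∣ W) (hg : ∀ p ∈ P, 0 ≤ g p ∧ g p ≤ 1 / Real.sqrt p)
    {d : ℕ} (hd : 0 < d) :
    ∑ S ∈ P.powerset with d ∣ W * ∏ p ∈ S, p, ∏ p ∈ S, g p
      ≤ Real.sqrt W * (1 / Real.sqrt d) * ∏ p ∈ P, (1 + g p) := by
  set T := P.filter (· ∣ d) with hT
  have hsub : ∀ S ∈ P.powerset.filter (fun S => d ∣ W * ∏ p ∈ S, p), T ⊆ S := by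
    intro S hS p hp
    rw [mem_filter, mem_powerset] at hS
    rw [hT, mem_filter] at hp
    obtain ⟨hpp, hpW⟩ := hP p hp.1
    have h1 : p ∣ ∏ q ∈ S, q := ((hpp.dvd_mul).mp (hp.2.trans hS.2)).resolve_left hpW
    obtain ⟨q, hq, hpq⟩ := (Prime.dvd_finsetProd_iff hpp.prime _).mp h1
    rwa [(Nat.prime_dvd_prime_iff_eq hpp (hP q (hS.1 hq)).1).mp hpq]
  have hT0 : ∀ p ∈ T, p ∈ P := fun p hp => (mem_filter.mp hp).1
  have key : ∀ S ∈ P.powerset.filter (fun S => d ∣ W * ∏ p ∈ S, p),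
      ∏ p ∈ T, g p ≤ Real.sqrt W * (1 / Real.sqrt d) := by
    intro S hS
    have hTS := hsub S hS
    rw [mem_filter, mem_powerset] at hS
    have hdiv : d ∣ W * ∏ p ∈ T, p := by
      have h1 : W * ∏ p ∈ S, p = (∏ p ∈ S \ T, p) * (W * ∏ p ∈ T, p) := by
        rw [← prod_sdiff hTS]; ring
      have h2 := hS.2
      rw [h1] at h2
      refine Nat.Coprime.dvd_of_dvd_mul_left ?_ h2
      refine Nat.Coprime.prod_right fun p hp => ?_
      rw [Finset.mem_sdiff] at hp
      refine ((hP p (hS.1 hp.1)).1.coprime_iff_not_dvd.mpr fun h => hp.2 ?_).symm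
      exact mem_filter.mpr ⟨hS.1 hp.1, h⟩
    have hTpos : 0 < ∏ p ∈ T, p := prod_pos fun p hp => (hP p (hT0 p hp)).1.pos
    have hle : (d : ℝ) ≤ W * ∏ p ∈ T, (p : ℝ) := by
      rw [← Nat.cast_prod, ← Nat.cast_mul]
      exact Nat.cast_le.mpr (Nat.le_of_dvd (by positivity) hdiv)
    have hT1 : (0 : ℝ) < ∏ p ∈ T, (p : ℝ) := by
      rw [← Nat.cast_prod]
      exact Nat.cast_pos.mpr hTpos
    calc ∏ p ∈ T, g p ≤ ∏ p ∈ T, (1 / Real.sqrt p) :=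
          prod_le_prod (fun p hp => (hg p (hT0 p hp)).1) fun p hp => (hg p (hT0 p hp)).2
      _ = 1 / Real.sqrt (∏ p ∈ T, (p : ℝ)) := by
          rw [prod_div_distrib, prod_const_one, Real.sqrt_prod _ fun p _ => by positivity]
      _ ≤ Real.sqrt W * (1 / Real.sqrt d) := by
          have hd' : 0 < Real.sqrt d := Real.sqrt_pos.mpr (by exact_mod_cast hd)
          rw [mul_one_div, div_le_div_iff₀ (Real.sqrt_pos.mpr hT1) hd', one_mul,
            ← Real.sqrt_mul (by positivity)]
          exact Real.sqrt_le_sqrt hle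
  have hC : 0 ≤ Real.sqrt W * (1 / Real.sqrt d) := by positivity
  calc _ ≤ ∑ S ∈ P.powerset with d ∣ W * ∏ p ∈ S, p,
        Real.sqrt W * (1 / Real.sqrt d) * ∏ p ∈ S \ T, g p := by
        refine sum_le_sum fun S hS => ?_
        rw [← prod_sdiff (hsub S hS), mul_comm]
        refine mul_le_mul_of_nonneg_right (key S hS) (prod_nonneg fun p hp => ?_)
        exact (hg p (mem_powerset.mp (mem_filter.mp hS).1 (Finset.mem_sdiff.mp hp).1)).1
    _ = Real.sqrt W * (1 / Real.sqrt d) *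
        ∑ S ∈ P.powerset with d ∣ W * ∏ p ∈ S, p, ∏ p ∈ S \ T, g p := by rw [mul_sum]
    _ ≤ _ := by
        refine mul_le_mul_of_nonneg_left ?_ hC
        rw [prod_one_add]
        have hinj : Set.InjOn (fun S => S \ T)
            (P.powerset.filter (fun S => d ∣ W * ∏ p ∈ S, p) : Set (Finset ℕ)) := by
          intro S hS S' hS' h
          have h' : S \ T = S' \ T := h
          rw [← sdiff_union_of_subset (hsub S hS), ← sdiff_union_of_subset (hsub S' hS'), h']
        rw [← sum_image (f := fun S => ∏ p ∈ S, g p) hinj]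
        refine sum_le_sum_of_subset_of_nonneg ?_ ?_
        · intro S hS
          obtain ⟨S', hS', rfl⟩ := mem_image.mp hS
          exact mem_powerset.mpr (sdiff_subset.trans (mem_powerset.mp (mem_filter.mp hS').1))
        · intro S hS _
          exact prod_nonneg fun p hp => (hg p (mem_powerset.mp hS hp)).1

lemma prod_ite_one_zero_aux (S : Finset ℕ) (r n : ℕ) :
    ∏ p ∈ S, (if r ^ n ≡ 1 [MOD p] then (1 : ℝ) else 0)
      = if ∀ p ∈ S, r ^ n ≡ 1 [MOD p] then 1 else 0 := by
  split_ifs with h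
  · exact prod_eq_one fun p hp => if_pos (h p hp)
  · push Not at h
    obtain ⟨p, hp, hpr⟩ := h
    exact prod_eq_zero hp (if_neg hpr)

/-- The sieve step: if the character sums up to conductor `D` are small compared with the total
weight of the primes, then some prime `r ≡ a₀` modulo `W` has no prime `p ∈ (w, w ^ 2 ^ t]` dividing
`r ^ n - 1`. -/
lemma sieve_exists {n W a₀ w t b₀ D j N : ℕ} (hn : 0 < n) (hw : 3 ≤ w) (hwn : 4 * n ^ 2 ≤ w)
    (hW : 0 < W) (hPW : ∀ p, p.Prime → w < p → ¬ p ∣ W) (ha₀ : a₀.Coprime W)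
    (hD : W * (w ^ 2 ^ t) ^ (4 * b₀ + 6) ≤ D)
    (hb : ∑ i ∈ range t, (1 / 2 : ℝ) ^ (2 * (b₀ + (t - 1 - i)) + 1) * Real.exp (4 * (48 * n))
      ≤ 1 / 4)
    {E M : ℝ} (hM : 0 ≤ M) (main : M ≤ ∑ r ∈ Ioc (D ^ 24) N with r.Prime, wt j r)
    (err : ∑ i ∈ primChars D, 1 / Real.sqrt i.1 *
        ‖∑ p ∈ Ioc (D ^ 24) N with p.Prime, cv i p * (wt j p : ℂ)‖ ≤ E)
    (hlt : Real.sqrt W * Real.exp (48 * n * t) * E < 1 / 2 * Real.exp (-(2 * (48 * n) * t)) * M) :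
    ∃ r, r.Prime ∧ D ^ 24 < r ∧ r ≤ N ∧ r ≡ a₀ [MOD W] ∧
      ∀ p, p.Prime → w < p → p ≤ w ^ 2 ^ t → ¬ r ^ n ≡ 1 [MOD p] := by
  classical
  by_contra! hcon
  set R := (Ioc (D ^ 24) N).filter Nat.Prime with hR
  set P := PP (blk w) t with hPdef
  set b : ℕ → ℕ := fun i => b₀ + (t - 1 - i) with hbdef
  set lam := lamL (blk w) b t with hlam
  set S0 := ∑ r ∈ R, wt j r with hS0
  have hPmem : ∀ p ∈ P, p.Prime ∧ w < p ∧ p ≤ w ^ 2 ^ t := by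
    intro p hp
    rw [hPdef, PP_blk (by omega), mem_filter, mem_Ioc] at hp
    exact ⟨hp.2, hp.1⟩
  have hP : ∀ p ∈ P, p.Prime ∧ ¬ p ∣ W := fun p hp =>
    ⟨(hPmem p hp).1, hPW p (hPmem p hp).1 (hPmem p hp).2.1⟩
  have hdisj := blk_disjoint (w := w) (by omega)
  have hg : ∀ p ∈ P, 0 ≤ gg n p ∧ gg n p ≤ 1 / Real.sqrt p := fun p hp =>
    ⟨gg_nonneg n (hP p hp).1.one_le, gg_le_inv_sqrt hn (hP p hp).1
      (hwn.trans (hPmem p hp).2.1.le)⟩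
  have hφ : (0 : ℝ) < W.totient := by exact_mod_cast Nat.totient_pos.mpr hW
  -- the sieve lower bound
  have hlow : 1 / 2 * Real.exp (-(2 * (48 * n) * t)) ≤ ev lam P (gg n) := by
    refine le_ev_lamL hdisj (fun i p hp => ?_) (sum_blk_gg_le hn hw) t hb
    have hp' := (mem_filter.mp hp).2
    exact ⟨gg_nonneg n hp'.one_le, gg_le_half hn hp' (hwn.trans (lt_of_mem_blk hp).le)⟩
  -- the weighted count of the primes in the classes attached to `S`
  set A : Finset ℕ → ℝ := fun S =>
    ∑ r ∈ R, (if r % (W * ∏ p ∈ S, p) ∈ Bset n W a₀ S then wt j r else 0) with hA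
  have hmemB : ∀ S ⊆ P, ∀ r : ℕ, r % (W * ∏ p ∈ S, p) ∈ Bset n W a₀ S ↔
      r ≡ a₀ [MOD W] ∧ ∀ p ∈ S, r ^ n ≡ 1 [MOD p] := by
    intro S hS r
    have hq : 0 < W * ∏ p ∈ S, p :=
      Nat.mul_pos hW (prod_pos fun p hp => (hP p (hS hp)).1.pos)
    rw [Bset, mem_filter, mem_range]
    have hm := Nat.mod_modEq r (W * ∏ p ∈ S, p)
    have h1 : r % (W * ∏ p ∈ S, p) ≡ r [MOD W] := hm.of_dvd (dvd_mul_right _ _)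
    have h2 : ∀ p ∈ S, (r % (W * ∏ p ∈ S, p)) ^ n ≡ r ^ n [MOD p] := fun p hp =>
      (hm.of_dvd ((dvd_prod_of_mem _ hp).mul_left W)).pow n
    constructor
    · rintro ⟨_, h3, h4⟩
      exact ⟨h1.symm.trans h3, fun p hp => (h2 p hp).symm.trans (h4 p hp)⟩
    · rintro ⟨h3, h4⟩
      exact ⟨Nat.mod_lt _ hq, h1.trans h3, fun p hp => (h2 p hp).trans (h4 p hp)⟩
  have hneg : ∑ S ∈ P.powerset, lam S * A S ≤ 0 := by
    set h : ℕ → ℕ → ℝ := fun r p => if r ^ n ≡ 1 [MOD p] then 1 else 0 with hh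
    have e : ∑ S ∈ P.powerset, lam S * A S
        = ∑ r ∈ R, (if r ≡ a₀ [MOD W] then wt j r else 0) * ev lam P (h r) := by
      simp only [hA, ev, mul_sum]
      rw [sum_comm]
      refine sum_congr rfl fun r _ => sum_congr rfl fun S hS => ?_
      rw [mem_powerset] at hS
      rw [prod_ite_one_zero_aux S r n]
      by_cases h1 : r ≡ a₀ [MOD W] <;> by_cases h2 : ∀ p ∈ S, r ^ n ≡ 1 [MOD p] <;>
        simp [hmemB S hS r, h1, h2, mul_comm]
    rw [e]
    refine sum_nonpos fun r hr => ?_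
    split_ifs with hra
    · refine mul_nonpos_of_nonneg_of_nonpos (wt_nonneg j r) ?_
      rw [hR, mem_filter, mem_Ioc] at hr
      obtain ⟨p, hp, hwp, hpz, hpr⟩ := hcon r hr.2 hr.1.1 hr.1.2 hra
      have hpP : p ∈ P := by
        rw [hPdef, PP_blk (by omega), mem_filter, mem_Ioc]
        exact ⟨⟨hwp, hpz⟩, hp⟩
      refine (ev_lamL_le hdisj (fun p => ?_) t).2.trans ?_
      · simp only [hh]; split_ifs <;> norm_num
      · refine (prod_eq_zero hpP ?_).le
        simp only [hh]
        rw [if_pos hpr, sub_self]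
    · rw [zero_mul]
  -- comparison of `A S` with its expected value
  set V : (Σ d : ℕ, DirichletCharacter ℂ d) → ℝ := fun i =>
    ‖∑ p ∈ R, cv i p * (wt j p : ℂ)‖ with hV
  have hcomp : ∀ S ∈ P.powerset, lam S * ((∏ p ∈ S, gg n p) / W.totient * S0)
      - (∏ p ∈ S, gg n p) / W.totient * ∑ i ∈ primChars D with i.1 ∣ W * ∏ p ∈ S, p, V i
      ≤ lam S * A S := by
    intro S hS
    rw [mem_powerset] at hS
    have hPS : ∀ p ∈ S, p.Prime ∧ ¬ p ∣ W := fun p hp => hP p (hS hp)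
    have hG : 0 ≤ (∏ p ∈ S, gg n p) / W.totient :=
      div_nonneg (prod_nonneg fun p hp => (hg p (hS hp)).1) hφ.le
    have hV0 : 0 ≤ ∑ i ∈ primChars D with i.1 ∣ W * ∏ p ∈ S, p, V i :=
      sum_nonneg fun i _ => norm_nonneg _
    by_cases hl : lam S = 0
    · rw [hl, zero_mul, zero_mul]
      have := mul_nonneg hG hV0
      linarith
    set q := W * ∏ p ∈ S, p with hq
    have hq0 : 0 < q := Nat.mul_pos hW (prod_pos fun p hp => (hPS p hp).1.pos)
    have : NeZero q := ⟨hq0.ne'⟩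
    have hqD : q ≤ D := le_trans (Nat.mul_le_mul_left W
      (prod_le_of_support (by omega) hS (lamL_support t S hl))) hD
    have hqa : q ≤ D ^ 24 := hqD.trans (Nat.le_self_pow (by norm_num) D)
    have hc : (#(Bset n W a₀ S) : ℝ) / q.totient = (∏ p ∈ S, gg n p) / W.totient :=
      card_div_totient hW hPS
    have h1 := residue_error (q := q) (B := Bset n W a₀ S)
      (fun b hb => mem_range.mp (mem_filter.mp hb).1) (fun b hb => ?_) j (D ^ 24) N hqa
    · have h2 := sum_char_le_primChars (q := q) hqD j (D ^ 24) N hqa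
      rw [hc] at h1
      have h3 : |A S - (∏ p ∈ S, gg n p) / W.totient * S0| ≤
          (∏ p ∈ S, gg n p) / W.totient * ∑ i ∈ primChars D with i.1 ∣ q, V i :=
        h1.trans (mul_le_mul_of_nonneg_left h2 hG)
      have h4 : |lam S * (A S - (∏ p ∈ S, gg n p) / W.totient * S0)| ≤
          (∏ p ∈ S, gg n p) / W.totient * ∑ i ∈ primChars D with i.1 ∣ q, V i := by
        rw [abs_mul]
        refine le_trans ?_ h3
        exact mul_le_of_le_one_left (abs_nonneg _) (abs_lamL_le t S)
      have h5 := (abs_le.mp h4).1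
      linarith
    · have hb' := (mem_filter.mp hb).2
      refine Nat.Coprime.mul_right ?_ (Nat.Coprime.prod_right fun p hp => ?_)
      · rw [Nat.Coprime, hb'.1.gcd_eq]; exact ha₀
      · refine ((hPS p hp).1.coprime_iff_not_dvd.mpr fun hpb => ?_).symm
        have h6 := hb'.2 p hp
        have h7 : b ^ n ≡ 0 [MOD p] := (Nat.modEq_zero_iff_dvd).mpr (dvd_pow hpb hn.ne')
        have h8 := (Nat.modEq_zero_iff_dvd).mp (h6.symm.trans h7)
        exact (hPS p hp).1.one_lt.ne' (Nat.dvd_one.mp h8)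
  have hprod : ∏ p ∈ P, (1 + gg n p) ≤ Real.exp (48 * n * t) := by
    calc ∏ p ∈ P, (1 + gg n p) ≤ ∏ p ∈ P, Real.exp (gg n p) :=
          prod_le_prod (fun p hp => by linarith [(hg p hp).1]) fun p _ => by
            rw [add_comm]; exact Real.add_one_le_exp _
      _ = Real.exp (∑ i ∈ range t, ∑ p ∈ blk w i, gg n p) := by
          rw [← Real.exp_sum, hPdef, PP, sum_biUnion fun i _ k _ hik => hdisj i k hik]
      _ ≤ Real.exp (48 * n * t) := by
          rw [Real.exp_le_exp]
          refine (sum_le_sum fun i _ => sum_blk_gg_le hn hw i).trans_eq ?_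
          rw [sum_const, card_range, nsmul_eq_mul, mul_comm]
  have herr : ∑ S ∈ P.powerset, (∏ p ∈ S, gg n p) *
      ∑ i ∈ primChars D with i.1 ∣ W * ∏ p ∈ S, p, V i
      ≤ Real.sqrt W * Real.exp (48 * n * t) * E := by
    calc _ = ∑ i ∈ primChars D, (∑ S ∈ P.powerset with i.1 ∣ W * ∏ p ∈ S, p,
            ∏ p ∈ S, gg n p) * V i := by
          simp only [mul_sum, sum_mul, sum_filter]
          rw [sum_comm]
          refine sum_congr rfl fun i _ => sum_congr rfl fun S _ => ?_
          split_ifs <;> simp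
      _ ≤ ∑ i ∈ primChars D, (Real.sqrt W * (1 / Real.sqrt i.1) * Real.exp (48 * n * t)) * V i := by
          refine sum_le_sum fun i hi => mul_le_mul_of_nonneg_right ?_ (norm_nonneg _)
          have hi2 := (mem_primChars.mp hi).1
          exact (sum_conductor_le hW hP hg (by omega)).trans
            (mul_le_mul_of_nonneg_left hprod (by positivity))
      _ = Real.sqrt W * Real.exp (48 * n * t) * ∑ i ∈ primChars D, 1 / Real.sqrt i.1 * V i := by
          rw [mul_sum]
          exact sum_congr rfl fun i _ => by ring
      _ ≤ _ := mul_le_mul_of_nonneg_left err (by positivity)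
  have htot := sum_le_sum hcomp
  rw [sum_sub_distrib] at htot
  have e1 : ∑ S ∈ P.powerset, lam S * ((∏ p ∈ S, gg n p) / W.totient * S0)
      = ev lam P (gg n) * S0 / W.totient := by
    rw [ev, sum_mul, sum_div]
    exact sum_congr rfl fun S _ => by ring
  have e2 : ∑ S ∈ P.powerset, (∏ p ∈ S, gg n p) / W.totient *
        ∑ i ∈ primChars D with i.1 ∣ W * ∏ p ∈ S, p, V i
      = (∑ S ∈ P.powerset, (∏ p ∈ S, gg n p) *
        ∑ i ∈ primChars D with i.1 ∣ W * ∏ p ∈ S, p, V i) / W.totient := by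
    rw [sum_div]
    exact sum_congr rfl fun S _ => by ring
  rw [e1, e2, ← sub_div] at htot
  have h1 := htot.trans hneg
  rw [div_le_iff₀ hφ, zero_mul] at h1
  have h2 : 1 / 2 * Real.exp (-(2 * (48 * n) * t)) * M ≤ ev lam P (gg n) * S0 :=
    mul_le_mul hlow main hM (le_trans (by positivity) hlow)
  linarith

end SmallOmega

/-! ### Bounding `Ω` and the choice of parameters -/

namespace SmallOmega

open Finset ArithmeticFunction Filter

lemma one_add_pow_expand (x n : ℕ) : ∃ M, (1 + x) ^ n = 1 + n * x + x ^ 2 * M := by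
  induction n with
  | zero => exact ⟨0, by simp⟩
  | succ n ih =>
    obtain ⟨M, hM⟩ := ih
    refine ⟨n + M * (1 + x), ?_⟩
    rw [pow_succ, hM]
    ring

/-- If `r ≡ 1 + n * w!` modulo `n * w! ^ 2`, then `r ^ n - 1` is `n ^ 2 * w!` times a number prime
to `w!`; if moreover no prime in `(w, z]` divides `r ^ n - 1`, all prime factors of the cofactor
exceed `z`. -/
lemma omega_bound {n w z r N k : ℕ} (hn : 0 < n) (hz : 1 ≤ z)
    (hr : r ≡ 1 + n * w.factorial [MOD n * w.factorial ^ 2]) (hr1 : 1 + n * w.factorial ≤ r)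
    (hno : ∀ p, p.Prime → w < p → p ≤ z → ¬ r ^ n ≡ 1 [MOD p]) (hrN : r ≤ N)
    (hk : N ^ n < z ^ k) :
    cardFactors (r ^ n - 1) ≤ cardFactors (n ^ 2 * w.factorial) + k := by
  set f := w.factorial with hf
  have hf0 : 0 < f := Nat.factorial_pos w
  obtain ⟨m, hm⟩ := (Nat.modEq_iff_dvd' hr1).mp hr.symm
  have hru : r = 1 + n * f * (1 + f * m) := by
    have : r = 1 + n * f + n * f ^ 2 * m := by omega
    rw [this]; ring
  obtain ⟨M, hM⟩ := one_add_pow_expand (n * f * (1 + f * m)) n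
  set c := 1 + f * (m + (1 + f * m) ^ 2 * M) with hc
  have hrc : r ^ n - 1 = n ^ 2 * f * c := by
    rw [hru, hM, hc, add_assoc, Nat.add_sub_cancel_left]
    ring
  have hc0 : 0 < c := by omega
  have hr0 : 1 ≤ r ^ n := Nat.one_le_pow _ _ (by omega)
  rw [hrc, cardFactors_mul (by positivity) hc0.ne']
  refine Nat.add_le_add_left ?_ _
  have hbig : ∀ p ∈ c.primeFactorsList, z ≤ p := by
    intro p hp
    have hpp := Nat.prime_of_mem_primeFactorsList hp
    have hpc := Nat.dvd_of_mem_primeFactorsList hp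
    by_contra! hpz
    refine hno p hpp ?_ hpz.le ?_
    · by_contra! hpw
      have hpf : p ∣ f * (m + (1 + f * m) ^ 2 * M) :=
        (hpp.dvd_factorial.mpr hpw).mul_right _
      have h1 : p ∣ 1 := (Nat.dvd_add_left hpf).mp hpc
      exact hpp.one_lt.ne' (Nat.dvd_one.mp h1)
    · refine ((Nat.modEq_iff_dvd' hr0).mpr ?_).symm
      rw [hrc]
      exact hpc.mul_left _
  have h1 : z ^ cardFactors c ≤ c := by
    rw [cardFactors_apply]
    calc z ^ c.primeFactorsList.length ≤ c.primeFactorsList.prod := List.pow_card_le_prod _ _ hbig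
      _ = c := Nat.prod_primeFactorsList hc0.ne'
  have h2 : c ≤ N ^ n := by
    calc c ≤ n ^ 2 * f * c := Nat.le_mul_of_pos_left _ (by positivity)
      _ = r ^ n - 1 := hrc.symm
      _ ≤ r ^ n := Nat.sub_le _ _
      _ ≤ N ^ n := Nat.pow_le_pow_left hrN n
  have h3 : z ^ cardFactors c < z ^ k := (h1.trans h2).trans_lt hk
  by_contra! h4
  exact absurd (Nat.pow_le_pow_right hz h4.le) (by omega)

set_option maxHeartbeats 2000000 in
/-- The choice of parameters: sieving up to `z = w ^ 2 ^ t`, with `t` maximal such that the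
resulting moduli are admissible in `error_bound`. -/
theorem exists_large (n : ℕ) (hn : 0 < n) : ∃ M : ℕ, ∀ a : ℕ, ∃ r, a < r ∧ r.Prime ∧
    cardFactors (r ^ n - 1) ≤ M := by
  set w := 4 * n ^ 2 + 3 with hwdef
  have hw3 : 3 ≤ w := by omega
  have hnw : n ≤ w := by nlinarith
  set f := w.factorial with hf
  have hf0 : 0 < f := Nat.factorial_pos w
  set W := n * f ^ 2 with hWdef
  have hW : 0 < W := by positivity
  obtain ⟨b₀, hb⟩ := exists_b0 (4 * (48 * n))
  set s := 4 * b₀ + 6 with hs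
  obtain ⟨η, hη, hη1, K, hK, herr⟩ := error_bound (9 * 48 * n + 1)
  have hs0 : (0 : ℝ) < s := by rw [hs]; positivity
  have hs6 : (6 : ℝ) ≤ s := by rw [hs]; push_cast; linarith [(Nat.cast_nonneg b₀ : (0 : ℝ) ≤ b₀)]
  set lw := Real.log w with hlw
  have hlw1 : 1 ≤ lw := by
    rw [hlw, Real.le_log_iff_exp_le (by positivity)]
    have : (3 : ℝ) ≤ w := by exact_mod_cast hw3
    linarith [Real.exp_one_lt_d9]
  have hlW : 0 ≤ Real.log W := Real.log_natCast_nonneg _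
  set k := ⌈n * (K + 5) * (96 * s / η)⌉₊ + 1 with hk
  refine ⟨cardFactors (n ^ 2 * f) + k, fun a => ?_⟩
  set κ := η / 96 with hκ
  have hκ0 : 0 < κ := by positivity
  have hcast : Tendsto (fun j : ℕ => (j : ℝ)) atTop atTop := tendsto_natCast_atTop_atTop
  obtain ⟨J, hJ⟩ := eventually_atTop.mp (main_term.and
    (((Real.tendsto_exp_atTop.comp hcast).eventually_gt_atTop (1000 * Real.sqrt W)).and
    ((hcast.eventually_ge_atTop (48 * Real.log W / η)).and
    ((hcast.eventually_ge_atTop ((max a (1 + n * f) : ℕ) / κ)).and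
    ((hcast.eventually_ge_atTop (48 * s * lw / η)).and (eventually_ge_atTop 1))))))
  obtain ⟨j, hjJ, herrj⟩ := herr κ hκ0 (K + 5) J
  obtain ⟨hmain, hexpW, hjW, hja, hjw, hj1⟩ := hJ j hjJ
  set y := (j : ℝ) * Real.exp j with hy
  have hj1' : (1 : ℝ) ≤ j := by exact_mod_cast hj1
  have hjy : (j : ℝ) ≤ y := le_mul_of_one_le_right (by linarith) (Real.one_le_exp (by linarith))
  have hy1 : 1 ≤ y := hj1'.trans hjy
  rw [div_le_iff₀ hη] at hjW hjw
  rw [div_le_iff₀ hκ0] at hja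
  have hηy : (j : ℝ) * η ≤ η * y := by nlinarith
  set Z := η * y / (48 * s * lw) with hZ
  have hden : 0 < 48 * s * lw := by positivity
  have hZ1 : 1 ≤ Z := by rw [hZ, one_le_div hden]; linarith
  set t := Nat.log 2 ⌊Z⌋₊ with ht
  have hfl : ⌊Z⌋₊ ≠ 0 := (Nat.floor_pos.mpr hZ1).ne'
  have ht1 : (2 : ℝ) ^ t ≤ Z := by
    have : 2 ^ t ≤ ⌊Z⌋₊ := Nat.pow_log_le_self 2 hfl
    refine le_trans ?_ (Nat.floor_le (by linarith))
    exact_mod_cast this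
  have ht2 : Z < 2 * (2 : ℝ) ^ t := by
    have : ⌊Z⌋₊ + 1 ≤ 2 ^ (t + 1) := Nat.lt_pow_succ_log_self (by norm_num) _
    have h' : ((⌊Z⌋₊ : ℝ) + 1) ≤ 2 ^ (t + 1) := by exact_mod_cast this
    rw [pow_succ] at h'
    linarith [Nat.lt_floor_add_one Z]
  set z := w ^ 2 ^ t with hz
  have hz1 : 1 ≤ z := Nat.one_le_pow _ _ (by omega)
  have hlz : Real.log z = 2 ^ t * lw := by rw [hz]; push_cast; rw [Real.log_pow]; push_cast; rfl
  have hup : 48 * (s * Real.log z) ≤ η * y := by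
    rw [hlz]
    rw [hZ, le_div_iff₀ hden] at ht1
    linarith
  have hlo : η * y < 96 * (s * Real.log z) := by
    rw [hlz]
    rw [hZ, div_lt_iff₀ hden] at ht2
    linarith
  set D := W * z ^ s with hD
  have hlD : Real.log D = Real.log W + s * Real.log z := by
    rw [hD]
    push_cast
    rw [Real.log_mul (by positivity) (by positivity), Real.log_pow]
  have hD1 : κ * y ≤ Real.log D := by rw [hlD, hκ]; linarith
  have hD2 : 24 * Real.log D ≤ η * y := by rw [hlD]; linarith
  set N := ⌈Real.exp ((K + 4) * y)⌉₊ with hN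
  have hN0 : (0 : ℝ) < N := lt_of_lt_of_le (Real.exp_pos _) (Nat.le_ceil _)
  have hN1 : (K + 4) * y ≤ Real.log N := by
    rw [Real.le_log_iff_exp_le hN0]; exact Nat.le_ceil _
  have hN2 : Real.log N ≤ (K + 5) * y := by
    rw [Real.log_le_iff_le_exp hN0]
    have h1 : (N : ℝ) < Real.exp ((K + 4) * y) + 1 := Nat.ceil_lt_add_one (Real.exp_pos _).le
    have h2 : 1 ≤ Real.exp ((K + 4) * y) := Real.one_le_exp (by positivity)
    have h3 : 2 ≤ Real.exp y := by linarith [Real.add_one_le_exp y]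
    calc (N : ℝ) ≤ Real.exp ((K + 4) * y) * 2 := by linarith
      _ ≤ Real.exp ((K + 4) * y) * Real.exp y := by gcongr
      _ = Real.exp ((K + 5) * y) := by rw [← Real.exp_add]; ring_nf
  have herr' := herrj D N hD1 hD2 (by nlinarith) hN2
  have hmain' := hmain (D ^ 24) N (by push_cast; rw [Real.log_pow]; push_cast; nlinarith)
    (by nlinarith)
  have ht3 : (t : ℝ) ≤ 3 * j := by
    have h1 : Z ≤ y := by
      rw [hZ, div_le_iff₀ hden]
      have : 1 ≤ 48 * s * lw := by nlinarith
      nlinarith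
    have h2 : y ≤ Real.exp (2 * j) := by
      rw [hy, two_mul, Real.exp_add]
      gcongr
      linarith [Real.add_one_le_exp (j : ℝ)]
    have h3 : (2 : ℝ) ^ t ≤ Real.exp (2 * j) := ht1.trans (h1.trans h2)
    have h4 := Real.log_le_log (by positivity) h3
    rw [Real.log_pow, Real.log_exp] at h4
    have h5 : (0 : ℝ) ≤ t := by positivity
    nlinarith [Real.log_two_gt_d9]
  have hlt : Real.sqrt W * Real.exp (48 * n * t) *
      (Real.exp (-((9 * 48 * n + 1 : ℕ) * j)) * gmax j)
      < 1 / 2 * Real.exp (-(2 * (48 * n) * t)) * (gmax j / 500) := by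
    have h1 : 1000 * Real.sqrt W * Real.exp (48 * n * t) * Real.exp (-((9 * 48 * n + 1 : ℕ) * j))
        < Real.exp (-(2 * (48 * n) * t)) := by
      calc _ < Real.exp j * Real.exp (48 * n * t) * Real.exp (-((9 * 48 * n + 1 : ℕ) * j)) := by
            gcongr
            exact hexpW
        _ = Real.exp (j + 48 * n * t + -((9 * 48 * n + 1 : ℕ) * j)) := by
            rw [Real.exp_add, Real.exp_add]
        _ ≤ _ := by
            rw [Real.exp_le_exp]
            push_cast
            have : (n : ℝ) * t ≤ n * (3 * j) := by gcongr
            linarith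
    have h2 := mul_lt_mul_of_pos_right h1 (gmax_pos j)
    linarith
  have hpf : ∀ p, p.Prime → w < p → ¬ p ∣ W := by
    intro p hp hwp hpW
    rw [hWdef, hp.dvd_mul] at hpW
    rcases hpW with h | h
    · exact absurd (Nat.le_of_dvd hn h) (by omega)
    · exact absurd (hp.dvd_factorial.mp (hp.dvd_of_dvd_pow h)) (by omega)
  have ha₀ : (1 + n * f).Coprime W := by
    have h1 : (1 + n * f).Coprime (n * f) := by simp
    exact h1.coprime_mul_right_right.mul_right (h1.coprime_mul_left_right.pow_right 2)
  obtain ⟨r, hrp, hrD, hrN, hrW, hno⟩ := sieve_exists (n := n) (W := W) (a₀ := 1 + n * f) (w := w)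
    (t := t) (b₀ := b₀) (D := D) (j := j) (N := N) hn hw3 (by omega) hW hpf ha₀ le_rfl (hb t)
    (by have := gmax_pos j; positivity) hmain' herr' hlt
  have hDr : max a (1 + n * f) < r := by
    refine lt_of_lt_of_le ?_ ((Nat.le_self_pow (by norm_num) D).trans hrD.le)
    have h1 : (0 : ℝ) < D := by rw [hD]; positivity
    have h2 : Real.exp (κ * y) ≤ D := (Real.le_log_iff_exp_le h1).mp hD1
    have h3 := Real.add_one_le_exp (κ * y)
    have h4 : (j : ℝ) * κ ≤ κ * y := by nlinarith
    have h5 : ((max a (1 + n * f) : ℕ) : ℝ) < D := by linarith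
    exact Nat.cast_lt.mp h5
  refine ⟨r, (le_max_left _ _).trans_lt hDr, hrp, ?_⟩
  refine omega_bound hn hz1 hrW ((le_max_right _ _).trans hDr.le) hno hrN ?_
  have h1 : Real.log ((N ^ n : ℕ) : ℝ) < Real.log ((z ^ k : ℕ) : ℝ) := by
    push_cast
    rw [Real.log_pow, Real.log_pow]
    have h2 : n * (K + 5) * (96 * s / η) < k := by
      rw [hk]
      push_cast
      linarith [Nat.le_ceil (n * (K + 5) * (96 * s / η))]
    have h3 : (n : ℝ) * (K + 5) * (96 * s) < k * η := by
      rw [← mul_div_assoc, div_lt_iff₀ hη] at h2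
      exact h2
    have hk0 : (0 : ℝ) < k := by rw [hk]; positivity
    have h4 : (n : ℝ) * Real.log N ≤ n * ((K + 5) * y) := by gcongr
    have h5 := mul_lt_mul_of_pos_right h3 (by linarith : 0 < y)
    have h6 := mul_lt_mul_of_pos_left hlo hk0
    have h7 : 96 * s * (n * ((K + 5) * y)) < 96 * s * (k * Real.log z) := by linarith
    exact h4.trans_lt (lt_of_mul_lt_mul_left h7 (by positivity))
  have h2 := (Real.log_lt_log_iff (by exact_mod_cast Nat.pow_pos (by exact_mod_cast hN0))
    (by exact_mod_cast Nat.pow_pos hz1)).mp h1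
  exact Nat.cast_lt.mp h2

end SmallOmega

/-- For every positive integer `n` there is a positive integer `M` such
that there are infinitely many odd primes `r` with `Ω(r^n − 1) ≤ M`, where `Ω` counts
prime divisors with multiplicity. -/
theorem exists_bound_infinite_primes_small_Omega (n : ℕ) (hn : 0 < n) :
    ∃ M : ℕ, 0 < M ∧
      {r : ℕ | r.Prime ∧ Odd r ∧
        ArithmeticFunction.cardFactors (r ^ n - 1) ≤ M}.Infinite := by
  obtain ⟨M, hM⟩ := SmallOmega.exists_large n hn
  refine ⟨M + 1, Nat.succ_pos M, Set.infinite_of_forall_exists_gt fun a => ?_⟩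
  obtain ⟨r, har, hrp, hr⟩ := hM (max a 2)
  exact ⟨r, ⟨hrp, hrp.odd_of_ne_two ((le_max_right a 2).trans_lt har).ne', by omega⟩,
    (le_max_left a 2).trans_lt har⟩
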